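/- The number α₁₀ = √21 · ln((√21 − 1)/(√21 + 1)) has non-quadraticity measure at most 10.034; that is, for every real κ > 10.034, there exist only finitely many real numbers β that are roots of irreducible integer polynomials of degree at most 2 and satisfy |α₁₀ − β| < H(β)^(−κ), where H(β) denotes the largest absolute value of the coefficients of the irreducible integer polynomial having β as a root. -/

import Mathlib

/-- The height of an integer polynomial: the largest absolute value of its coefficients. -/
def polyHeight (P : Polynomial ℤ) : ℕ :=
  P.support.sup fun i => (P.coeff i).natAbs

section
open MeasureTheory Filter Topology Set

/-- Fejer kernel -/
noncomputable def fejK (l v : ℝ) : ℝ := l * (Real.sinc (l * v / 2))^2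
/-- triangle -/
noncomputable def fejT (l y : ℝ) : ℝ := max 0 (1 - |y| / l)

lemma fejT_cont (l : ℝ) : Continuous (fejT l) := by unfold fejT; fun_prop

lemma fejT_zero {l y : ℝ} (hl : 0 < l) (h : l < |y|) : fejT l y = 0 := by
  unfold fejT
  apply max_eq_left
  have : 1 < |y| / l := by rw [lt_div_iff₀ hl]; linarith
  linarith

lemma fejK_nonneg {l v : ℝ} (hl : 0 < l) : 0 ≤ fejK l v := by unfold fejK; positivity

lemma fejK_cont (l : ℝ) : Continuous (fejK l) := by
  unfold fejK
  have := Real.continuous_sinc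
  fun_prop

lemma fejK_le_l {l v : ℝ} (hl : 0 < l) : fejK l v ≤ l := by
  unfold fejK
  have h1 := Real.sinc_le_one (l*v/2)
  have h2 := Real.neg_one_le_sinc (l*v/2)
  have : (Real.sinc (l * v / 2))^2 ≤ 1 := by nlinarith
  nlinarith

lemma fejK_le {l v : ℝ} (hl : 0 < l) (hv : v ≠ 0) : fejK l v ≤ 4 / (l * v^2) := by
  unfold fejK
  rw [Real.sinc_of_ne_zero (by positivity), div_pow]
  have : Real.sin (l * v / 2)^2 ≤ 1 := by
    nlinarith [Real.sin_sq_add_cos_sq (l*v/2), sq_nonneg (Real.cos (l*v/2))]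
  rw [show l * (Real.sin (l * v / 2) ^ 2 / (l * v / 2) ^ 2) = (4 * Real.sin (l*v/2)^2) / (l*v^2) by
    field_simp; ring]
  gcongr
  linarith

lemma fejK_ge {l v : ℝ} (hl : 0 < l) (hv : |l * v| ≤ 2) : l / 4 ≤ fejK l v := by
  unfold fejK
  rcases eq_or_ne v 0 with rfl | h0
  · simp; linarith
  have key : (1:ℝ)/2 ≤ Real.sinc (l * v / 2) := by
    have e : Real.sinc (l*v/2) = Real.sinc |l*v/2| := by
      rcases abs_choice (l*v/2) with h | h <;> rw [h]
      rw [Real.sinc_neg]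
    rw [e]
    have hx : |l*v/2| ≤ 1 := by rw [abs_div, abs_two]; linarith
    have hp : 0 < |l*v/2| := by positivity
    rw [Real.sinc_of_ne_zero hp.ne', le_div_iff₀ hp]
    have := Real.mul_le_sin hp.le (by linarith [Real.pi_gt_three])
    have h3 : (1:ℝ)/2 ≤ 2 / Real.pi := by
      rw [le_div_iff₀ Real.pi_pos]; linarith [Real.pi_le_four]
    nlinarith
  have : (1:ℝ)/4 ≤ (Real.sinc (l * v / 2))^2 := by nlinarith
  nlinarith

lemma fejK_int {l : ℝ} (hl : 0 < l) : Integrable (fejK l) := by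
  apply Integrable.mono' ((integrable_inv_one_add_sq).const_mul (l + 4 / l)) (fejK_cont l).aestronglyMeasurable
  refine Eventually.of_forall fun v => ?_
  rw [Real.norm_of_nonneg (fejK_nonneg hl)]
  have h1 := fejK_le_l (v := v) hl
  rw [← div_eq_mul_inv, le_div_iff₀ (by positivity)]
  have : fejK l v * v^2 ≤ 4 / l := by
    rcases eq_or_ne v 0 with rfl | h0
    · simp; positivity
    · have := fejK_le hl h0
      calc _ ≤ 4 / (l * v^2) * v^2 := by gcongr
        _ = _ := by field_simp
  nlinarith

lemma fejK_eq {l : ℝ} (hl : 0 < l) {v : ℝ} (hv : v ≠ 0) :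
    ∫ y in (-l)..l, (fejT l y : ℂ) * Complex.exp (Complex.I * y * v) = fejK l v := by
  have hc : Continuous fun y : ℝ => (fejT l y : ℂ) * Complex.exp (Complex.I * y * v) := by
    have := fejT_cont l; fun_prop
  rw [← intervalIntegral.integral_add_adjacent_intervals (b := 0) (hc.intervalIntegrable _ _) (hc.intervalIntegrable _ _)]
  have hv' : (v:ℂ) ≠ 0 := by exact_mod_cast hv
  have hl' : (l:ℂ) ≠ 0 := by exact_mod_cast hl.ne'
  have A : ∀ σ : ℝ, ∀ y : ℝ, HasDerivAt (fun y : ℝ => (1 - σ * y / l : ℂ) * (Complex.exp (Complex.I * y * v) / (Complex.I * v)) - σ / (l * v^2) * Complex.exp (Complex.I * y * v)) ((1 - σ * y / l : ℂ) * Complex.exp (Complex.I * y * v)) y := by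
    intro σ y
    have h0 : HasDerivAt (fun y : ℝ => (y:ℂ)) 1 y := Complex.ofRealCLM.hasDerivAt
    have h1 : HasDerivAt (fun y : ℝ => Complex.exp (Complex.I * y * v)) (Complex.exp (Complex.I * y * v) * (Complex.I * 1 * v)) y :=
      ((h0.const_mul Complex.I).mul_const (v:ℂ)).cexp
    have h2 : HasDerivAt (fun y : ℝ => (1 - σ * y / l : ℂ)) (-(σ * 1 / l)) y := by
      simpa using (((h0.const_mul (σ:ℂ)).div_const (l:ℂ)).const_sub 1)
    refine ((h2.mul (h1.div_const (Complex.I * v))).sub (h1.const_mul (σ / (l*v^2) : ℂ))).congr_deriv ?_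
    field_simp
    simp only [Complex.I_sq]
    ring
  have e1 : ∫ y in (-l)..0, (fejT l y : ℂ) * Complex.exp (Complex.I * y * v) = ∫ y in (-l)..0, (1 - ((-1:ℝ):ℂ) * y / l : ℂ) * Complex.exp (Complex.I * y * v) := by
    apply intervalIntegral.integral_congr
    intro y hy
    rw [uIcc_of_le (by linarith)] at hy
    simp only
    congr 1
    unfold fejT
    rw [abs_of_nonpos hy.2, max_eq_right]
    · push_cast; ring
    · have : -y / l ≤ 1 := by rw [div_le_one hl]; linarith [hy.1]
      linarith
  have e2 : ∫ y in (0)..l, (fejT l y : ℂ) * Complex.exp (Complex.I * y * v) = ∫ y in (0)..l, (1 - ((1:ℝ):ℂ) * y / l : ℂ) * Complex.exp (Complex.I * y * v) := by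
    apply intervalIntegral.integral_congr
    intro y hy
    rw [uIcc_of_le (by linarith)] at hy
    simp only
    congr 1
    unfold fejT
    rw [abs_of_nonneg hy.1, max_eq_right]
    · push_cast; ring
    · have : y / l ≤ 1 := by rw [div_le_one hl]; linarith [hy.2]
      linarith
  rw [e1, e2, intervalIntegral.integral_eq_sub_of_hasDerivAt (fun y _ => A (-1) y) (Continuous.intervalIntegrable (by fun_prop) _ _), intervalIntegral.integral_eq_sub_of_hasDerivAt (fun y _ => A 1 y) (Continuous.intervalIntegrable (by fun_prop) _ _)]
  unfold fejK
  rw [Real.sinc_of_ne_zero (by positivity)]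
  push_cast
  have s : Complex.sin (l * v / 2)^2 = (1 - Complex.cos (l*v))/2 := by
    have := Complex.cos_sq' (l*v/2)
    have h2 := Complex.cos_two_mul (l*v/2)
    rw [show (2:ℂ) * (l*v/2) = l*v by ring] at h2
    rw [h2, this]; ring
  rw [div_pow, s, Complex.cos]
  simp only [mul_zero, zero_mul, Complex.exp_zero]
  rw [show (l:ℂ) * v * Complex.I = Complex.I * l * v by ring, show -((l:ℂ) * v) * Complex.I = Complex.I * -l * v by ring]
  field_simp
  ring
end

section
open MeasureTheory Filter Topology Set

lemma wien_fub (g : ℝ → ℝ) (hg : Measurable g) (C : ℝ) (hC : ∀ t, |g t| ≤ C) {l : ℝ} (hl : 0 < l) (u : ℝ)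
    {e : ℝ} (he : 0 < e) :
    ((∫ t in Ioi (0:ℝ), g t * Real.exp (-(e*t)) * fejK l (u - t) : ℝ) : ℂ) =
    ∫ y in (-l)..l, (fejT l y : ℂ) * Complex.exp (Complex.I * y * u) * ∫ t in Ioi (0:ℝ), (g t : ℂ) * Complex.exp (-((e + Complex.I * y) * t)) := by
  rw [← integral_complex_ofReal, intervalIntegral.integral_of_le (by linarith)]
  simp_rw [← integral_const_mul]
  rw [integral_integral_swap]
  · have h0 : ∀ᵐ t ∂(volume.restrict (Ioi (0:ℝ))), t ≠ u := by
      apply ae_restrict_of_ae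
      simp [ae_iff]
    apply integral_congr_ae
    filter_upwards [h0] with t ht
    have := fejK_eq hl (v := u - t) (sub_ne_zero.2 ht.symm)
    push_cast
    rw [← this, intervalIntegral.integral_of_le (by linarith), ← integral_const_mul]
    apply integral_congr_ae
    refine Eventually.of_forall fun y => ?_
    simp only
    rw [show Complex.exp (Complex.I * y * ((u - t : ℝ):ℂ)) = Complex.exp (Complex.I * y * u) * Complex.exp (-(Complex.I * y * t)) by
        rw [← Complex.exp_add]; congr 1; push_cast; ring,
      show Complex.exp (-((e + Complex.I * y) * t)) = Complex.exp (-(e * t)) * Complex.exp (-(Complex.I * y * t)) by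
        rw [← Complex.exp_add]; congr 1; ring]
    ring
  · have hb : Integrable (fun p : ℝ × ℝ => (1:ℝ) * (C * Real.exp (-e * p.2))) ((volume.restrict (Ioc (-l) l)).prod (volume.restrict (Ioi 0))) := by
      apply Integrable.mul_prod (f := fun _ : ℝ => (1:ℝ)) (g := fun t => C * Real.exp (-e * t))
      · exact integrable_const _
      · exact (integrableOn_exp_mul_Ioi (by linarith) 0).const_mul C
    apply Integrable.mono' hb
    · have := (fejT_cont l).measurable
      unfold Function.uncurry
      apply Measurable.aestronglyMeasurable
      fun_prop
    · refine Eventually.of_forall fun p => ?_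
      simp only [Function.uncurry]
      rw [norm_mul, norm_mul, norm_mul, Complex.norm_exp, Complex.norm_exp, Complex.norm_real, Complex.norm_real]
      have h1 : ‖fejT l p.1‖ ≤ 1 := by
        unfold fejT
        rw [Real.norm_of_nonneg (le_max_left _ _)]
        apply max_le (by norm_num)
        have : 0 ≤ |p.1| / l := by positivity
        linarith
      have h2 := hC p.2
      have e1 : (Complex.I * p.1 * u).re = 0 := by simp
      have e2 : (-((e + Complex.I * p.1) * p.2)).re = -e * p.2 := by simp
      rw [e1, e2, Real.exp_zero, mul_one]
      rw [Real.norm_eq_abs (g _)]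
      gcongr

lemma wien_lim (g : ℝ → ℝ) (hg : Measurable g) (C : ℝ) (hC : ∀ t, |g t| ≤ C)
    (H : ℝ × ℝ → ℂ) (hH : ContinuousOn H (Icc 0 1 ×ˢ univ))
    (hE : ∀ e, 0 < e → e ≤ 1 → ∀ y : ℝ, H (e, y) = ∫ t in Ioi (0:ℝ), (g t : ℂ) * Complex.exp (-((e + Complex.I * y) * t)))
    {l : ℝ} (hl : 0 < l) (u : ℝ) :
    ((∫ t in Ioi (0:ℝ), g t * fejK l (u - t) : ℝ) : ℂ) =
    ∫ y in (-l)..l, (fejT l y : ℂ) * Complex.exp (Complex.I * y * u) * H (0, y) := by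
  have hC0 : 0 ≤ C := (abs_nonneg _).trans (hC 0)
  have hK : Integrable (fun t => C * fejK l (u - t)) := ((fejK_int hl).comp_sub_left u).const_mul C
  have L1 : Tendsto (fun e : ℝ => ∫ t in Ioi (0:ℝ), g t * Real.exp (-(e*t)) * fejK l (u - t)) (𝓝[>] 0)
      (𝓝 (∫ t in Ioi (0:ℝ), g t * fejK l (u - t))) := by
    apply tendsto_integral_filter_of_dominated_convergence (fun t => C * fejK l (u - t))
    · refine Eventually.of_forall fun e => ?_
      have := (fejK_cont l).measurable
      apply Measurable.aestronglyMeasurable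
      fun_prop
    · filter_upwards [self_mem_nhdsWithin] with e (he : 0 < e)
      filter_upwards [ae_restrict_mem measurableSet_Ioi] with t (ht : 0 < t)
      rw [norm_mul, norm_mul, Real.norm_of_nonneg (fejK_nonneg hl), Real.norm_of_nonneg (Real.exp_nonneg _)]
      have h1 : Real.exp (-(e*t)) ≤ 1 := by
        rw [Real.exp_le_one_iff]; have := mul_pos he ht; linarith
      have h2 := hC t
      have h3 := fejK_nonneg (l := l) (v := u - t) hl
      rw [Real.norm_eq_abs]
      calc _ ≤ C * 1 * fejK l (u-t) := by gcongr
        _ = _ := by ring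
    · exact hK.integrableOn
    · refine Eventually.of_forall fun t => ?_
      have : Continuous fun e : ℝ => g t * Real.exp (-(e*t)) * fejK l (u - t) := by fun_prop
      have h := this.tendsto 0
      simp only [zero_mul, neg_zero, Real.exp_zero, mul_one] at h
      exact h.mono_left nhdsWithin_le_nhds
  have L2 : Tendsto (fun e : ℝ => ∫ y in (-l)..l, (fejT l y : ℂ) * Complex.exp (Complex.I * y * u) * H (e, y)) (𝓝[>] 0)
      (𝓝 (∫ y in (-l)..l, (fejT l y : ℂ) * Complex.exp (Complex.I * y * u) * H (0, y))) := by
    obtain ⟨M, hM⟩ := (isCompact_Icc.prod (isCompact_Icc (a := -l) (b := l))).exists_bound_of_continuousOn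
      (hH.mono (prod_mono (Subset.refl (Icc 0 1)) (subset_univ _)))
    have hsm : ∀ᶠ e : ℝ in 𝓝[>] 0, e ≤ 1 := mem_nhdsWithin_of_mem_nhds (Iic_mem_nhds one_pos)
    apply intervalIntegral.tendsto_integral_filter_of_dominated_convergence (fun y => 1 * 1 * M)
    · filter_upwards [self_mem_nhdsWithin, hsm] with e (he : 0 < e) he1
      apply Continuous.aestronglyMeasurable
      have h1 := fejT_cont l
      have h2 : Continuous fun y => H (e, y) := by
        apply hH.comp_continuous (by fun_prop)
        intro y; exact ⟨⟨he.le, he1⟩, mem_univ _⟩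
      exact ((Complex.continuous_ofReal.comp h1).mul (by fun_prop)).mul h2
    · filter_upwards [self_mem_nhdsWithin, hsm] with e (he : 0 < e) he1
      refine Eventually.of_forall fun y hy => ?_
      rw [uIoc_of_le (by linarith)] at hy
      rw [norm_mul, norm_mul]
      have h1 : ‖(fejT l y : ℂ)‖ ≤ 1 := by
        rw [Complex.norm_real]
        unfold fejT
        rw [Real.norm_of_nonneg (le_max_left _ _)]
        apply max_le (by norm_num)
        have : 0 ≤ |y| / l := by positivity
        linarith
      have h2 : ‖Complex.exp (Complex.I * y * u)‖ ≤ 1 := by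
        rw [Complex.norm_exp]; simp
      have h3 := hM (e, y) ⟨⟨he.le, he1⟩, ⟨hy.1.le, hy.2⟩⟩
      gcongr
    · simp
    · refine Eventually.of_forall fun y hy => ?_
      apply Tendsto.mul tendsto_const_nhds
      have h1 := hH (0, y) ⟨⟨le_refl _, zero_le_one⟩, mem_univ _⟩
      have h2 : Tendsto (fun e : ℝ => (e, y)) (𝓝[>] 0) (𝓝[Icc 0 1 ×ˢ univ] (0, y)) := by
        apply tendsto_nhdsWithin_of_tendsto_nhds_of_eventually_within
        · have : Continuous fun e : ℝ => (e, y) := by fun_prop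
          exact (this.tendsto 0).mono_left nhdsWithin_le_nhds
        · filter_upwards [self_mem_nhdsWithin, hsm] with e (he : 0 < e) he1
          exact ⟨⟨he.le, he1⟩, mem_univ _⟩
      exact h1.tendsto.comp h2
  have L1' := (Complex.continuous_ofReal.tendsto _).comp L1
  refine tendsto_nhds_unique L1' (L2.congr' ?_)
  have hsm : ∀ᶠ e : ℝ in 𝓝[>] 0, e ≤ 1 := mem_nhdsWithin_of_mem_nhds (Iic_mem_nhds one_pos)
  filter_upwards [self_mem_nhdsWithin, hsm] with e (he : 0 < e) he1
  simp only [Function.comp]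
  rw [wien_fub g hg C hC hl u he]
  simp_rw [hE e he he1]

lemma wien_tend (g : ℝ → ℝ) (hg : Measurable g) (C : ℝ) (hC : ∀ t, |g t| ≤ C)
    (H : ℝ × ℝ → ℂ) (hH : ContinuousOn H (Icc 0 1 ×ˢ univ))
    (hE : ∀ e, 0 < e → e ≤ 1 → ∀ y : ℝ, H (e, y) = ∫ t in Ioi (0:ℝ), (g t : ℂ) * Complex.exp (-((e + Complex.I * y) * t)))
    {l : ℝ} (hl : 0 < l) :
    Tendsto (fun u => ∫ t in Ioi (0:ℝ), g t * fejK l (u - t)) atTop (𝓝 0) := by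
  have R := Real.tendsto_integral_exp_smul_cocompact (fun y : ℝ => indicator (Ioc (-l) l) (fun y => (fejT l y : ℂ) * H (0, y)) y)
  have hw : Tendsto (fun u : ℝ => -u / (2 * Real.pi)) atTop (cocompact ℝ) := by
    have : Tendsto (fun u : ℝ => -u / (2 * Real.pi)) atTop atBot :=
      tendsto_neg_atTop_atBot.atBot_div_const (by positivity)
    exact this.mono_right atBot_le_cocompact
  have R' := R.comp hw
  have key : Tendsto (fun u => ((∫ t in Ioi (0:ℝ), g t * fejK l (u - t) : ℝ) : ℂ)) atTop (𝓝 0) := by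
    refine R'.congr fun u => ?_
    rw [wien_lim g hg C hC H hH hE hl u, intervalIntegral.integral_of_le (by linarith),
      ← integral_indicator measurableSet_Ioc]
    simp only [Function.comp]
    apply integral_congr_ae
    refine Eventually.of_forall fun y => ?_
    simp only
    by_cases hy : y ∈ Ioc (-l) l
    · rw [indicator_of_mem hy, indicator_of_mem hy]
      rw [Circle.smul_def, Real.fourierChar_apply, smul_eq_mul]
      have : ((2 * Real.pi * -(y * (-u / (2 * Real.pi))) : ℝ) : ℂ) * Complex.I = Complex.I * y * u := by
        push_cast
        have : (Real.pi : ℂ) ≠ 0 := by exact_mod_cast Real.pi_ne_zero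
        field_simp
      rw [this]; ring
    · rw [indicator_of_notMem hy, indicator_of_notMem hy]; simp
  have := (Complex.continuous_re.tendsto _).comp key
  simpa [Function.comp_def] using this
end

section
open MeasureTheory Filter Topology Set

/-- generic estimate: if `g ≥ d` on `|t-u| ≤ h` (`u > h`), `g ≥ -C`, then integral is large -/
lemma taub_est (g : ℝ → ℝ) (hg : Measurable g) (C : ℝ) (hC : ∀ t, |g t| ≤ C) {d h l u : ℝ} (hd : 0 < d) (hh : 0 < h)
    (hl : 0 < l) (hlh : 2 ≤ l * h) (hu : h < u) (hlow : ∀ t, |t - u| ≤ h → d ≤ g t) :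
    d - 8 * C / (l * h) ≤ ∫ t in Ioi (0:ℝ), g t * fejK l (u - t) := by
  have hC0 : 0 ≤ C := (abs_nonneg _).trans (hC 0)
  have hK : Integrable (fun t => fejK l (u - t)) := ((fejK_int hl).comp_sub_left u)
  have hI : Integrable (fun t => g t * fejK l (u - t)) := by
    apply hK.bdd_mul (c := C) hg.aestronglyMeasurable
    exact Eventually.of_forall fun t => hC t
  have hdisj : Disjoint (Icc (u-h) (u+h)) (Ioi (0:ℝ) \ Icc (u-h) (u+h)) := disjoint_sdiff_right
  have hun : Ioi (0:ℝ) = Icc (u-h) (u+h) ∪ (Ioi (0:ℝ) \ Icc (u-h) (u+h)) := by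
    rw [union_sdiff_cancel]
    intro t ht; exact lt_of_lt_of_le (by linarith) ht.1
  have hms : MeasurableSet (Ioi (0:ℝ) \ Icc (u-h) (u+h)) := measurableSet_Ioi.diff measurableSet_Icc
  rw [hun, setIntegral_union hdisj hms hI.integrableOn hI.integrableOn]
  have A : d ≤ ∫ t in Icc (u-h) (u+h), g t * fejK l (u - t) := by
    have hsub : Icc (u - 2/l) (u+2/l) ⊆ Icc (u-h) (u+h) := by
      have : 2 / l ≤ h := by rw [div_le_iff₀ hl]; linarith
      apply Icc_subset_Icc <;> linarith
    calc d = ∫ t in Icc (u-2/l) (u+2/l), d * (l / 4) := by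
          rw [setIntegral_const, Real.volume_real_Icc_of_le (by have : 0 < 2 / l := by positivity
                                                                linarith)]
          rw [smul_eq_mul]; field_simp; ring
      _ ≤ ∫ t in Icc (u-2/l) (u+2/l), g t * fejK l (u - t) := by
          apply setIntegral_mono_on _ hI.integrableOn measurableSet_Icc
          · intro t ht
            have h1 := hlow t (by rw [abs_le]; have := hsub ht; constructor <;> linarith [this.1, this.2])
            have h2 : l / 4 ≤ fejK l (u - t) := by
              apply fejK_ge hl
              rw [abs_mul, abs_of_pos hl]
              have : |u - t| ≤ 2 / l := by rw [abs_le]; constructor <;> linarith [ht.1, ht.2]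
              calc l * |u-t| ≤ l * (2/l) := by gcongr
                _ = 2 := by field_simp
            have : 0 ≤ d := hd.le
            gcongr
            exact hd.le.trans h1
          · exact integrableOn_const (by simp)
      _ ≤ _ := by
          apply setIntegral_mono_set hI.integrableOn _ hsub.eventuallyLE
          filter_upwards [ae_restrict_mem measurableSet_Icc] with t ht
          have h1 := hlow t (by rw [abs_le]; constructor <;> linarith [ht.1, ht.2])
          have h3 := fejK_nonneg (l := l) (v := u - t) hl
          exact mul_nonneg (hd.le.trans h1) h3
  have Bnd : ∫ t in (Ioi (0:ℝ) \ Icc (u-h) (u+h)), fejK l (u - t) ≤ 8 / (l*h) := by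
    have hsub : (Ioi (0:ℝ) \ Icc (u-h) (u+h)) ⊆ Iio (u-h) ∪ Ioi (u+h) := by
      intro t ht
      by_contra hc
      simp only [mem_union, mem_Iio, mem_Ioi, not_or, not_lt] at hc
      exact ht.2 ⟨hc.1, hc.2⟩
    have half : ∫ v in Ioi h, fejK l v ≤ 4 / (l * h) := by
      have hi : IntegrableOn (fun v : ℝ => (4/l) * v ^ (-2:ℝ)) (Ioi h) :=
        (integrableOn_Ioi_rpow_of_lt (by norm_num) hh).const_mul _
      calc _ ≤ ∫ v in Ioi h, (4/l) * v ^ (-2:ℝ) := by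
            apply setIntegral_mono_on (fejK_int hl).integrableOn hi measurableSet_Ioi
            intro v (hv : h < v)
            have hv0 : 0 < v := hh.trans hv
            refine (fejK_le hl hv0.ne').trans (le_of_eq ?_)
            rw [Real.rpow_neg hv0.le, Real.rpow_two]
            field_simp
        _ = _ := by
            rw [integral_const_mul, integral_Ioi_rpow_of_lt (by norm_num) hh]
            norm_num
            rw [Real.rpow_neg_one]
            field_simp
    have h1 : ∫ t in Iio (u-h), fejK l (u - t) = ∫ v in Ioi h, fejK l v := by
      rw [← integral_indicator measurableSet_Iio, ← integral_indicator measurableSet_Ioi]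
      rw [← integral_sub_left_eq_self (fun v => (Ioi h).indicator (fun v => fejK l v) v) volume u]
      congr 1; ext t
      simp only [indicator, mem_Iio, mem_Ioi]
      congr 1
      simp only [eq_iff_iff]
      constructor <;> intro _ <;> linarith
    have h2 : ∫ t in Ioi (u+h), fejK l (u - t) = ∫ v in Ioi h, fejK l v := by
      rw [← integral_indicator measurableSet_Ioi, ← integral_indicator measurableSet_Ioi]
      rw [← integral_sub_right_eq_self (fun v => (Ioi h).indicator (fun v => fejK l v) v) u]
      congr 1; ext t
      have : fejK l (u - t) = fejK l (t - u) := by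
        unfold fejK
        rw [show l * (u - t)/2 = -(l * (t-u)/2) by ring, Real.sinc_neg]
      simp only [indicator, mem_Ioi, this]
      congr 1
      simp only [eq_iff_iff]
      constructor <;> intro _ <;> linarith
    calc _ ≤ ∫ t in (Iio (u-h) ∪ Ioi (u+h)), fejK l (u - t) := by
          apply setIntegral_mono_set hK.integrableOn _ hsub.eventuallyLE
          exact Eventually.of_forall fun t => fejK_nonneg hl
      _ = (∫ t in Iio (u-h), fejK l (u - t)) + ∫ t in Ioi (u+h), fejK l (u - t) := by
          apply setIntegral_union _ measurableSet_Ioi hK.integrableOn hK.integrableOn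
          rw [Set.disjoint_left]
          intro t (h1 : t < _) (h2 : _ < t); linarith
      _ ≤ 4/(l*h) + 4/(l*h) := by rw [h1, h2]; linarith
      _ = _ := by ring
  have B2 : -(8 * C / (l*h)) ≤ ∫ t in (Ioi (0:ℝ) \ Icc (u-h) (u+h)), g t * fejK l (u - t) := by
    calc _ ≤ -C * ∫ t in (Ioi (0:ℝ) \ Icc (u-h) (u+h)), fejK l (u - t) := by
          have := mul_le_mul_of_nonneg_left Bnd hC0
          have e : 8 * C / (l*h) = C * (8 / (l*h)) := by ring
          rw [e]; linarith
      _ = ∫ t in (Ioi (0:ℝ) \ Icc (u-h) (u+h)), -C * fejK l (u - t) := by rw [integral_const_mul]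
      _ ≤ _ := by
          apply setIntegral_mono_on (hK.const_mul _).integrableOn hI.integrableOn hms
          intro t _
          have := fejK_nonneg (l := l) (v := u - t) hl
          have h2 := (abs_le.1 (hC t)).1
          gcongr
  linarith

lemma taub (B : ℝ → ℝ) (hBm : Measurable B) (C : ℝ) (hC : ∀ t, |B t - 1| ≤ C)
    (hmono : ∀ s t, s ≤ t → B s * Real.exp s ≤ B t * Real.exp t)
    (hlim : ∀ l : ℝ, 0 < l → Tendsto (fun u => ∫ t in Ioi (0:ℝ), (B t - 1) * fejK l (u - t)) atTop (𝓝 0)) :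
    Tendsto B atTop (𝓝 1) := by
  have hC0 : 0 ≤ C := (abs_nonneg _).trans (hC 0)
  rw [Metric.tendsto_atTop]
  suffices H : ∀ δ : ℝ, 0 < δ → δ ≤ 1 → ∃ N, ∀ n ≥ N, |B n - 1| < δ by
    intro δ hδ
    obtain ⟨N, hN⟩ := H (min δ 1) (by positivity) (min_le_right _ _)
    exact ⟨N, fun n hn => by rw [Real.dist_eq]; exact (hN n hn).trans_le (min_le_left _ _)⟩
  intro δ hδ hδ1
  -- h = δ/8, d = δ/4, l large
  set h := δ / 8 with hh
  set d := δ / 4 with hd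
  have hpos : 0 < h := by positivity
  have dpos : 0 < d := by positivity
  set l := (2 + 16 * C / d) / h with hl
  have lpos : 0 < l := by positivity
  have lh : l * h = 2 + 16 * C / d := by rw [hl]; field_simp
  have lh2 : 2 ≤ l * h := by rw [lh]; have : 0 ≤ 16 * C / d := by positivity
                             linarith
  have hbig : d / 2 ≤ d - 8 * C / (l * h) := by
    have : 8 * C / (l*h) ≤ d / 2 := by
      rw [div_le_iff₀ (by linarith), lh]
      have : d / 2 * (2 + 16 * C / d) = d + 8 * C := by field_simp; ring
      rw [this]; linarith
    linarith
  have hev := (hlim l lpos)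
  rw [Metric.tendsto_atTop] at hev
  obtain ⟨N, hN⟩ := hev (d/2) (by positivity)
  refine ⟨max N 0 + 3 * h + 1, fun n hn => ?_⟩
  have hnN : N ≤ n - h := by linarith [le_max_left N 0]
  have hn0 : 2 * h < n := by linarith [le_max_right N 0]
  have hgm : Measurable fun t => B t - 1 := hBm.sub_const 1
  have hexp : Real.exp (2*h) ≤ 1 + 3 * h := by
    have : 2 * h ≤ 1 := by rw [hh]; linarith
    have := Real.abs_exp_sub_one_sub_id_le (x := 2*h) (by rw [abs_of_pos (by positivity)]; exact this)
    have := (abs_le.1 this).2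
    have : h ≤ 1/8 := by rw [hh]; linarith
    nlinarith
  have hexp' : 1 - 2 * h ≤ Real.exp (-(2*h)) := by
    have := Real.add_one_le_exp (-(2*h)); linarith
  rw [abs_lt]
  constructor
  · by_contra hcon
    push Not at hcon
    have hlow : ∀ t, |t - (n - h)| ≤ h → d ≤ -(B t - 1) := by
      intro t ht
      rw [abs_le] at ht
      have h1 := hmono t n (by linarith [ht.2])
      have h2 : B t ≤ B n * Real.exp (n - t) := by
        rw [Real.exp_sub]
        rw [← mul_div_assoc, le_div_iff₀ (Real.exp_pos _)]; exact h1
      have h3 : Real.exp (n - t) ≤ 1 + 3 * h := (Real.exp_le_exp.2 (by linarith [ht.1])).trans hexp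
      have h4 : B t ≤ (1 - δ) * (1 + 3 * h) := by
        refine h2.trans ?_
        have : 0 ≤ Real.exp (n-t) := Real.exp_nonneg _
        calc B n * Real.exp (n-t) ≤ (1-δ) * Real.exp (n-t) := by gcongr; linarith
          _ ≤ _ := by gcongr
      rw [hh] at h4
      rw [hd]; nlinarith
    have := taub_est (fun t => -(B t - 1)) (hgm.neg) C (fun t => by rw [abs_neg]; exact hC t) dpos hpos lpos lh2 (by linarith) hlow
    have h2 := hN (n - h) hnN
    rw [Real.dist_eq, sub_zero, abs_lt] at h2
    simp_rw [neg_mul] at this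
    rw [integral_neg] at this
    linarith [h2.1]
  · by_contra hcon
    push Not at hcon
    have hlow : ∀ t, |t - (n + h)| ≤ h → d ≤ (B t - 1) := by
      intro t ht
      rw [abs_le] at ht
      have h1 := hmono n t (by linarith [ht.1])
      have h2 : B n * Real.exp (-(t-n)) ≤ B t := by
        rw [show -(t-n) = n - t by ring, Real.exp_sub]
        rw [← mul_div_assoc, div_le_iff₀ (Real.exp_pos _)]; exact h1
      have h3 : 1 - 2*h ≤ Real.exp (-(t-n)) := hexp'.trans (Real.exp_le_exp.2 (by linarith [ht.2]))
      have hsm : 0 ≤ 1 - 2*h := by rw [hh]; linarith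
      have h4 : (1 + δ) * (1 - 2 * h) ≤ B t := by
        refine le_trans ?_ h2
        exact mul_le_mul (by linarith) h3 hsm (by linarith)
      rw [hh] at h4
      rw [hd]; nlinarith
    have := taub_est (fun t => (B t - 1)) hgm C hC dpos hpos lpos lh2 (by linarith) hlow
    have h2 := hN (n + h) (by linarith)
    rw [Real.dist_eq, sub_zero, abs_lt] at h2
    linarith [h2.2]
end

section
open MeasureTheory Filter Topology Set

noncomputable def psiB (t : ℝ) : ℝ := Chebyshev.psi (Real.exp t) * Real.exp (-t)

lemma psiB_meas : Measurable psiB := by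
  unfold psiB
  have := Chebyshev.psi_mono.measurable
  fun_prop

lemma psiB_bd (t : ℝ) : |psiB t - 1| ≤ Real.log 4 + 4 := by
  have h1 := Chebyshev.psi_le_const_mul_self (Real.exp_nonneg t)
  have h0 := Chebyshev.psi_nonneg (Real.exp t)
  have h3 : psiB t ≤ Real.log 4 + 4 := by
    unfold psiB
    rw [Real.exp_neg, ← div_eq_mul_inv, div_le_iff₀ (Real.exp_pos _)]; exact h1
  have h4 : 0 ≤ psiB t := by unfold psiB; positivity
  have h5 : 0 ≤ Real.log 4 := Real.log_nonneg (by norm_num)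
  rw [abs_le]; constructor <;> linarith

lemma psiB_mono (s t : ℝ) (h : s ≤ t) : psiB s * Real.exp s ≤ psiB t * Real.exp t := by
  unfold psiB
  rw [mul_assoc, mul_assoc, ← Real.exp_add, ← Real.exp_add]
  simp only [neg_add_cancel, Real.exp_zero, mul_one]
  exact Chebyshev.psi_mono (Real.exp_le_exp.2 h)

lemma LS_psi {s : ℂ} (hs : 1 < s.re) :
    LSeries (fun n => ((ArithmeticFunction.vonMangoldt n : ℝ) : ℂ)) s =
      s * ∫ t in Ioi (1:ℝ), (Chebyshev.psi t : ℂ) * (t:ℂ) ^ (-(s+1)) := by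
  rw [LSeries_eq_mul_integral_of_nonneg (fun n => ArithmeticFunction.vonMangoldt n) zero_le_one hs _ (fun n => ArithmeticFunction.vonMangoldt_nonneg)]
  · congr 2
    ext t
    rw [Chebyshev.psi]
    push_cast
    rfl
  · have : (fun n : ℕ => ∑ k ∈ Finset.Icc 1 n, ArithmeticFunction.vonMangoldt k) = fun n : ℕ => Chebyshev.psi n := by
      ext n
      rw [Chebyshev.psi, Nat.floor_natCast]; rfl
    rw [this]
    apply Asymptotics.IsBigO.of_bound (Real.log 4 + 4)
    refine Eventually.of_forall fun n => ?_
    rw [Real.norm_of_nonneg (Chebyshev.psi_nonneg _), Real.rpow_one, Real.norm_of_nonneg (Nat.cast_nonneg n)]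
    exact Chebyshev.psi_le_const_mul_self (Nat.cast_nonneg n)

lemma LS_B {w : ℂ} (hw : 0 < w.re) :
    LSeries (fun n => ((ArithmeticFunction.vonMangoldt n : ℝ) : ℂ)) (1 + w) =
      (1 + w) * ∫ t in Ioi (0:ℝ), (psiB t : ℂ) * Complex.exp (-(w * t)) := by
  rw [LS_psi (by simpa using hw)]
  congr 1
  have him : Real.exp '' (Ioi 0) = Ioi 1 := by
    ext x
    constructor
    · rintro ⟨t, ht, rfl⟩
      exact Real.one_lt_exp_iff.2 ht
    · intro (hx : 1 < x)
      exact ⟨Real.log x, Real.log_pos hx, Real.exp_log (by linarith)⟩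
  rw [← him, integral_image_eq_integral_abs_deriv_smul measurableSet_Ioi (f' := Real.exp) (fun x _ => (Real.hasDerivAt_exp x).hasDerivWithinAt) Real.exp_injective.injOn]
  apply integral_congr_ae
  refine Eventually.of_forall fun t => ?_
  simp only [psiB]
  rw [abs_of_pos (Real.exp_pos t), Complex.real_smul]
  push_cast
  rw [Complex.cpow_def_of_ne_zero (Complex.exp_ne_zero _), ← Complex.ofReal_exp, ← Complex.ofReal_log (Real.exp_nonneg _), Real.log_exp]
  rw [mul_left_comm, mul_assoc, Complex.ofReal_exp, ← Complex.exp_add, ← Complex.exp_add]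
  congr 2
  ring

lemma resid_one (s : ℂ) (hs : 1 < s.re) :
    ArithmeticFunction.vonMangoldt.LFunctionResidueClassAux (q := 1) 1 s =
      LSeries (fun n => ((ArithmeticFunction.vonMangoldt n : ℝ) : ℂ)) s - 1 / (s - 1) := by
  have := ArithmeticFunction.vonMangoldt.eqOn_LFunctionResidueClassAux (q := 1) (a := 1) isUnit_one hs
  rw [this]
  have e : (fun n : ℕ => ((ArithmeticFunction.vonMangoldt.residueClass (q := 1) 1 n : ℝ) : ℂ)) = fun n : ℕ => ((ArithmeticFunction.vonMangoldt n : ℝ) : ℂ) := by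
    ext n
    have : ({n : ℕ | (n : ZMod 1) = 1} : Set ℕ) = univ := by
      ext m; simp [eq_iff_true_of_subsingleton]
    rw [ArithmeticFunction.vonMangoldt.residueClass, this, indicator_univ]
  simp only [e]
  simp

theorem PNT_psi : Tendsto (fun x => Chebyshev.psi x / x) atTop (𝓝 1) := by
  have hT : Tendsto psiB atTop (𝓝 1) := by
    apply taub psiB psiB_meas _ psiB_bd psiB_mono
    intro l hl
    set h := ArithmeticFunction.vonMangoldt.LFunctionResidueClassAux (q := 1) 1 with hh
    refine wien_tend (fun t => psiB t - 1) (psiB_meas.sub_const 1) _ psiB_bd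
      (fun p => (h (1 + (p.1 + Complex.I * p.2)) - 1) / (1 + (p.1 + Complex.I * p.2))) ?_ ?_ hl
    · have hc := ArithmeticFunction.vonMangoldt.continuousOn_LFunctionResidueClassAux (q := 1) 1
      apply ContinuousOn.div
      · apply ContinuousOn.sub _ continuousOn_const
        apply hc.comp (by fun_prop)
        intro p hp
        simp only [mem_ofPred_eq]
        simp
        exact hp.1.1
      · fun_prop
      · intro p hp h0
        have := congrArg Complex.re h0
        simp at this
        have := hp.1.1
        linarith
    · intro e he _ y
      have hw : 0 < ((e:ℂ) + Complex.I * y).re := by simpa using he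
      set w : ℂ := (e:ℂ) + Complex.I * y with hwd
      have hw0 : w ≠ 0 := by intro h0; rw [h0] at hw; simp at hw
      have hw1 : 1 + w ≠ 0 := by intro h0; have := congrArg Complex.re h0; simp only [Complex.add_re, Complex.one_re, Complex.zero_re] at this; linarith
      have h1 : h (1 + w) = _ := resid_one (1 + w) (by simpa using hw)
      change (h (1 + w) - 1) / (1 + w) = _
      rw [h1, LS_B hw]
      have hiE : IntegrableOn (fun t : ℝ => Complex.exp (-w * t)) (Ioi 0) :=
        integrableOn_exp_mul_complex_Ioi (by simpa using hw) 0
      have hiE' : IntegrableOn (fun t : ℝ => Complex.exp (-(w * t))) (Ioi 0) := by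
        simpa [neg_mul] using hiE
      have hval : ∫ t in Ioi (0:ℝ), Complex.exp (-(w*t)) = 1 / w := by
        have := integral_exp_mul_complex_Ioi (a := -w) (by simpa using hw) 0
        simp_rw [neg_mul] at this
        rw [this]; simp
      have hiB : IntegrableOn (fun t : ℝ => (psiB t : ℂ) * Complex.exp (-(w * t))) (Ioi 0) := by
        apply hiE'.bdd_mul (c := Real.log 4 + 4 + 1)
        · have := psiB_meas
          apply Measurable.aestronglyMeasurable; fun_prop
        · refine Eventually.of_forall fun t => ?_
          rw [Complex.norm_real, Real.norm_eq_abs]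
          have := psiB_bd t
          rw [abs_le] at this ⊢
          have h5 : 0 ≤ Real.log 4 := Real.log_nonneg (by norm_num)
          constructor <;> linarith [this.1, this.2]
      have : ∫ t in Ioi (0:ℝ), ((psiB t - 1 : ℝ) : ℂ) * Complex.exp (-(w * t)) = (∫ t in Ioi (0:ℝ), (psiB t : ℂ) * Complex.exp (-(w * t))) - 1 / w := by
        rw [← hval, ← integral_sub hiB hiE']
        congr 1; ext t; push_cast; ring
      rw [this]
      rw [add_sub_cancel_left]
      field_simp
      ring
  have := hT.comp Real.tendsto_log_atTop
  refine this.congr' ?_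
  filter_upwards [eventually_gt_atTop 0] with x hx
  simp only [Function.comp, psiB]
  rw [Real.exp_neg, Real.exp_log hx, div_eq_mul_inv]

theorem PNT_theta : Tendsto (fun x => Chebyshev.theta x / x) atTop (𝓝 1) := by
  obtain ⟨C, hC⟩ := Chebyshev.psi_sub_theta_le_mul_sqrt
  have h1 : Tendsto (fun x : ℝ => (Chebyshev.psi x - Chebyshev.theta x) / x) atTop (𝓝 0) := by
    have h2 : Tendsto (fun x : ℝ => C * (Real.sqrt x)⁻¹) atTop (𝓝 0) := by
      simpa using (tendsto_inv_atTop_zero.comp Real.tendsto_sqrt_atTop).const_mul C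
    refine squeeze_zero' ?_ ?_ h2
    · filter_upwards [eventually_gt_atTop 0] with x hx
      have := Chebyshev.theta_le_psi x
      exact div_nonneg (by linarith) hx.le
    · filter_upwards [eventually_gt_atTop 0] with x hx
      rw [div_le_iff₀ hx]
      refine (hC x).trans (le_of_eq ?_)
      have := Real.mul_self_sqrt hx.le
      have h3 : 0 < Real.sqrt x := Real.sqrt_pos.2 hx
      field_simp
      rw [Real.sq_sqrt hx.le]
  have := PNT_psi.sub h1
  simp only [sub_zero] at this
  refine this.congr fun x => by ring
end

section
open Polynomial

noncomputable def zz : ℝ := (Real.sqrt 21 - 1) / (Real.sqrt 21 + 1)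

lemma sq21 : Real.sqrt 21 ^ 2 = 21 := Real.sq_sqrt (by norm_num)
lemma s21_lo : (4.582:ℝ) < Real.sqrt 21 := Real.lt_sqrt_of_sq_lt (by norm_num)
lemma s21_hi : Real.sqrt 21 < 4.583 := (Real.sqrt_lt' (by norm_num)).2 (by norm_num)
lemma zz_eq : zz = (11 - Real.sqrt 21) / 10 := by
  unfold zz
  have := s21_lo
  rw [div_eq_div_iff (by linarith) (by norm_num)]
  nlinarith [sq21]
lemma zz_pos : 0 < zz := by rw [zz_eq]; linarith [s21_hi]
lemma zz_lt : zz < 1 := by rw [zz_eq]; linarith [s21_lo]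
lemma zz5 : zz = 5 * (1 - zz)^2 := by rw [zz_eq]; nlinarith [sq21]
lemma zz21 : 1 + zz = Real.sqrt 21 * (1 - zz) := by rw [zz_eq]; nlinarith [sq21]
lemma zz_norm : ‖zz‖ < 1 := by rw [Real.norm_of_nonneg zz_pos.le]; exact zz_lt

lemma summ_poly (q : ℝ[X]) : Summable fun v : ℕ => q.eval (v:ℝ) * zz ^ v := by
  induction q using Polynomial.induction_on' with
  | add p q hp hq => simp only [eval_add, add_mul]; exact hp.add hq
  | monomial n a =>
    simp only [eval_monomial, mul_assoc]
    exact (summable_pow_mul_geometric_of_norm_lt_one n zz_norm).mul_left a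

noncomputable def SS (q : ℝ[X]) : ℝ := ∑' v : ℕ, q.eval (v:ℝ) * zz ^ v

lemma SS_add (p q : ℝ[X]) : SS (p + q) = SS p + SS q := by
  unfold SS
  rw [← (summ_poly p).tsum_add (summ_poly q)]
  simp [add_mul]

lemma SS_C_mul (c : ℝ) (q : ℝ[X]) : SS (C c * q) = c * SS q := by
  unfold SS
  rw [← tsum_mul_left]
  simp [mul_assoc]

/-- `∏_{|i| ≤ c} (X - i)` -/
noncomputable def PP (c : ℕ) : ℝ[X] := ∏ i ∈ Finset.Icc (-(c:ℤ)) c, (X - C (i:ℝ))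

lemma Icc_succ_eq (c : ℕ) : Finset.Icc (-((c+1:ℕ):ℤ)) ((c+1:ℕ):ℤ) = insert (-((c+1:ℕ):ℤ)) (insert ((c+1:ℕ):ℤ) (Finset.Icc (-(c:ℤ)) c)) := by
  ext x; simp only [Finset.mem_Icc, Finset.mem_insert]; push_cast; omega

lemma PP_succ (c : ℕ) : PP (c+1) = (X + C ((c:ℝ)+1)) * ((X - C ((c:ℝ)+1)) * PP c) := by
  unfold PP
  rw [Icc_succ_eq, Finset.prod_insert, Finset.prod_insert]
  · push_cast; simp only [C_neg, sub_neg_eq_add]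
  · simp
  · simp only [Finset.mem_insert, Finset.mem_Icc]; push_cast; omega

lemma PP_zero : PP 0 = X := by simp [PP]

lemma PP_eval (c v : ℕ) : (PP c).eval (v:ℝ) = ((v+c).descFactorial (2*c+1) : ℕ) := by
  induction c with
  | zero => simp [PP_zero]
  | succ c ih =>
    rw [PP_succ, eval_mul, eval_mul, ih]
    rw [show 2*(c+1)+1 = (2*c+2)+1 by ring, ← add_assoc, Nat.succ_descFactorial_succ, Nat.descFactorial_succ (v+c) (2*c+1)]
    simp only [eval_add, eval_sub, eval_X, eval_C]
    push_cast
    rcases Nat.lt_or_ge c v with h | h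
    · rw [show v + c - (2*c+1) = v - (c+1) by omega, Nat.cast_sub (by omega)]
      push_cast; ring
    · rw [Nat.descFactorial_of_lt (show v + c < 2*c+1 by omega)]
      simp

lemma PP_comp (c : ℕ) : (PP c).comp (-X) = - PP c := by
  induction c with
  | zero => simp [PP_zero]
  | succ c ih =>
    rw [PP_succ, mul_comp, mul_comp, ih]
    simp; ring

lemma PP_deg (c : ℕ) : (PP c).natDegree = 2*c+1 := by
  unfold PP
  rw [natDegree_prod_of_monic _ _ (fun i _ => monic_X_sub_C _)]
  simp only [natDegree_X_sub_C, Finset.sum_const, Int.card_Icc, smul_eq_mul]; omega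

lemma PP_eval_eq_zero {c v : ℕ} (h : v ≤ c) : (PP c).eval (v:ℝ) = 0 := by
  rw [PP_eval, Nat.descFactorial_of_lt (by omega)]; simp

/-- odd basis -/
noncomputable def gO (c : ℕ) : ℝ[X] := C (((2*c+1).factorial : ℝ)⁻¹) * PP c
noncomputable def gE (c : ℕ) : ℝ[X] := C (((c+1) * (2*c+1).factorial : ℝ)⁻¹) * (X * PP c)

lemma gO_eval (c v : ℕ) : (gO c).eval (v:ℝ) = ((v+c).choose (2*c+1) : ℕ) := by
  unfold gO
  rw [eval_mul, eval_C, PP_eval, Nat.descFactorial_eq_factorial_mul_choose]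
  push_cast
  have : ((2*c+1).factorial : ℝ) ≠ 0 := by positivity
  field_simp

lemma gE_eval (c v : ℕ) : (gE c).eval (v:ℝ) = (((v+c+1).choose (2*c+2) + (v+c).choose (2*c+2) : ℕ) : ℝ) := by
  unfold gE
  rw [eval_mul, eval_C, eval_mul, eval_X, PP_eval, Nat.descFactorial_eq_factorial_mul_choose]
  have h1 := Nat.choose_succ_right_eq (v+c) (2*c+1)
  rw [Nat.choose_succ_succ (v+c) (2*c+1)]
  have : ((2*c+1).factorial : ℝ) ≠ 0 := by positivity
  have h3 : (c:ℝ) + 1 ≠ 0 := by positivity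
  have h2 : ((v+c).choose (2*c+2) : ℝ) * (2*c+2) = (v+c).choose (2*c+1) * (v - c - 1) := by
    rcases Nat.lt_or_ge c v with h | h
    · rw [show v + c - (2*c+1) = v - (c+1) by omega] at h1
      have := congrArg (Nat.cast (R := ℝ)) h1
      push_cast [Nat.cast_sub (show c + 1 ≤ v by omega)] at this
      linarith
    · rw [Nat.choose_eq_zero_of_lt (show v + c < 2*c+1 by omega), Nat.choose_eq_zero_of_lt (show v + c < 2*c+2 by omega)]
      simp
  push_cast
  rw [inv_mul_eq_div, div_eq_iff (by positivity)]
  have h4 : ((v+c).choose (2*c+1+1) : ℝ) * (2*c+2) = (v+c).choose (2*c+1) * (v - c - 1) := h2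
  have : (v:ℝ) * ((v+c).choose (2*c+1):ℝ) = ((v + c).choose (2 * c + 1) + ((v + c).choose (2 * c+1).succ) + ((v + c).choose (2 * c + 2))) * ((c:ℝ) + 1) := by
    change _ = (_ + ((v + c).choose (2 * c+1+1) : ℝ) + ((v + c).choose (2 * c+1+1) : ℝ)) * _
    linear_combination h4.symm
  linear_combination ((2*c+1).factorial : ℝ) * this

lemma hs_choose (m d : ℕ) : HasSum (fun v : ℕ => (((v+d).choose (m+d) : ℕ):ℝ) * zz ^ v) (zz ^ m / (1 - zz)^(m+d+1)) := by
  have h := hasSum_choose_mul_geometric_of_norm_lt_one (m+d) zz_norm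
  have h2 := h.mul_left (zz ^ m)
  rw [mul_one_div] at h2
  rw [← hasSum_nat_add_iff' m]
  have hz : ∑ i ∈ Finset.range m, (((i+d).choose (m+d) : ℕ):ℝ) * zz ^ i = 0 := by
    apply Finset.sum_eq_zero
    intro i hi
    rw [Nat.choose_eq_zero_of_lt (by have := Finset.mem_range.1 hi; omega)]; simp
  rw [hz, sub_zero]
  refine h2.congr_fun ?_
  intro v
  rw [show v + m + d = v + (m+d) by ring, pow_add]; ring

lemma pow5 (k : ℕ) : zz ^ k = 5^k * (1-zz)^(2*k) := by
  rw [pow_mul, ← mul_pow, ← zz5]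

lemma one_sub_zz_pos : 0 < 1 - zz := by linarith [zz_lt]

lemma SS_gO (c : ℕ) : SS (gO c) = 5^(c+1) := by
  unfold SS
  simp_rw [gO_eval]
  have := hs_choose (c+1) c
  rw [show c + 1 + c = 2*c+1 by ring] at this
  rw [this.tsum_eq, pow5, show 2*c+1+1 = 2*(c+1) by ring]
  have := one_sub_zz_pos
  field_simp

lemma SS_gE (c : ℕ) : SS (gE c) = 5^(c+1) * Real.sqrt 21 := by
  unfold SS
  simp_rw [gE_eval]
  have h1 := hs_choose (c+1) (c+1)
  have h2 := hs_choose (c+2) c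
  rw [show c + 1 + (c+1) = 2*c+2 by ring] at h1
  rw [show c + 2 + c = 2*c+2 by ring] at h2
  have h3 := h1.add h2
  have : ∀ v : ℕ, (((v+c+1).choose (2*c+2) + (v+c).choose (2*c+2) : ℕ) : ℝ) * zz^v = (((v+(c+1)).choose (2*c+2) : ℕ):ℝ) * zz^v + (((v+c).choose (2*c+2) : ℕ) : ℝ) * zz^v := by
    intro v; push_cast; rw [← add_assoc]; ring
  simp_rw [this]
  rw [h3.tsum_eq, pow_succ zz (c+1), pow5, ← add_div, div_eq_iff (by have := one_sub_zz_pos; positivity)]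
  have := zz21
  linear_combination 5 ^ (c + 1) * (1 - zz) ^ (2 * (c + 1)) * this

lemma int_odd (g : ℤ) : ∀ D c : ℕ, ∀ q : ℝ[X], q.natDegree ≤ 2*c + D → q.comp (-X) = -q → (∀ v : ℕ, v ≤ c → q.eval (v:ℝ) = 0) →
    (∀ v : ℕ, ∃ m : ℤ, q.eval (v:ℝ) = g * m) → ∃ N : ℤ, SS q = g * 5^(c+1) * N := by
  intro D
  induction D with
  | zero =>
    intro c q hq hpar hz hv
    have : q = 0 := by
      apply Polynomial.eq_zero_of_natDegree_lt_card_of_eval_eq_zero (f := fun i : Finset.Icc (-(c:ℤ)) c => ((i:ℤ):ℝ))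
      · intro a b h; simp only at h; exact Subtype.ext (by exact_mod_cast h)
      · rintro ⟨i, hi⟩
        rw [Finset.mem_Icc] at hi
        rcases le_total 0 i with h | h
        · lift i to ℕ using h
          exact hz i (by omega)
        · obtain ⟨k, rfl⟩ : ∃ k : ℕ, i = -k := ⟨i.natAbs, by omega⟩
          have := congrArg (eval (k:ℝ)) hpar
          rw [eval_comp] at this
          simp only [eval_neg, eval_X] at this
          simp only; push_cast; rw [this, hz k (by omega)]; simp
      · simp; omega
    refine ⟨0, ?_⟩
    simp [this, SS]
  | succ D ih =>
    intro c q hq hpar hz hv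
    obtain ⟨m, hm⟩ := hv (c+1)
    have key := ih (c+1) (q + C (-((g*m : ℤ):ℝ)) * gO c) ?_ ?_ ?_ ?_
    · obtain ⟨N, hN⟩ := key
      rw [SS_add, SS_C_mul, SS_gO] at hN
      refine ⟨5 * N + m, ?_⟩
      push_cast at hN ⊢
      rw [pow_succ] at hN
      linear_combination hN
    · refine (natDegree_add_le _ _).trans (max_le (by omega) ?_)
      refine (natDegree_C_mul_le _ _).trans ((natDegree_C_mul_le _ _).trans ?_)
      rw [PP_deg]; omega
    · rw [add_comp, mul_comp, C_comp, gO, mul_comp, C_comp, PP_comp, hpar]; ring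
    · intro v hvc
      rw [eval_add, eval_mul, eval_C, gO_eval]
      rcases Nat.lt_or_ge c v with h | h
      · have : v = c + 1 := by omega
        subst this
        rw [hm, show c + 1 + c = 2*c+1 by ring, Nat.choose_self]; push_cast; ring
      · rw [hz v h, Nat.choose_eq_zero_of_lt (by omega)]; simp
    · intro v
      obtain ⟨k, hk⟩ := hv v
      refine ⟨k - m * ((v+c).choose (2*c+1) : ℕ), ?_⟩
      rw [eval_add, eval_mul, eval_C, gO_eval, hk]; push_cast; ring

lemma int_even (g : ℤ) : ∀ D c : ℕ, ∀ q : ℝ[X], q.natDegree ≤ 2*c + D → q.comp (-X) = q → (∀ v : ℕ, v ≤ c → q.eval (v:ℝ) = 0) →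
    (∀ v : ℕ, ∃ m : ℤ, q.eval (v:ℝ) = g * m) → ∃ N : ℤ, SS q = g * 5^(c+1) * N * Real.sqrt 21 := by
  intro D
  induction D with
  | zero =>
    intro c q hq hpar hz hv
    have : q = 0 := by
      apply Polynomial.eq_zero_of_natDegree_lt_card_of_eval_eq_zero (f := fun i : Finset.Icc (-(c:ℤ)) c => ((i:ℤ):ℝ))
      · intro a b h; simp only at h; exact Subtype.ext (by exact_mod_cast h)
      · rintro ⟨i, hi⟩
        rw [Finset.mem_Icc] at hi
        rcases le_total 0 i with h | h
        · lift i to ℕ using h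
          exact hz i (by omega)
        · obtain ⟨k, rfl⟩ : ∃ k : ℕ, i = -k := ⟨i.natAbs, by omega⟩
          have := congrArg (eval (k:ℝ)) hpar
          rw [eval_comp] at this
          simp only [eval_neg, eval_X] at this
          simp only; push_cast; rw [this, hz k (by omega)]
      · simp; omega
    refine ⟨0, ?_⟩
    simp [this, SS]
  | succ D ih =>
    intro c q hq hpar hz hv
    obtain ⟨m, hm⟩ := hv (c+1)
    have key := ih (c+1) (q + C (-((g*m : ℤ):ℝ)) * gE c) ?_ ?_ ?_ ?_
    · obtain ⟨N, hN⟩ := key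
      rw [SS_add, SS_C_mul, SS_gE] at hN
      refine ⟨5 * N + m, ?_⟩
      push_cast at hN ⊢
      rw [pow_succ] at hN
      linear_combination hN
    · refine (natDegree_add_le _ _).trans (max_le (by omega) ?_)
      refine (natDegree_C_mul_le _ _).trans ((natDegree_C_mul_le _ _).trans ?_)
      refine natDegree_mul_le.trans ?_
      rw [PP_deg, natDegree_X]; omega
    · rw [add_comp, mul_comp, C_comp, gE, mul_comp, mul_comp, C_comp, PP_comp, hpar, X_comp]; ring
    · intro v hvc
      rw [eval_add, eval_mul, eval_C, gE_eval]
      rcases Nat.lt_or_ge c v with h | h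
      · have : v = c + 1 := by omega
        subst this
        rw [hm, show c + 1 + c + 1 = 2*c+2 by ring, Nat.choose_self, Nat.choose_eq_zero_of_lt (by omega)]; push_cast; ring
      · rw [hz v h, Nat.choose_eq_zero_of_lt (by omega), Nat.choose_eq_zero_of_lt (by omega)]; simp
    · intro v
      obtain ⟨k, hk⟩ := hv v
      refine ⟨k - m * (((v+c+1).choose (2*c+2) + (v+c).choose (2*c+2) : ℕ) ), ?_⟩
      rw [eval_add, eval_mul, eval_C, gE_eval, hk]; push_cast; ring
end

section
open Polynomial

lemma pow_dvd_prod_aux {ι : Type*} [DecidableEq ι] (p : ℕ) (T : Finset ι) (x : ι → ℤ) (L : ℕ) (c : ℕ → ℕ)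
    (h : ∀ l ∈ Finset.Ico 1 L, c l ≤ (T.filter fun i => ((p^l : ℕ):ℤ) ∣ x i).card) :
    ((p:ℤ) ^ (∑ l ∈ Finset.Ico 1 L, c l)) ∣ ∏ i ∈ T, x i := by
  have h1 : ∑ l ∈ Finset.Ico 1 L, c l ≤ ∑ i ∈ T, ((Finset.Ico 1 L).filter fun l => ((p^l : ℕ):ℤ) ∣ x i).card := by
    calc _ ≤ ∑ l ∈ Finset.Ico 1 L, (T.filter fun i => ((p^l : ℕ):ℤ) ∣ x i).card := Finset.sum_le_sum h
      _ = _ := by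
        simp_rw [Finset.card_filter]
        rw [Finset.sum_comm]
  refine (pow_dvd_pow _ h1).trans ?_
  rw [← Finset.prod_pow_eq_pow_sum]
  apply Finset.prod_dvd_prod_of_dvd
  intro i _
  set F := (Finset.Ico 1 L).filter fun l => ((p^l : ℕ):ℤ) ∣ x i with hF
  rcases F.eq_empty_or_nonempty with h0 | h0
  · rw [h0]; simp
  · have hm := F.max'_mem h0
    set m := F.max' h0
    have hd := (Finset.mem_filter.1 hm).2
    have hc : F.card ≤ m := by
      have : F ⊆ Finset.Icc 1 m := by
        intro l hl
        rw [Finset.mem_Icc]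
        exact ⟨(Finset.mem_Ico.1 (Finset.mem_filter.1 hl).1).1, F.le_max' l hl⟩
      simpa using Finset.card_le_card this
    refine (pow_dvd_pow _ hc).trans ?_
    exact_mod_cast hd

lemma dvd_derivs {ι : Type*} [DecidableEq ι] (d v : ℤ) (a : ι → ℤ) : ∀ k : ℕ, ∀ s : Finset ι,
    (∀ T ⊆ s, s.card ≤ T.card + k → d ∣ ∏ i ∈ T, (v - a i)) →
    d ∣ (derivative^[k] (∏ i ∈ s, (X - C (a i)))).eval v := by
  intro k
  induction k with
  | zero =>
    intro s h
    simp only [Function.iterate_zero, id]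
    rw [eval_prod]
    simpa using h s (Finset.Subset.refl _) (by omega)
  | succ k ih =>
    intro s h
    rw [Function.iterate_succ, Function.comp, derivative_prod_finset]
    simp only [derivative_sub, derivative_X, derivative_C, sub_zero, mul_one]
    rw [iterate_derivative_sum, eval_finsetSum]
    apply Finset.dvd_sum
    intro i hi
    apply ih
    intro T hT hc
    apply h T (hT.trans (Finset.erase_subset _ _))
    rw [Finset.card_erase_of_mem hi] at hc
    omega

def phiq (n q : ℕ) : ℕ := max (26*n/q + 22*n/q + 18*n/q) (max (2*(24*n/q) + 18*n/q) (max (3*(22*n/q)) (2*(20*n/q) + 26*n/q)))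

noncomputable def gg (n : ℕ) : ℕ := ∏ p ∈ Nat.primesLE (26*n), p ^ (∑ l ∈ Finset.Ico 1 (Nat.log p (26*n) + 1), (phiq n (p^l) - 2))

lemma gg_pos (n : ℕ) : 0 < gg n := by
  unfold gg
  apply Finset.prod_pos
  intro p hp
  exact pow_pos (Nat.prime_of_mem_primesLE hp).pos _

noncomputable def idx (n : ℕ) : Finset ((_ : ℕ) × ℤ) := ({13, 11, 9} : Finset ℕ).sigma fun b => Finset.Icc (-((b*n : ℕ):ℤ)) ((b*n : ℕ):ℤ)

noncomputable def RZ (n : ℕ) : ℤ[X] := ∏ i ∈ idx n, (X - C i.2)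

lemma RZ_map (n : ℕ) : (RZ n).map (Int.castRingHom ℝ) = PP (13*n) * PP (11*n) * PP (9*n) := by
  unfold RZ idx
  rw [Finset.prod_sigma]
  rw [Finset.prod_insert (by simp), Finset.prod_insert (by simp), Finset.prod_singleton]
  simp only [Polynomial.map_mul, Polynomial.map_prod, Polynomial.map_sub, map_X, map_C]
  unfold PP
  rw [mul_assoc]
  rfl

lemma cnt_one (q B : ℕ) (hq : 0 < q) (v : ℤ) :
    (((Finset.Icc (-(B:ℤ)) B).filter fun i => (q:ℤ) ∣ v - i).card : ℤ) = ((B:ℤ) - v) / q - (-(B:ℤ) - 1 - v) / q := by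
  have h := Int.Ioc_filter_modEq_card (-(B:ℤ)-1) B (r := q) (by exact_mod_cast hq) v
  have e : (Finset.Icc (-(B:ℤ)) B).filter (fun i => (q:ℤ) ∣ v - i) = (Finset.Ioc (-(B:ℤ)-1) B).filter (fun i => i ≡ v [ZMOD q]) := by
    ext x
    simp only [Finset.mem_filter, Finset.mem_Icc, Finset.mem_Ioc, Int.modEq_iff_dvd]
    constructor <;> rintro ⟨h1, h2⟩ <;> exact ⟨⟨by omega, by omega⟩, h2⟩
  rw [e, h]
  have f1 : ⌊(((B:ℤ):ℚ) - v) / ((q:ℤ):ℚ)⌋ = ((B:ℤ) - v) / q := by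
    have := Rat.floor_intCast_div_natCast ((B:ℤ) - v) q
    push_cast at this ⊢
    exact this
  have f2 : ⌊(((-(B:ℤ) - 1 : ℤ):ℚ) - v) / ((q:ℤ):ℚ)⌋ = (-(B:ℤ) - 1 - v) / q := by
    have := Rat.floor_intCast_div_natCast (-(B:ℤ) - 1 - v) q
    push_cast at this ⊢
    exact this
  rw [f1, f2]
  apply max_eq_left
  have := Int.ediv_le_ediv (show (0:ℤ) < q by exact_mod_cast hq) (show -(B:ℤ) - 1 - v ≤ B - v by omega)
  omega

lemma fl_ge (q B B' : ℕ) (hq : 0 < q) (v : ℤ) : (((B + B')/q : ℕ):ℤ) ≤ ((B:ℤ) - v) / q - (-(B':ℤ) - 1 - v) / q := by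
  have h0 : (0:ℤ) < q := by exact_mod_cast hq
  have h1 : ((q * ((B + B')/q) : ℕ):ℤ) ≤ ((B + B' : ℕ):ℤ) := by exact_mod_cast Nat.mul_div_le _ _
  have h2 := Int.mul_ediv_self_le (x := -(B':ℤ) - 1 - v) h0.ne'
  have h3 : (((B + B')/q : ℕ):ℤ) + (-(B':ℤ) - 1 - v) / q ≤ ((B:ℤ) - v) / q := by
    rw [Int.le_ediv_iff_mul_le h0]
    push_cast at h1 ⊢
    nlinarith
  linarith

lemma cnt_ge (n q : ℕ) (hq : 0 < q) (v : ℤ) : phiq n q ≤ ((idx n).filter fun i => (q:ℤ) ∣ v - i.2).card := by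
  have e : ((idx n).filter fun i => (q:ℤ) ∣ v - i.2).card =
      ((Finset.Icc (-((13*n : ℕ):ℤ)) ((13*n:ℕ):ℤ)).filter fun i => (q:ℤ) ∣ v - i).card +
      (((Finset.Icc (-((11*n : ℕ):ℤ)) ((11*n:ℕ):ℤ)).filter fun i => (q:ℤ) ∣ v - i).card +
      ((Finset.Icc (-((9*n : ℕ):ℤ)) ((9*n:ℕ):ℤ)).filter fun i => (q:ℤ) ∣ v - i).card) := by
    simp only [Finset.card_filter]
    unfold idx
    rw [Finset.sum_sigma, Finset.sum_insert (by simp), Finset.sum_insert (by simp), Finset.sum_singleton]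
  have c1 := cnt_one q (13*n) hq v
  have c2 := cnt_one q (11*n) hq v
  have c3 := cnt_one q (9*n) hq v
  have k := fun B B' => fl_ge q B B' hq v
  have k11 := k (13*n) (13*n)
  have k22 := k (11*n) (11*n)
  have k33 := k (9*n) (9*n)
  have k12 := k (13*n) (11*n)
  have k21 := k (11*n) (13*n)
  have k13 := k (13*n) (9*n)
  have k31 := k (9*n) (13*n)
  have k23 := k (11*n) (9*n)
  have k32 := k (9*n) (11*n)
  rw [show 13*n+13*n = 26*n by ring] at k11
  rw [show 11*n+11*n = 22*n by ring] at k22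
  rw [show 9*n+9*n = 18*n by ring] at k33
  rw [show 13*n+11*n = 24*n by ring] at k12
  rw [show 11*n+13*n = 24*n by ring] at k21
  rw [show 13*n+9*n = 22*n by ring] at k13
  rw [show 9*n+13*n = 22*n by ring] at k31
  rw [show 11*n+9*n = 20*n by ring] at k23
  rw [show 9*n+11*n = 20*n by ring] at k32
  rw [e]
  unfold phiq
  generalize 26*n/q = x26 at *
  generalize 24*n/q = x24 at *
  generalize 22*n/q = x22 at *
  generalize 20*n/q = x20 at *
  generalize 18*n/q = x18 at *
  generalize ((Finset.Icc (-((13*n : ℕ):ℤ)) ((13*n:ℕ):ℤ)).filter fun i => (q:ℤ) ∣ v - i).card = y1 at *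
  generalize ((Finset.Icc (-((11*n : ℕ):ℤ)) ((11*n:ℕ):ℤ)).filter fun i => (q:ℤ) ∣ v - i).card = y2 at *
  generalize ((Finset.Icc (-((9*n : ℕ):ℤ)) ((9*n:ℕ):ℤ)).filter fun i => (q:ℤ) ∣ v - i).card = y3 at *
  clear e k
  refine max_le ?_ (max_le ?_ (max_le ?_ ?_)) <;> zify <;> linarith

lemma gg_dvd_T (n : ℕ) (v : ℤ) (T : Finset ((_ : ℕ) × ℤ)) (hT : T ⊆ idx n) (hc : (idx n).card ≤ T.card + 2) :
    (gg n : ℤ) ∣ ∏ i ∈ T, (v - i.2) := by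
  unfold gg
  push_cast
  apply Finset.prod_dvd_of_coprime
  · intro p hp q hq hpq
    have hp' := Nat.prime_of_mem_primesLE hp
    have hq' := Nat.prime_of_mem_primesLE hq
    apply IsCoprime.pow
    exact Nat.isCoprime_iff_coprime.2 ((Nat.coprime_primes hp' hq').2 hpq)
  · intro p hp
    have hp' := Nat.prime_of_mem_primesLE hp
    apply pow_dvd_prod_aux
    intro l _
    have h1 := cnt_ge n (p^l) (pow_pos hp'.pos _) v
    have h2 : (idx n).filter (fun i => ((p^l : ℕ):ℤ) ∣ v - i.2) ⊆ T.filter (fun i => ((p^l : ℕ):ℤ) ∣ v - i.2) ∪ (idx n \ T) := by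
      intro i hi
      simp only [Finset.mem_union, Finset.mem_filter, Finset.mem_sdiff] at hi ⊢
      tauto
    have h3 := (Finset.card_le_card h2).trans (Finset.card_union_le _ _)
    have h4 : (idx n \ T).card ≤ 2 := by rw [Finset.card_sdiff_of_subset hT]; omega
    omega

lemma gg_dvd (n : ℕ) (v : ℤ) (k : ℕ) (hk : k ≤ 2) : (gg n : ℤ) ∣ (derivative^[k] (RZ n)).eval v := by
  unfold RZ
  apply dvd_derivs
  intro T hT hc
  exact gg_dvd_T n v T hT (by omega)

lemma gg_dvd_f (n : ℕ) (v : ℤ) (u : ℤ[X]) : (gg n : ℤ) ∣ (RZ n * u).eval v ∧ (gg n : ℤ) ∣ (derivative (RZ n * u)).eval v ∧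
    (gg n : ℤ) ∣ (derivative (derivative (RZ n * u))).eval v := by
  have h0 := gg_dvd n v 0 (by norm_num)
  have h1 := gg_dvd n v 1 (by norm_num)
  have h2 := gg_dvd n v 2 (by norm_num)
  simp only [Function.iterate_succ, Function.iterate_zero, Function.comp, id] at h0 h1 h2
  simp only [derivative_mul, derivative_add, eval_add, eval_mul]
  exact ⟨h0.mul_right _, (h1.mul_right _).add (h0.mul_right _), ((h2.mul_right _).add (h1.mul_right _)).add ((h1.mul_right _).add (h0.mul_right _))⟩
end

section
open Filter Topology Finset

def segs : List (ℕ × ℕ) := [(2145,2340),(2340,2860),(4290,4680),(4680,5720),(6435,7020),(7020,7920),(7920,8580),(8580,9360),(9360,9900),(10296,11440),(11440,11700),(11700,11880),(12870,13860),(13860,14040),(14040,14300),(15015,15840),(15840,16380),(16380,17160),(17160,17820),(18018,18720),(18720,19800),(20592,21060),(21060,21780),(23166,23400),(23400,23760),(27885,28080),(28080,28600),(30030,30420),(30420,31460),(32175,32760),(32760,33660),(33660,34320),(34320,35100),(35100,35640),(36036,37180),(37180,37440),(37440,37620),(38610,39600),(39600,39780),(39780,40040),(40755,41580),(41580,4212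0),(42120,42900),(42900,43560),(43758,44460),(44460,45540),(46332,46800),(46800,47520),(48906,49140),(49140,49500)]

lemma segs_chk : ∀ s ∈ segs, 2145 ≤ s.1 ∧ s.1 ≤ s.2 ∧ s.2 ≤ 51480 ∧ (s.2-1)/1980+(s.2-1)/2340+(s.2-1)/2860+1 ≤
    max (2*(s.1/2145)+s.1/2860) (max (3*(s.1/2340)) (2*(s.1/2574)+s.1/1980)) := by
  decide +kernel

lemma segs_pw : segs.Pairwise (fun s t => s.2 ≤ t.1) := by decide +kernel

def ind (s : ℕ × ℕ) (k y : ℕ) : ℕ := if s.1 + 51480 * k ≤ y ∧ y < s.2 + 51480 * k then 1 else 0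

lemma cnt_zero (k y : ℕ) (l : List (ℕ × ℕ)) (h : ∀ s ∈ l, ¬ (s.1 + 51480 * k ≤ y ∧ y < s.2 + 51480 * k)) :
    (l.map fun s => ind s k y).sum = 0 := by
  induction l with
  | nil => rfl
  | cons a l ih =>
    rw [List.map_cons, List.sum_cons, ih fun s hs => h s (List.mem_cons_of_mem _ hs)]
    have := h a List.mem_cons_self
    simp [ind, this]

lemma cnt_le (k y : ℕ) (l : List (ℕ × ℕ)) (h : l.Pairwise (fun s t => s.2 ≤ t.1)) :
    (l.map fun s => ind s k y).sum ≤ 1 := by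
  induction l with
  | nil => simp
  | cons a l ih =>
    rw [List.pairwise_cons] at h
    rw [List.map_cons, List.sum_cons]
    by_cases ha : a.1 + 51480 * k ≤ y ∧ y < a.2 + 51480 * k
    · rw [cnt_zero k y l]
      · unfold ind; split_ifs <;> omega
      · intro s hs
        have := h.1 s hs
        omega
    · have := ih h.2
      simp only [ind, ha, if_false]
      simpa [ind] using this

lemma cnt_all (K y : ℕ) : (∑ k ∈ range K, (segs.map fun s => ind s k y).sum) ≤
    (segs.map fun s => ind s (y/51480) y).sum := by
  have : ∀ k ∈ range K, k ≠ y/51480 → (segs.map fun s => ind s k y).sum = 0 := by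
    intro k _ hk
    apply cnt_zero
    intro s hs
    have := segs_chk s hs
    omega
  by_cases hK : y/51480 ∈ range K
  · rw [Finset.sum_eq_single_of_mem _ hK this]
  · rw [Finset.sum_eq_zero]
    · exact Nat.zero_le _
    · intro k hk
      exact this k hk (fun h => hK (h ▸ hk))

lemma phi_y (n p : ℕ) (hp : 0 < p) : 26*n/p = (51480*n/p)/1980 ∧ 24*n/p = (51480*n/p)/2145 ∧ 22*n/p = (51480*n/p)/2340
    ∧ 20*n/p = (51480*n/p)/2574 ∧ 18*n/p = (51480*n/p)/2860 := by
  refine ⟨?_, ?_, ?_, ?_, ?_⟩ <;>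
  · rw [Nat.div_div_eq_div_mul, mul_comm p, ← Nat.div_div_eq_div_mul]
    congr 1
    omega

lemma e_le (n p K : ℕ) (hp : 0 < p) (hpn : p ≤ 26*n) :
    (26*n/p+22*n/p+18*n/p) - (phiq n p - 2) + (∑ k ∈ range K, (segs.map fun s => ind s k (51480*n/p)).sum)
     + (if 51480*n/p < 2145 then 1 else 0) ≤ 2 := by
  have h1 := cnt_all K (51480*n/p)
  have hy : 1980 ≤ 51480*n/p := by
    rw [Nat.le_div_iff_mul_le hp]; omega
  obtain ⟨a1, a2, a3, a4, a5⟩ := phi_y n p hp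
  unfold phiq
  rw [a1, a2, a3, a4, a5]
  set y := 51480*n/p
  by_cases hy2 : y < 2145
  · rw [cnt_zero] at h1
    · rw [if_pos hy2]
      omega
    · intro s hs
      have := segs_chk s hs
      omega
  rw [if_neg hy2]
  by_cases hc : ∃ s ∈ segs, (s.1 + 51480 * (y/51480) ≤ y ∧ y < s.2 + 51480 * (y/51480))
  · obtain ⟨s, hs, hs1, hs2⟩ := hc
    have h2 := cnt_le (y/51480) y segs segs_pw
    obtain ⟨b1, b2, b3, b4⟩ := segs_chk s hs
    have b5 : (y / 1980 + y / 2340 + y / 2860) + 1 ≤ max (2*(y/2145)+y/2860) (max (3*(y/2340)) (2*(y/2574)+y/1980)) := by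
      set k := y/51480
      have c1 : y/1980 ≤ 26 * k + (s.2-1)/1980 := by omega
      have c2 : y/2340 ≤ 22 * k + (s.2-1)/2340 := by omega
      have c3 : y/2860 ≤ 18 * k + (s.2-1)/2860 := by omega
      have d1 : 24 * k + s.1/2145 ≤ y/2145 := by omega
      have d2 : 18 * k + s.1/2860 ≤ y/2860 := by omega
      have d3 : 22 * k + s.1/2340 ≤ y/2340 := by omega
      have d4 : 20 * k + s.1/2574 ≤ y/2574 := by omega
      have d5 : 26 * k + s.1/1980 ≤ y/1980 := by omega
      generalize y/1980 = x1 at *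
      generalize y/2340 = x2 at *
      generalize y/2860 = x3 at *
      generalize y/2145 = x4 at *
      generalize y/2574 = x5 at *
      generalize (s.2-1)/1980 = z1 at *
      generalize (s.2-1)/2340 = z2 at *
      generalize (s.2-1)/2860 = z3 at *
      generalize s.1/1980 = w1 at *
      generalize s.1/2340 = w2 at *
      generalize s.1/2860 = w3 at *
      generalize s.1/2145 = w4 at *
      generalize s.1/2574 = w5 at *
      clear h1 h2 hy hy2 hs1 hs2 a1 a2 a3 a4 a5 b1 b2 b3
      rcases le_max_iff.1 b4 with h | h
      · exact le_max_of_le_left (by omega)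
      rcases le_max_iff.1 h with h | h
      · exact le_max_of_le_right (le_max_of_le_left (by omega))
      · exact le_max_of_le_right (le_max_of_le_right (by omega))
    have b6 := le_max_right (y / 1980 + y / 2340 + y / 2860) (max (2*(y/2145)+y/2860) (max (3*(y/2340)) (2*(y/2574)+y/1980)))
    omega
  · rw [cnt_zero] at h1
    · omega
    · intro s hs hh
      exact hc ⟨s, hs, hh⟩
end

section
open Filter Topology Finset

def WW (n : ℕ) : ℕ := (26*n).factorial * (22*n).factorial * (18*n).factorial

lemma log_W_eq (n : ℕ) : Real.log (WW n) = ∑ p ∈ Nat.primesLE (26*n),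
    ((∑ l ∈ Ico 1 (Nat.log p (26*n)+1), (26*n/p^l+22*n/p^l+18*n/p^l) : ℕ):ℝ) * Real.log p := by
  have h : ∀ m ≤ 26*n, Real.log (m.factorial:ℝ) = ∑ p ∈ Nat.primesLE (26*n),
    ((∑ l ∈ Ico 1 (Nat.log p (26*n)+1), (m/p^l) : ℕ):ℝ) * Real.log p := by
    intro m hm
    rw [Real.log_nat_eq_sum_factorization, Finsupp.sum_of_support_subset (s := Nat.primesLE (26*n))]
    · apply Finset.sum_congr rfl
      intro p hp
      rw [Nat.mem_primesLE] at hp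
      rw [Nat.factorization_factorial hp.2]
      exact Nat.lt_succ_of_le (Nat.log_mono_right hm)
    · intro p hp
      rw [Nat.support_factorization, Nat.mem_primeFactors] at hp
      rw [Nat.mem_primesLE]
      exact ⟨((hp.1.dvd_factorial).1 hp.2.1).trans hm, hp.1⟩
    · intro i _; simp
  unfold WW
  push_cast
  rw [Real.log_mul (by positivity) (by positivity), Real.log_mul (by positivity) (by positivity), h _ le_rfl,
    h _ (by omega), h _ (by omega), ← Finset.sum_add_distrib, ← Finset.sum_add_distrib]
  apply Finset.sum_congr rfl
  intro p _
  simp only [Finset.sum_add_distrib]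
  push_cast
  ring

lemma log_g_eq (n : ℕ) : Real.log (gg n) = ∑ p ∈ Nat.primesLE (26*n),
    ((∑ l ∈ Ico 1 (Nat.log p (26*n)+1), (phiq n (p^l) - 2) : ℕ):ℝ) * Real.log p := by
  unfold gg
  push_cast
  rw [Real.log_prod]
  · apply Finset.sum_congr rfl
    intro p _
    rw [Real.log_pow]
    push_cast
    ring
  · intro p hp
    rw [Nat.mem_primesLE] at hp
    have := hp.2.pos
    positivity

lemma theta_ind (n a : ℕ) (ha : 1980 ≤ a) : Chebyshev.theta ((51480*n/a : ℕ):ℝ) =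
    ∑ p ∈ Nat.primesLE (26*n), (if a ≤ 51480*n/p then (1:ℝ) else 0) * Real.log p := by
  rw [Chebyshev.theta_eq_sum_primesLE_log]
  have : Nat.primesLE (51480*n/a) = (Nat.primesLE (26*n)).filter fun p => a ≤ 51480*n/p := by
    ext p
    rw [Finset.mem_filter, Nat.mem_primesLE, Nat.mem_primesLE]
    constructor
    · rintro ⟨h1, h2⟩
      have h3 : p * a ≤ 51480*n := (Nat.le_div_iff_mul_le (by omega)).1 h1
      refine ⟨⟨?_, h2⟩, ?_⟩
      · have : 1980 * p ≤ p * a := by rw [mul_comm]; exact Nat.mul_le_mul_left _ ha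
        omega
      · rw [Nat.le_div_iff_mul_le h2.pos, mul_comm]; exact h3
    · rintro ⟨⟨_, h2⟩, h3⟩
      refine ⟨?_, h2⟩
      rw [Nat.le_div_iff_mul_le h2.pos] at h3
      rw [Nat.le_div_iff_mul_le (by omega), mul_comm]; exact h3
  rw [this, Finset.sum_filter]
  apply Finset.sum_congr rfl
  intro p _
  split_ifs <;> simp

noncomputable def th (n a : ℕ) : ℝ := Chebyshev.theta ((51480*n/a : ℕ):ℝ)

noncomputable def FF (K n : ℕ) : ℝ := th n 1980 + th n 2145 - ∑ k ∈ range K, (segs.map fun s => th n (s.1 + 51480*k) - th n (s.2+51480*k)).sum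

lemma sum_list {ι : Type*} (A : Finset ι) (l : List (ℕ × ℕ)) (f : ℕ × ℕ → ι → ℝ) :
    (l.map fun s => ∑ p ∈ A, f s p).sum = ∑ p ∈ A, (l.map fun s => f s p).sum := by
  induction l with
  | nil => simp
  | cons a l ih => simp [ih, Finset.sum_add_distrib]

lemma list_mul (l : List (ℕ × ℕ)) (f : ℕ × ℕ → ℝ) (c : ℝ) :
    (l.map fun s => f s * c).sum = (l.map f).sum * c := by
  induction l with
  | nil => simp
  | cons a l ih => simp [ih, add_mul]

lemma list_congr (l : List (ℕ × ℕ)) (f g : ℕ × ℕ → ℝ) (h : ∀ s ∈ l, f s = g s) :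
    (l.map f).sum = (l.map g).sum := by
  rw [List.map_congr_left h]

lemma list_cast (l : List (ℕ × ℕ)) (f : ℕ × ℕ → ℕ) : (((l.map f).sum : ℕ):ℝ) = (l.map fun s => (f s:ℝ)).sum := by
  induction l with
  | nil => simp
  | cons a l ih => simp [ih]

lemma FF_eq (K n : ℕ) : FF K n = ∑ p ∈ Nat.primesLE (26*n),
    (2 - (if 51480*n/p < 2145 then (1:ℝ) else 0) - ((∑ k ∈ range K, (segs.map fun s => ind s k (51480*n/p)).sum : ℕ):ℝ)) * Real.log p := by
  unfold FF
  have h1 : ∀ k ∈ range K, (segs.map fun s => th n (s.1 + 51480*k) - th n (s.2+51480*k)).sum =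
      ∑ p ∈ Nat.primesLE (26*n), (((segs.map fun s => ind s k (51480*n/p)).sum : ℕ):ℝ) * Real.log p := by
    intro k _
    simp_rw [list_cast, ← list_mul]
    rw [← sum_list]
    apply list_congr
    intro s hs
    have := segs_chk s hs
    rw [th, th, theta_ind _ _ (by omega), theta_ind _ _ (by omega), ← Finset.sum_sub_distrib]
    apply Finset.sum_congr rfl
    intro p _
    rw [← sub_mul]
    congr 1
    unfold ind
    split_ifs <;> first | omega | norm_num
  rw [Finset.sum_congr rfl h1, Finset.sum_comm, th, th, theta_ind _ _ (by omega), theta_ind _ _ (by omega), ← Finset.sum_add_distrib, ← Finset.sum_sub_distrib]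
  apply Finset.sum_congr rfl
  intro p hp
  rw [Nat.mem_primesLE] at hp
  have hy : 1980 ≤ 51480*n/p := by
    rw [Nat.le_div_iff_mul_le hp.2.pos]; omega
  rw [← Finset.sum_mul, ← add_mul, ← sub_mul, if_pos hy]
  push_cast
  congr 1
  split_ifs <;> first | omega | ring

lemma logW_sub_le (K n : ℕ) : Real.log (WW n) - Real.log (gg n) ≤ FF K n + 2 * (Chebyshev.psi (26*n:ℕ) - Chebyshev.theta (26*n:ℕ)) := by
  rw [log_W_eq, log_g_eq, FF_eq, Chebyshev.psi_eq_sum_mul_log_prime, Chebyshev.theta_eq_sum_primesLE_log,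
    ← Finset.sum_sub_distrib, ← Finset.sum_sub_distrib, Finset.mul_sum, ← Finset.sum_add_distrib]
  apply Finset.sum_le_sum
  intro p hp
  rw [Nat.mem_primesLE] at hp
  have hl : 0 ≤ Real.log p := Real.log_natCast_nonneg p
  have hn : 1 ≤ Nat.log p (26*n) := by
    apply Nat.le_log_of_pow_le hp.2.one_lt; simpa using hp.1
  have he := e_le n p K hp.2.pos hp.1
  set I := ∑ k ∈ range K, (segs.map fun s => ind s k (51480*n/p)).sum
  set J := if 51480*n/p < 2145 then 1 else 0 with hJ
  have hJ' : (if 51480*n/p < 2145 then (1:ℝ) else 0) = (J:ℝ) := by rw [hJ]; split_ifs <;> simp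
  rw [hJ']
  have key : (∑ l ∈ Ico 1 (Nat.log p (26*n)+1), (26*n/p^l+22*n/p^l+18*n/p^l)) + I + J + 2 ≤
    (∑ l ∈ Ico 1 (Nat.log p (26*n)+1), (phiq n (p^l) - 2)) + 2 + 2 * Nat.log p (26*n) := by
    rw [Finset.sum_eq_sum_Ico_succ_bot (a := 1) (b := Nat.log p (26*n)+1) (by omega), Finset.sum_eq_sum_Ico_succ_bot (a := 1) (b := Nat.log p (26*n)+1) (by omega)]
    have : (∑ l ∈ Ico (1+1) (Nat.log p (26*n)+1), (26*n/p^l+22*n/p^l+18*n/p^l)) ≤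
      (∑ l ∈ Ico (1+1) (Nat.log p (26*n)+1), (phiq n (p^l) - 2 + 2)) := by
      apply Finset.sum_le_sum
      intro l _
      have : 26*n/p^l+22*n/p^l+18*n/p^l ≤ phiq n (p^l) := le_max_left _ _
      omega
    rw [Finset.sum_add_distrib (f := fun l => phiq n (p^l) - 2), Finset.sum_const, Nat.card_Ico, smul_eq_mul] at this
    rw [pow_one]
    omega
  have key' : ((∑ l ∈ Ico 1 (Nat.log p (26*n)+1), (26*n/p^l+22*n/p^l+18*n/p^l) : ℕ):ℝ) + I + J + 2 ≤
    ((∑ l ∈ Ico 1 (Nat.log p (26*n)+1), (phiq n (p^l) - 2) : ℕ):ℝ) + 2 + 2 * Nat.log p (26*n) := by exact_mod_cast key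
  rw [← sub_mul, ← sub_one_mul, ← mul_assoc, ← add_mul]
  apply mul_le_mul_of_nonneg_right _ hl
  linarith
end

section
open Filter Topology Finset

lemma th_lim (a : ℕ) (ha : 0 < a) : Tendsto (fun n : ℕ => th n a / n) atTop (𝓝 (51480/a)) := by
  have h1 : Tendsto (fun n : ℕ => (51480/a:ℝ) * n) atTop atTop :=
    Tendsto.const_mul_atTop (by positivity) tendsto_natCast_atTop_atTop
  have h2 := (PNT_theta.comp h1).const_mul (51480/a:ℝ)
  rw [mul_one] at h2
  refine h2.congr' ?_
  filter_upwards [eventually_gt_atTop 0] with n hn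
  have : th n a = Chebyshev.theta ((51480/a:ℝ)*n) := by
    rw [th, Chebyshev.theta_eq_theta_coe_floor ((51480/a:ℝ)*n)]
    congr 2
    rw [← Nat.floor_div_eq_div (K := ℝ)]
    congr 1
    push_cast; ring
  rw [this]
  simp only [Function.comp]
  field_simp

noncomputable def EK (K : ℕ) : ℝ := 50 - ∑ k ∈ range K, (segs.map fun s => (51480/(s.1 + 51480*k:ℕ) - 51480/(s.2+51480*k:ℕ) : ℝ)).sum

lemma list_lim (l : List (ℕ × ℕ)) (f : ℕ × ℕ → ℕ → ℝ) (g : ℕ × ℕ → ℝ) (h : ∀ s ∈ l, Tendsto (f s) atTop (𝓝 (g s))) :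
    Tendsto (fun n => (l.map fun s => f s n).sum) atTop (𝓝 (l.map g).sum) := by
  induction l with
  | nil => simp
  | cons a l ih =>
    simp only [List.map_cons, List.sum_cons]
    exact (h a List.mem_cons_self).add (ih fun s hs => h s (List.mem_cons_of_mem _ hs))

lemma FF_lim (K : ℕ) : Tendsto (fun n : ℕ => FF K n / n) atTop (𝓝 (EK K)) := by
  have h : Tendsto (fun n : ℕ => th n 1980 / n + th n 2145 / n - ∑ k ∈ range K, (segs.map fun s => th n (s.1 + 51480*k) / n - th n (s.2+51480*k) / n).sum) atTop
      (𝓝 ((51480/(1980:ℕ) + 51480/(2145:ℕ)) - ∑ k ∈ range K, (segs.map fun s => (51480/(s.1 + 51480*k:ℕ) - 51480/(s.2+51480*k:ℕ) : ℝ)).sum)) := by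
    apply Tendsto.sub
    · exact (th_lim _ (by norm_num)).add (th_lim _ (by norm_num))
    · apply tendsto_finsetSum
      intro k _
      apply list_lim
      intro s hs
      have := segs_chk s hs
      exact (th_lim _ (by omega)).sub (th_lim _ (by omega))
  convert h using 1
  · funext n
    unfold FF
    rw [sub_div, add_div, Finset.sum_div]
    congr 1
    apply Finset.sum_congr rfl
    intro k _
    rw [div_eq_mul_inv, ← list_mul]
    apply list_congr
    intro s _
    ring
  · unfold EK; norm_num

lemma psi_theta_lim : Tendsto (fun n : ℕ => 2 * (Chebyshev.psi (26*n:ℕ) - Chebyshev.theta (26*n:ℕ)) / n) atTop (𝓝 0) := by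
  have h1 : Tendsto (fun n : ℕ => ((26 * n : ℕ):ℝ)) atTop atTop :=
    tendsto_natCast_atTop_atTop.comp (tendsto_id.const_mul_atTop' (by norm_num))
  have h2 := (((PNT_psi.comp h1).sub (PNT_theta.comp h1)).const_mul (52:ℝ))
  rw [sub_self, mul_zero] at h2
  refine h2.congr' ?_
  filter_upwards [eventually_gt_atTop 0] with n hn
  simp only [Function.comp]
  push_cast
  field_simp
  ring

def numhead : ℕ := ((List.range 20).map fun k => (segs.map fun s => 51480*10^10*(s.2-s.1)/((s.1+51480*k)*(s.2+51480*k))).sum).sum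
def numtail : ℕ := (segs.map fun s => 4*10^10*(s.2-s.1)/(78*51480+2*(s.1+s.2)+1287)).sum

lemma num_chk : 149884940000 ≤ numhead + numtail := by decide +kernel

lemma list_le (l : List (ℕ × ℕ)) (f g : ℕ × ℕ → ℝ) (h : ∀ s ∈ l, f s ≤ g s) :
    (l.map f).sum ≤ (l.map g).sum := List.sum_le_sum h

lemma seg_term (s : ℕ × ℕ) (hs : s ∈ segs) (k : ℕ) : (51480/(s.1 + 51480*k:ℕ) - 51480/(s.2+51480*k:ℕ) : ℝ) =
    51480*(s.2-s.1) / ((s.1+51480*k)*(s.2+51480*k)) := by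
  have := segs_chk s hs
  have h1 : (0:ℝ) < s.1 := by exact_mod_cast (by omega : 0 < s.1)
  have h2 : (0:ℝ) < s.2 := by exact_mod_cast (by omega : 0 < s.2)
  push_cast
  field_simp
  ring

lemma head_le : (numhead:ℝ) / 10^10 ≤ ∑ k ∈ range 20, (segs.map fun s => (51480/(s.1 + 51480*k:ℕ) - 51480/(s.2+51480*k:ℕ) : ℝ)).sum := by
  have e : numhead = ∑ k ∈ range 20, (segs.map fun s => 51480*10^10*(s.2-s.1)/((s.1+51480*k)*(s.2+51480*k))).sum := by
    unfold numhead
    rfl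
  rw [e, Nat.cast_sum, Finset.sum_div]
  apply Finset.sum_le_sum
  intro k _
  rw [list_cast, div_eq_mul_inv, ← list_mul]
  apply list_le
  intro s hs
  rw [seg_term s hs]
  have h := segs_chk s hs
  refine (mul_le_mul_of_nonneg_right Nat.cast_div_le (by positivity)).trans ?_
  push_cast [Nat.cast_sub h.2.1]
  apply le_of_eq
  field_simp
  ring

noncomputable def uu (s : ℕ × ℕ) (k : ℕ) : ℝ := 4*(s.2-s.1)/(4*51480*k-2*51480+2*(s.1+s.2)+1287)

lemma uu_le (s : ℕ × ℕ) (hs : s ∈ segs) (k : ℕ) (hk : 20 ≤ k) :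
    uu s k - uu s (k+1) ≤ (51480/(s.1 + 51480*k:ℕ) - 51480/(s.2+51480*k:ℕ) : ℝ) := by
  rw [seg_term s hs]
  have h := segs_chk s hs
  have h1 : (2145:ℝ) ≤ s.1 := by exact_mod_cast h.1
  have h2 : (s.1:ℝ) ≤ s.2 := by exact_mod_cast h.2.1
  have h3 : (20:ℝ) ≤ k := by exact_mod_cast hk
  unfold uu
  push_cast
  generalize (s.1:ℝ) = a at *
  generalize (s.2:ℝ) = b at *
  generalize (k:ℝ) = κ at *
  have p1 : 0 < 4*51480*κ-2*51480+2*(a+b)+1287 := by linarith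
  have p2 : 0 < 4*51480*(κ+1)-2*51480+2*(a+b)+1287 := by linarith
  rw [div_sub_div _ _ p1.ne' p2.ne', div_le_div_iff₀ (mul_pos p1 p2) (mul_pos (by linarith) (by linarith))]
  have : 4 * (b - a) * (4*51480*(κ+1)-2*51480+2*(a+b)+1287) - (4*51480*κ-2*51480+2*(a+b)+1287) * (4 * (b-a)) = (b-a)*(16*51480) := by ring
  rw [this]
  have key : 16*((a+51480*κ)*(b+51480*κ)) ≤ (4*51480*κ-2*51480+2*(a+b)+1287) * (4*51480*(κ+1)-2*51480+2*(a+b)+1287) := by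
    nlinarith [sq_nonneg (a-b)]
  have := mul_le_mul_of_nonneg_left key (by nlinarith : 0 ≤ (b-a)*51480)
  linarith

lemma tail_le (K : ℕ) : (segs.map fun s => uu s 20).sum - (segs.map fun s => uu s (K+20)).sum ≤
    ∑ k ∈ range K, (segs.map fun s => (51480/(s.1 + 51480*(k+20):ℕ) - 51480/(s.2+51480*(k+20):ℕ) : ℝ)).sum := by
  induction K with
  | zero => simp
  | succ K ih =>
    rw [Finset.sum_range_succ]
    have := list_le segs (fun s => uu s (K+20) + (-1) * uu s (K+20+1)) (fun s => (51480/(s.1 + 51480*(K+20):ℕ) - 51480/(s.2+51480*(K+20):ℕ) : ℝ)) (fun s hs => by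
      have := uu_le s hs (K+20) (by omega)
      push_cast at this ⊢
      linarith)
    rw [List.sum_map_add] at this
    simp_rw [mul_comm (-1:ℝ)] at this
    rw [list_mul] at this
    have e : K + 1 + 20 = K+20+1 := by ring
    rw [e]
    linarith

lemma numtail_le : (numtail:ℝ)/10^10 ≤ (segs.map fun s => uu s 20).sum := by
  unfold numtail
  rw [list_cast, div_eq_mul_inv, ← list_mul]
  apply list_le
  intro s hs
  have h := segs_chk s hs
  refine (mul_le_mul_of_nonneg_right Nat.cast_div_le (by positivity)).trans ?_
  unfold uu
  push_cast [Nat.cast_sub h.2.1]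
  apply le_of_eq
  have : (4*51480*20-2*51480+2*((s.1:ℝ)+s.2)+1287) = (78*51480+2*((s.1:ℝ)+s.2)+1287) := by ring
  rw [this]
  field_simp
  ring

lemma uu_lim : Tendsto (fun K : ℕ => (segs.map fun s => uu s (K+20)).sum) atTop (𝓝 0) := by
  have := list_lim segs (fun s K => uu s (K+20)) (fun _ => 0) (by
    intro s _
    unfold uu
    apply Tendsto.const_div_atTop
    have : Tendsto (fun K : ℕ => (4*51480:ℝ) * ((K+20:ℕ):ℝ)) atTop atTop :=
      Tendsto.const_mul_atTop (by norm_num) (tendsto_natCast_atTop_atTop.comp (tendsto_add_atTop_nat 20))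
    have := tendsto_atTop_add_const_right atTop (-2*51480+2*((s.1:ℝ)+s.2)+1287) this
    refine this.congr fun K => ?_
    ring)
  convert this using 2
  symm
  have := list_mul segs (fun _ => 0) 0
  simpa using this

lemma EK_small : ∃ K, EK K ≤ 35.011516 := by
  obtain ⟨K, hK⟩ := (uu_lim.eventually (gt_mem_nhds (by norm_num : (0:ℝ) < 0.000005))).exists
  refine ⟨20+K, ?_⟩
  unfold EK
  rw [Finset.sum_range_add]
  have h1 := head_le
  have h2 := tail_le K
  have h3 := numtail_le
  have h4 : (149884940000:ℝ) ≤ numhead + numtail := by exact_mod_cast num_chk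
  simp_rw [add_comm 20]
  norm_num at *
  linarith

theorem logWg : ∀ᶠ n : ℕ in atTop, Real.log (WW n) - Real.log (gg n) ≤ 35.01152 * n := by
  obtain ⟨K, hK⟩ := EK_small
  have h := (FF_lim K).add psi_theta_lim
  rw [add_zero] at h
  filter_upwards [h.eventually (gt_mem_nhds (by linarith : EK K < 35.01152)), eventually_gt_atTop 0] with n h1 hn
  have := logW_sub_le K n
  have hn' : (0:ℝ) < n := by exact_mod_cast hn
  rw [← add_div, div_lt_iff₀ hn'] at h1
  linarith
end

section
open MeasureTheory Set Complex

noncomputable def sg (t : ℝ) : ℝ := 1 / (1 + Real.exp (-(2*Real.pi*t)))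

lemma sg_image : sg '' univ = Ioo 0 1 := by
  ext x
  constructor
  · rintro ⟨t, -, rfl⟩
    unfold sg
    have := Real.exp_pos (-(2*Real.pi*t))
    exact ⟨by positivity, by rw [div_lt_one (by positivity)]; linarith⟩
  · rintro ⟨h0, h1⟩
    refine ⟨- Real.log ((1-x)/x) / (2*Real.pi), mem_univ _, ?_⟩
    unfold sg
    have : -(2*Real.pi*(- Real.log ((1-x)/x) / (2*Real.pi))) = Real.log ((1-x)/x) := by
      have := Real.pi_pos
      field_simp
    rw [this, Real.exp_log (div_pos (by linarith) h0)]
    field_simp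
    ring

lemma sg_deriv (t : ℝ) : HasDerivAt sg (Real.pi/2/Real.cosh (Real.pi*t)^2) t := by
  unfold sg
  have hp := Real.exp_pos (-(2*Real.pi*t))
  have h1 : HasDerivAt (fun t : ℝ => 1 + Real.exp (-(2*Real.pi*t))) (Real.exp (-(2*Real.pi*t)) * (-(2*Real.pi*1))) t :=
    ((((hasDerivAt_id t).const_mul (2*Real.pi)).neg).exp).const_add 1
  have h2 := h1.inv (by positivity)
  simp only [one_div]
  refine h2.congr_deriv ?_
  rw [Real.cosh_eq]
  have e1 : Real.exp (-(2*Real.pi*t)) = Real.exp (-(Real.pi*t))^2 := by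
    rw [← Real.exp_nat_mul]; congr 1; push_cast; ring
  have e2 : Real.exp (Real.pi*t) = (Real.exp (-(Real.pi*t)))⁻¹ := by rw [← Real.exp_neg, neg_neg]
  rw [e1, e2]
  have := Real.exp_pos (-(Real.pi*t))
  field_simp

lemma sg_inj : Function.Injective sg := by
  apply StrictMono.injective
  apply strictMono_of_deriv_pos
  intro t
  rw [(sg_deriv t).deriv]
  have := Real.cosh_pos (Real.pi*t)
  have := Real.pi_pos
  positivity

lemma FT_sech (w : ℝ) (hw : w ≠ 0) :
    ∫ t : ℝ, cexp (w * (t * I)) * ((1/Real.cosh (Real.pi*t)^2 : ℝ):ℂ) = ((w / (Real.pi * Real.sinh (w/2)) : ℝ):ℂ) := by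
  have hpi := Real.pi_pos
  set a : ℂ := w * I / (2*Real.pi) with ha
  have hare : a.re = 0 := by
    rw [ha]
    have : w * I / (2*Real.pi) = ((w/(2*Real.pi):ℝ):ℂ) * I := by push_cast; ring
    rw [this, Complex.re_ofReal_mul]; simp
  have ha0 : a ≠ 0 := by
    rw [ha]; simp [hw, hpi.ne']
  have h1 := Complex.Gamma_mul_Gamma_eq_betaIntegral (s := 1 + a) (t := 1 - a) (by simp [hare]) (by simp [hare])
  have e : (1 + a) + (1 - a) = ((1:ℕ):ℂ) + 1 := by push_cast; ring
  rw [e, Complex.Gamma_nat_eq_factorial, add_comm 1 a, Complex.Gamma_add_one a ha0, mul_assoc, Complex.Gamma_mul_Gamma_one_sub] at h1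
  have h2 : betaIntegral (a+1) (1-a) = ∫ t : ℝ, cexp (w * (t * I)) * ((Real.pi/2/Real.cosh (Real.pi*t)^2 : ℝ):ℂ) := by
    unfold betaIntegral
    rw [intervalIntegral.integral_of_le zero_le_one, integral_Ioc_eq_integral_Ioo, ← sg_image,
      integral_image_eq_integral_abs_deriv_smul MeasurableSet.univ (fun t _ => (sg_deriv t).hasDerivWithinAt) sg_inj.injOn,
      Measure.restrict_univ]
    apply integral_congr_ae
    filter_upwards with t
    have hc := Real.cosh_pos (Real.pi*t)
    rw [abs_of_pos (by positivity), Complex.real_smul, mul_comm]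
    congr 1
    have hp := Real.exp_pos (-(2*Real.pi*t))
    have hs : 0 < sg t := by unfold sg; positivity
    have hs1 : 1 - sg t = Real.exp (-(2*Real.pi*t)) * sg t := by unfold sg; field_simp; ring
    have hs1' : (1:ℂ) - (sg t:ℂ) = ((Real.exp (-(2*Real.pi*t)) * sg t : ℝ):ℂ) := by rw [← hs1]; push_cast; rfl
    rw [hs1', add_sub_cancel_right, show (1 - a - 1) = -a by ring, Complex.ofReal_mul, Complex.mul_cpow_ofReal_nonneg hp.le hs.le,
      mul_comm, mul_assoc, ← Complex.cpow_add _ _ (by exact_mod_cast hs.ne'), neg_add_cancel, Complex.cpow_zero, mul_one,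
      Complex.cpow_def_of_ne_zero (by exact_mod_cast hp.ne'), ← Complex.ofReal_log hp.le, Real.log_exp]
    congr 1
    rw [ha]
    have : (Real.pi:ℂ) ≠ 0 := by exact_mod_cast hpi.ne'
    push_cast
    field_simp
  rw [h2] at h1
  have h3 : ∀ t : ℝ, cexp (w * (t * I)) * ((1/Real.cosh (Real.pi*t)^2 : ℝ):ℂ) = (2/Real.pi:ℂ) * (cexp (w * (t * I)) * ((Real.pi/2/Real.cosh (Real.pi*t)^2 : ℝ):ℂ)) := by
    intro t
    have : (Real.pi:ℂ) ≠ 0 := by exact_mod_cast hpi.ne'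
    have : (Complex.cosh (Real.pi*t)) ≠ 0 := by
      have := (Real.cosh_pos (Real.pi*t)).ne'
      exact_mod_cast this
    push_cast
    field_simp
  simp_rw [h3]
  rw [Nat.factorial_one, Nat.cast_one, one_mul] at h1
  rw [integral_const_mul, ← h1]
  have h4 : Complex.sin (Real.pi * a) = Complex.sinh (w/2) * I := by
    rw [← Complex.sin_mul_I]
    congr 1
    rw [ha]
    have : (Real.pi:ℂ) ≠ 0 := by exact_mod_cast hpi.ne'
    field_simp
  rw [h4, ha]
  have : (Real.pi:ℂ) ≠ 0 := by exact_mod_cast hpi.ne'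
  have : Complex.sinh (w/2) ≠ 0 := by
    have : Real.sinh (w/2) ≠ 0 := by simp [hw]
    exact_mod_cast this
  push_cast
  field_simp
end

section
open MeasureTheory Set Complex Filter Topology

lemma poly_exp_bound (c δ : ℝ) (hc : 0 ≤ c) (hδ : 0 < δ) (d : ℕ) : ∃ C, ∀ t : ℝ,
    (c+|t|)^d * Real.exp (-(δ*|t|)) ≤ C * (1+t^2)⁻¹ := by
  refine ⟨(d+2).factorial / δ^(d+2) * Real.exp (δ*(c+1)), fun t => ?_⟩
  rw [← div_eq_mul_inv, le_div_iff₀ (by positivity)]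
  have h0 := abs_nonneg t
  have h1 : (c+|t|)^d * (1+t^2) ≤ (c+1+|t|)^(d+2) := by
    rw [pow_add]
    apply mul_le_mul _ _ (by positivity) (by positivity)
    · apply pow_le_pow_left₀ (by positivity); linarith
    · rw [← sq_abs t]; nlinarith
  have h2 := Real.pow_div_factorial_le_exp (δ*(c+1+|t|)) (by positivity) (d+2)
  rw [mul_pow, div_le_iff₀ (by positivity)] at h2
  have h3 : (c+1+|t|)^(d+2) ≤ Real.exp (δ*(c+1+|t|)) * (d+2).factorial / δ^(d+2) := by
    rw [le_div_iff₀ (by positivity)]; linarith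
  have h4 : Real.exp (δ*(c+1+|t|)) * Real.exp (-(δ*|t|)) = Real.exp (δ*(c+1)) := by
    rw [← Real.exp_add]; congr 1; ring
  calc (c+|t|)^d * Real.exp (-(δ*|t|)) * (1+t^2) = ((c+|t|)^d * (1+t^2)) * Real.exp (-(δ*|t|)) := by ring
    _ ≤ (Real.exp (δ*(c+1+|t|)) * (d+2).factorial / δ^(d+2)) * Real.exp (-(δ*|t|)) :=
      mul_le_mul_of_nonneg_right (h1.trans h3) (Real.exp_pos _).le
    _ = (d+2).factorial / δ^(d+2) * (Real.exp (δ*(c+1+|t|)) * Real.exp (-(δ*|t|))) := by ring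
    _ = _ := by rw [h4]

lemma poly_exp_int (c δ : ℝ) (hc : 0 ≤ c) (hδ : 0 < δ) (d : ℕ) : Integrable fun t : ℝ =>
    (c+|t|)^d * Real.exp (-(δ*|t|)) := by
  obtain ⟨C, hC⟩ := poly_exp_bound c δ hc hδ d
  refine (integrable_inv_one_add_sq.const_mul C).mono' (by fun_prop) ?_
  filter_upwards with t
  rw [Real.norm_of_nonneg (by positivity)]
  exact hC t

lemma inv_cosh_le (t : ℝ) : 1/Real.cosh (Real.pi*t)^2 ≤ 4 * Real.exp (-(2*Real.pi*|t|)) := by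
  have h1 : Real.exp (Real.pi*|t|)/2 ≤ Real.cosh (Real.pi*t) := by
    rw [← Real.cosh_abs, abs_mul, abs_of_pos Real.pi_pos, Real.cosh_eq]
    have := Real.exp_pos (-(Real.pi*|t|))
    linarith
  have h2 : 0 < Real.exp (Real.pi*|t|) := Real.exp_pos _
  have h3 : Real.exp (-(2*Real.pi*|t|)) = 1/(Real.exp (Real.pi*|t|))^2 := by
    rw [← Real.exp_nat_mul, one_div, ← Real.exp_neg]; congr 1; push_cast; ring
  rw [h3, mul_one_div, div_le_div_iff₀ (by have := Real.cosh_pos (Real.pi*t); positivity) (by positivity)]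
  nlinarith

noncomputable def sch (t : ℝ) : ℝ := 1/Real.cosh (Real.pi*t)^2

lemma sch_nonneg (t : ℝ) : 0 ≤ sch t := by unfold sch; positivity

lemma sch_cont : Continuous sch := by
  unfold sch
  refine continuous_const.div (by fun_prop) (fun t => ?_)
  have := Real.cosh_pos (Real.pi*t); positivity

lemma poly_sch_int (c : ℝ) (hc : 0 ≤ c) (d : ℕ) : Integrable fun t : ℝ => (c+|t|)^d * sch t := by
  refine ((poly_exp_int c (2*Real.pi) hc (by have := Real.pi_pos; positivity) d).const_mul 4).mono' ?_ ?_
  · have := sch_cont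
    fun_prop
  filter_upwards with t
  rw [Real.norm_of_nonneg (mul_nonneg (by positivity) (sch_nonneg t))]
  calc (c+|t|)^d * sch t ≤ (c+|t|)^d * (4 * Real.exp (-(2*Real.pi*|t|))) :=
      mul_le_mul_of_nonneg_left (inv_cosh_le t) (by positivity)
    _ = _ := by ring

lemma norm_line (c t : ℝ) (hc : 0 ≤ c) : ‖(c:ℂ) + t * I‖ ≤ c + |t| := by
  refine (norm_add_le _ _).trans ?_
  simp [abs_of_nonneg hc]

noncomputable def AA (c : ℝ) (d : ℕ) (w : ℝ) (t : ℝ) : ℂ := ((c:ℂ) + t * I)^d * cexp (w * ((c:ℂ) + t * I)) * (sch t : ℂ)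

lemma AA_cont (c : ℝ) (d : ℕ) (w : ℝ) : Continuous (AA c d w) := by
  unfold AA
  have := sch_cont
  fun_prop

lemma AA_norm (c : ℝ) (hc : 0 ≤ c) (d : ℕ) (w : ℝ) (hw : w ≤ 0) (t : ℝ) : ‖AA c d w t‖ ≤ (c+|t|)^d * sch t := by
  unfold AA
  rw [norm_mul, norm_mul, norm_pow, Complex.norm_real, Real.norm_of_nonneg (sch_nonneg t), Complex.norm_exp]
  apply mul_le_mul_of_nonneg_right _ (sch_nonneg t)
  have : ((w:ℂ) * ((c:ℂ) + t * I)).re = w * c := by simp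
  rw [this]
  calc _ ≤ (c+|t|)^d * 1 := by
        apply mul_le_mul (pow_le_pow_left₀ (norm_nonneg _) (norm_line c t hc) d) _ (Real.exp_pos _).le (by positivity)
        rw [Real.exp_le_one_iff]
        exact mul_nonpos_of_nonpos_of_nonneg hw hc
    _ = _ := mul_one _

lemma AA_int (c : ℝ) (hc : 0 ≤ c) (d : ℕ) (w : ℝ) (hw : w ≤ 0) : Integrable (AA c d w) := by
  refine (poly_sch_int c hc d).mono' (AA_cont c d w).aestronglyMeasurable ?_
  filter_upwards with t using AA_norm c hc d w hw t

lemma AA_deriv (c : ℝ) (hc : 0 ≤ c) (d : ℕ) (w : ℝ) (hw : w < 0) :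
    HasDerivAt (fun w => ∫ t, AA c d w t) (∫ t, AA c (d+1) w t) w := by
  refine (hasDerivAt_integral_of_dominated_loc_of_deriv_le (F := fun w t => AA c d w t) (F' := fun w t => AA c (d+1) w t) (s := Iio 0) (Iio_mem_nhds hw) ?_ (AA_int c hc d w hw.le)
    (AA_cont c (d+1) w).aestronglyMeasurable ?_ (poly_sch_int c hc (d+1)) ?_).2
  · filter_upwards with x using (AA_cont c d x).aestronglyMeasurable
  · filter_upwards with t
    intro x hx
    exact AA_norm c hc (d+1) x (le_of_lt hx) t
  · filter_upwards with t
    intro x _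
    unfold AA
    have h1 : HasDerivAt (fun x : ℝ => (x:ℂ) * ((c:ℂ) + t * I)) (1 * ((c:ℂ) + t * I)) x :=
      (Complex.ofRealCLM.hasDerivAt (x := x)).mul_const _
    have h2 := (h1.cexp.const_mul (((c:ℂ) + t * I)^d)).mul_const (sch t : ℂ)
    refine h2.congr_deriv ?_
    ring

noncomputable def BB (m d : ℕ) (v : ℕ) (w : ℝ) : ℝ :=
  (d * ((v:ℝ)+m+1)^(d-1) + w * ((v:ℝ)+m+1)^d) * Real.exp (w * ((v:ℝ)+m+1))

lemma pow_exp_summ (m d : ℕ) (w : ℝ) (hw : w < 0) : Summable fun v : ℕ => ((v:ℝ)+m+1)^d * Real.exp (w*((v:ℝ)+m+1)) := by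
  have h := summable_pow_mul_geometric_of_norm_lt_one (R := ℝ) d (r := Real.exp w) (by
    rw [Real.norm_of_nonneg (Real.exp_pos _).le, Real.exp_lt_one_iff]; exact hw)
  have h' := (summable_nat_add_iff (m+1)).2 h
  refine h'.congr fun v => ?_
  rw [← Real.exp_nat_mul]
  push_cast
  ring_nf

lemma BB_summ (m d : ℕ) (w : ℝ) (hw : w < 0) : Summable fun v => BB m d v w := by
  have := ((pow_exp_summ m (d-1) w hw).mul_left (d:ℝ)).add ((pow_exp_summ m d w hw).mul_left w)
  refine this.congr fun v => ?_
  unfold BB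
  ring

lemma BB_deriv (m d : ℕ) (w : ℝ) (hw : w < 0) :
    HasDerivAt (fun w => ∑' v, BB m d v w) (∑' v, BB m (d+1) v w) w := by
  refine hasDerivAt_tsum_of_isPreconnected (t := Ioo (2*w) (w/2))
    (u := fun v : ℕ => (d+1) * (((v:ℝ)+m+1)^d * Real.exp (w/2*((v:ℝ)+m+1))) + (-2*w) * (((v:ℝ)+m+1)^(d+1) * Real.exp (w/2*((v:ℝ)+m+1))))
    ?_ isOpen_Ioo isPreconnected_Ioo ?_ ?_ (y₀ := w) ⟨by linarith, by linarith⟩ (BB_summ m d w hw) ⟨by linarith, by linarith⟩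
  · exact ((pow_exp_summ m d (w/2) (by linarith)).mul_left _).add ((pow_exp_summ m (d+1) (w/2) (by linarith)).mul_left _)
  · intro v y _
    unfold BB
    set x := (v:ℝ)+m+1
    have h1 : HasDerivAt (fun w : ℝ => w * x) (1 * x) y := (hasDerivAt_id y).mul_const x
    have h2 : HasDerivAt (fun w : ℝ => (d * x^(d-1) + w * x^d)) (1 * x^d) y := ((hasDerivAt_id y).mul_const (x^d)).const_add _
    refine (h2.mul h1.exp).congr_deriv ?_
    rw [Nat.add_sub_cancel]
    rcases d with _ | d
    · push_cast; ring
    · push_cast; ring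
  · intro v y hy
    unfold BB
    have hx : (0:ℝ) ≤ (v:ℝ)+m+1 := by positivity
    set x := (v:ℝ)+m+1
    rw [norm_mul, Real.norm_of_nonneg (Real.exp_pos _).le, Nat.add_sub_cancel]
    have h1 : Real.exp (y*x) ≤ Real.exp (w/2*x) := by
      apply Real.exp_le_exp.2; exact mul_le_mul_of_nonneg_right hy.2.le hx
    have h2 : ‖((d+1:ℕ):ℝ) * x^d + y * x^(d+1)‖ ≤ (d+1) * x^d + (-2*w)*x^(d+1) := by
      have hp : 0 ≤ x^(d+1) := by positivity
      have hq : 0 ≤ (d+1) * x^d := by positivity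
      have h3 := hy.1
      have h4 := hy.2
      push_cast
      rw [Real.norm_eq_abs, abs_le]
      constructor <;> nlinarith
    calc _ ≤ ((d+1) * x^d + (-2*w)*x^(d+1)) * Real.exp (w/2*x) :=
          mul_le_mul h2 h1 (Real.exp_pos _).le ((norm_nonneg _).trans h2)
      _ = _ := by ring

lemma line_pow (m d : ℕ) : ∀ w : ℝ, w < 0 →
    ((∑' v, BB m d v w : ℝ):ℂ) = -(Real.pi/2) * ∫ t, AA (m+1/2) d w t := by
  have hc : (0:ℝ) ≤ m+1/2 := by positivity
  induction d with
  | zero =>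
    intro w hw
    have e1 : ∀ t, AA (m+1/2) 0 w t = cexp (w * (m+1/2)) * (cexp (w * (t * I)) * ((1/Real.cosh (Real.pi*t)^2 : ℝ):ℂ)) := by
      intro t
      unfold AA sch
      rw [pow_zero, one_mul, ← mul_assoc, ← Complex.exp_add]
      push_cast
      ring_nf
    simp_rw [e1]
    rw [integral_const_mul, FT_sech w hw.ne]
    have e2 : ∀ v : ℕ, BB m 0 v w = w * Real.exp (w*(m+1)) * (Real.exp w)^v := by
      intro v
      unfold BB
      rw [← Real.exp_nat_mul, mul_assoc w, ← Real.exp_add]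
      simp
      left
      ring
    simp_rw [e2]
    rw [tsum_mul_left, tsum_geometric_of_lt_one (Real.exp_pos _).le (Real.exp_lt_one_iff.2 hw)]
    have e3 : cexp (w * (m+1/2)) = ((Real.exp (w*(m+1/2)) : ℝ):ℂ) := by push_cast; rfl
    rw [e3]
    have : -((Real.pi:ℂ)/2) = ((-(Real.pi/2):ℝ):ℂ) := by push_cast; rfl
    rw [this]
    norm_cast
    have hpi := Real.pi_pos
    have h1 : Real.exp (w*(m+1)) = Real.exp (w*(m+1/2)) * Real.exp (w/2) := by rw [← Real.exp_add]; ring_nf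
    have h2 : 1 - Real.exp w = - (2 * Real.sinh (w/2) * Real.exp (w/2)) := by
      rw [Real.sinh_eq]
      have h3 : Real.exp w = Real.exp (w/2) * Real.exp (w/2) := by rw [← Real.exp_add]; ring_nf
      have h4 : Real.exp (-(w/2)) * Real.exp (w/2) = 1 := by rw [← Real.exp_add]; simp
      linear_combination -h3 - h4
    have h5 : Real.sinh (w/2) ≠ 0 := by simp [hw.ne]
    push_cast
    rw [h1, h2]
    field_simp
  | succ d ih =>
    intro w hw
    have h1 := (BB_deriv m d w hw).ofReal_comp
    have h2 := (AA_deriv (m+1/2) hc d w hw).const_mul (-(Real.pi/2:ℂ))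
    refine h1.unique (h2.congr_of_eventuallyEq ?_)
    filter_upwards [Iio_mem_nhds hw] with x hx
    exact ih x hx
end

section
open MeasureTheory Set Complex Filter Topology

noncomputable def UU (q : Polynomial ℝ) (c w : ℝ) (t : ℝ) : ℂ := Polynomial.aeval ((c:ℂ) + t * I) q * cexp (w * ((c:ℂ) + t * I))

lemma UU_eq (q : Polynomial ℝ) (c w : ℝ) (t : ℝ) : UU q c w t * sch t = ∑ d ∈ q.support, (q.coeff d : ℂ) * AA c d w t := by
  unfold UU AA
  rw [Polynomial.aeval_eq_sum_range, Finset.sum_mul, Finset.sum_mul]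
  have h := Polynomial.supp_subset_range_natDegree_succ (p := q)
  symm
  apply Finset.sum_subset_zero_on_sdiff h
  · intro d hd
    have : q.coeff d = 0 := by simpa using (Finset.mem_sdiff.1 hd).2
    simp [this]
  · intro d _
    rw [Complex.real_smul]; ring

lemma UU_int (q : Polynomial ℝ) (c w : ℝ) (hc : 0 ≤ c) (hw : w < 0) : Integrable fun t => UU q c w t * sch t := by
  simp_rw [UU_eq]
  apply integrable_finsetSum
  intro d _
  exact (AA_int c hc d w hw.le).const_mul _

lemma line_poly (q : Polynomial ℝ) (m : ℕ) (w : ℝ) (hw : w < 0) :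
    ((∑' v : ℕ, (q.derivative.eval ((v:ℝ)+m+1) + w * q.eval ((v:ℝ)+m+1)) * Real.exp (w * ((v:ℝ)+m+1)) : ℝ):ℂ) =
     -(Real.pi/2) * ∫ t, UU q (m+1/2) w t * sch t := by
  have hc : (0:ℝ) ≤ m+1/2 := by positivity
  simp_rw [UU_eq]
  rw [integral_finsetSum]
  · have e : ∀ v : ℕ, (q.derivative.eval ((v:ℝ)+m+1) + w * q.eval ((v:ℝ)+m+1)) * Real.exp (w * ((v:ℝ)+m+1)) =
        ∑ d ∈ q.support, q.coeff d * BB m d v w := by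
      intro v
      unfold BB
      rw [Polynomial.derivative_eval, Polynomial.eval_eq_sum, Polynomial.sum, Polynomial.sum, Finset.mul_sum, ← Finset.sum_add_distrib, Finset.sum_mul]
      apply Finset.sum_congr rfl
      intro d _
      ring
    simp_rw [e]
    rw [Summable.tsum_finsetSum (fun d _ => (BB_summ m d w hw).mul_left _)]
    push_cast
    rw [Finset.mul_sum]
    apply Finset.sum_congr rfl
    intro d _
    rw [tsum_mul_left, integral_const_mul]
    push_cast
    have := line_pow m d w hw
    push_cast at this
    rw [this]
    ring
  · intro d _
    exact (AA_int _ hc d w hw.le).const_mul _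

noncomputable def lam : ℝ := Real.log zz

lemma lam_neg : lam < 0 := Real.log_neg zz_pos zz_lt

lemma SS_line (q : Polynomial ℝ) (m : ℕ) (h0 : ∀ v : ℕ, v ≤ m → q.eval (v:ℝ) = 0) (h1 : ∀ v : ℕ, v ≤ m → q.derivative.eval (v:ℝ) = 0) :
    ((SS q.derivative + lam * SS q : ℝ):ℂ) = -(Real.pi/2) * ∫ t, UU q (m+1/2) lam t * sch t := by
  rw [← line_poly q m lam lam_neg]
  congr 1
  unfold SS
  rw [← tsum_mul_left, ← (summ_poly q.derivative).tsum_add ((summ_poly q).mul_left lam)]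
  have hs := (summ_poly q.derivative).add ((summ_poly q).mul_left lam)
  rw [← hs.sum_add_tsum_nat_add (m+1), Finset.sum_eq_zero, zero_add]
  · apply tsum_congr
    intro v
    have : Real.exp (lam * ((v:ℝ)+m+1)) = zz^(v+(m+1)) := by
      have : lam * ((v:ℝ)+m+1) = ((v+(m+1):ℕ):ℝ) * lam := by push_cast; ring
      rw [this, Real.exp_nat_mul, lam, Real.exp_log zz_pos]
    rw [this]
    push_cast
    rw [← add_assoc]
    ring
  · intro v hv
    have := Finset.mem_range.1 hv
    rw [h0 v (by omega), h1 v (by omega)]; simp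

lemma UU_deriv (q : Polynomial ℝ) (c w : ℝ) (t : ℝ) : HasDerivAt (UU q c w) (I * UU (q.derivative + Polynomial.C w * q) c w t) t := by
  unfold UU
  have h0 : HasDerivAt (fun t : ℝ => (c:ℂ) + t * I) (1 * I) t :=
    ((Complex.ofRealCLM.hasDerivAt (x := t)).mul_const I).const_add _
  have h1 : HasDerivAt (fun t : ℝ => Polynomial.aeval ((c:ℂ) + t * I) q) (Polynomial.aeval ((c:ℂ) + t * I) q.derivative * (1 * I)) t :=
    HasDerivAt.comp (h₂ := fun x : ℂ => Polynomial.aeval x q) t (Polynomial.hasDerivAt_aeval q ((c:ℂ) + t * I)) h0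
  have h2 := (h0.const_mul (w:ℂ)).cexp
  refine (h1.mul h2).congr_deriv ?_
  simp only [map_add, map_mul, Polynomial.aeval_C]
  simp
  ring

lemma sch_deriv (t : ℝ) : HasDerivAt sch (-(2*Real.pi*Real.sinh (Real.pi*t)/Real.cosh (Real.pi*t)) * sch t) t := by
  unfold sch
  have hc := Real.cosh_pos (Real.pi*t)
  have h1 : HasDerivAt (fun t : ℝ => Real.cosh (Real.pi*t)) (Real.sinh (Real.pi*t) * (Real.pi*1)) t :=
    (((hasDerivAt_id t).const_mul Real.pi).cosh)
  have h2 := (h1.pow 2).inv (pow_pos hc 2).ne'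
  simp only [one_div]
  refine h2.congr_deriv ?_
  simp
  field_simp

lemma sch_deriv_le (t : ℝ) : |-(2*Real.pi*Real.sinh (Real.pi*t)/Real.cosh (Real.pi*t)) * sch t| ≤ 2*Real.pi * sch t := by
  rw [abs_mul, abs_of_nonneg (sch_nonneg t)]
  apply mul_le_mul_of_nonneg_right _ (sch_nonneg t)
  have hc := Real.cosh_pos (Real.pi*t)
  have hs : |Real.sinh (Real.pi*t)| ≤ Real.cosh (Real.pi*t) := by
    rw [Real.abs_sinh, ← Real.cosh_abs]; exact (Real.sinh_lt_cosh _).le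
  rw [abs_neg, abs_div, abs_mul, abs_of_pos (by have := Real.pi_pos; positivity : 0 < 2*Real.pi), abs_of_pos hc, div_le_iff₀ hc]
  exact mul_le_mul_of_nonneg_left hs (by have := Real.pi_pos; positivity)

lemma UU_cont (q : Polynomial ℝ) (c w : ℝ) : Continuous (UU q c w) :=
  continuous_iff_continuousAt.2 fun t => (UU_deriv q c w t).continuousAt

lemma UU_norm_int (q : Polynomial ℝ) (c w : ℝ) (hc : 0 ≤ c) (hw : w < 0) : Integrable fun t => ‖UU q c w t‖ * sch t := by
  refine (UU_int q c w hc hw).norm.congr ?_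
  filter_upwards with t
  rw [norm_mul, Complex.norm_real, Real.norm_of_nonneg (sch_nonneg t)]

lemma r1_bound (q : Polynomial ℝ) (m : ℕ) (h0 : ∀ v : ℕ, v ≤ m → q.eval (v:ℝ) = 0) (h1 : ∀ v : ℕ, v ≤ m → q.derivative.eval (v:ℝ) = 0) :
    |SS q.derivative + lam * SS q| ≤ 10 * ∫ t, ‖UU q (m+1/2) lam t‖ * sch t := by
  have h := SS_line q m h0 h1
  rw [← Real.norm_eq_abs, ← Complex.norm_real, h, norm_mul]
  have hn : 0 ≤ ∫ t, ‖UU q (m+1/2) lam t‖ * sch t := integral_nonneg fun t => mul_nonneg (norm_nonneg _) (sch_nonneg t)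
  apply mul_le_mul _ _ (norm_nonneg _) (by norm_num)
  · rw [norm_neg, norm_div, Complex.norm_real, Real.norm_of_nonneg Real.pi_pos.le]
    have := Real.pi_lt_four
    norm_num; linarith
  · refine (norm_integral_le_integral_norm _).trans (le_of_eq ?_)
    congr 1
    funext t
    rw [norm_mul, Complex.norm_real, Real.norm_of_nonneg (sch_nonneg t)]

lemma r2_bound (q : Polynomial ℝ) (m : ℕ) (h0 : ∀ v : ℕ, v ≤ m → q.eval (v:ℝ) = 0) (h1 : ∀ v : ℕ, v ≤ m → q.derivative.eval (v:ℝ) = 0)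
    (h2 : ∀ v : ℕ, v ≤ m → q.derivative.derivative.eval (v:ℝ) = 0) :
    |SS q.derivative.derivative + 2 * lam * SS q.derivative + lam^2 * SS q| ≤ 20 * ∫ t, ‖UU q (m+1/2) lam t‖ * sch t := by
  set p := q.derivative + Polynomial.C lam * q with hp
  have hpd : p.derivative = q.derivative.derivative + Polynomial.C lam * q.derivative := by
    rw [hp, Polynomial.derivative_add, Polynomial.derivative_C_mul]
  have e : SS q.derivative.derivative + 2 * lam * SS q.derivative + lam^2 * SS q = SS p.derivative + lam * SS p := by
    rw [hpd, hp, SS_add, SS_add, SS_C_mul, SS_C_mul]; ring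
  have hc : (0:ℝ) ≤ m+1/2 := by positivity
  have h := SS_line p m (by intro v hv; rw [hp]; simp [h0 v hv, h1 v hv]) (by intro v hv; rw [hpd]; simp [h2 v hv, h1 v hv])
  have hby := integral_mul_deriv_eq_deriv_mul_of_integrable (u := fun t : ℝ => ((sch t : ℝ):ℂ)) (v := UU q (m+1/2) lam)
    (u' := fun t : ℝ => ((-(2*Real.pi*Real.sinh (Real.pi*t)/Real.cosh (Real.pi*t)) * sch t : ℝ):ℂ)) (v' := fun t => I * UU p (m+1/2) lam t)
    (fun t _ => (sch_deriv t).ofReal_comp) (fun t _ => UU_deriv q _ _ t) ?_ ?_ ?_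
  · have e2 : ∫ t, UU p (m+1/2) lam t * sch t = -I * ∫ t, ((sch t : ℝ):ℂ) * (I * UU p (m+1/2) lam t) := by
      rw [← integral_const_mul]
      congr 1
      funext t
      linear_combination ((sch t : ℂ) * UU p (m+1/2) lam t) * I_mul_I
    rw [e, ← Real.norm_eq_abs, ← Complex.norm_real, h, e2, hby, norm_mul, norm_mul, norm_neg, norm_neg, norm_neg, Complex.norm_I, one_mul]
    have h4 : ‖∫ t, ((-(2*Real.pi*Real.sinh (Real.pi*t)/Real.cosh (Real.pi*t)) * sch t : ℝ):ℂ) * UU q (m+1/2) lam t‖ ≤ 2*Real.pi * ∫ t, ‖UU q (m+1/2) lam t‖ * sch t := by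
      rw [← integral_const_mul]
      refine norm_integral_le_of_norm_le ((UU_norm_int q _ _ hc lam_neg).const_mul _) ?_
      filter_upwards with t
      rw [norm_mul, Complex.norm_real, Real.norm_eq_abs]
      calc _ ≤ (2*Real.pi*sch t) * ‖UU q (m+1/2) lam t‖ := mul_le_mul_of_nonneg_right (sch_deriv_le t) (norm_nonneg _)
        _ = _ := by ring
    have hn : 0 ≤ ∫ t, ‖UU q (m+1/2) lam t‖ * sch t := integral_nonneg fun t => mul_nonneg (norm_nonneg _) (sch_nonneg t)
    have h5 : ‖(Real.pi:ℂ)/2‖ = Real.pi/2 := by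
      rw [norm_div, Complex.norm_real, Real.norm_of_nonneg Real.pi_pos.le]; norm_num
    rw [h5]
    have hpi := Real.pi_lt_d2
    have hpi0 := Real.pi_pos
    calc _ ≤ Real.pi/2 * (2*Real.pi * ∫ t, ‖UU q (m+1/2) lam t‖ * sch t) := mul_le_mul_of_nonneg_left h4 (by positivity)
      _ = Real.pi^2 * ∫ t, ‖UU q (m+1/2) lam t‖ * sch t := by ring
      _ ≤ _ := mul_le_mul_of_nonneg_right (by nlinarith) hn
  · refine ((UU_int p (m+1/2) lam hc lam_neg).const_mul I).congr ?_
    filter_upwards with t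
    simp only [Pi.mul_apply]
    ring
  · refine ((UU_norm_int q (m+1/2) lam hc lam_neg).const_mul (2*Real.pi)).mono' ?_ ?_
    · have h3 := UU_cont q (m+1/2) lam
      have h4 : Continuous fun t : ℝ => -(2*Real.pi*Real.sinh (Real.pi*t)/Real.cosh (Real.pi*t)) * sch t := by
        have := sch_cont
        have h5 : Continuous fun t : ℝ => 2*Real.pi*Real.sinh (Real.pi*t)/Real.cosh (Real.pi*t) :=
          Continuous.div (by fun_prop) (by fun_prop) (fun t => (Real.cosh_pos _).ne')
        exact h5.neg.mul this
      exact ((Complex.continuous_ofReal.comp h4).mul h3).aestronglyMeasurable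
    · filter_upwards with t
      simp only [Pi.mul_apply]
      rw [norm_mul, Complex.norm_real, Real.norm_eq_abs]
      calc _ ≤ (2*Real.pi*sch t) * ‖UU q (m+1/2) lam t‖ := mul_le_mul_of_nonneg_right (sch_deriv_le t) (norm_nonneg _)
        _ = _ := by ring
  · refine (UU_int q (m+1/2) lam hc lam_neg).congr ?_
    filter_upwards with t
    simp only [Pi.mul_apply]
    ring
end

section
open MeasureTheory Set Complex Filter Topology

lemma Gamma_cpx {a r : ℂ} (ha : 0 < a.re) (hr : 0 < r.re) :
    ∫ (t : ℝ) in Ioi 0, (t:ℂ) ^ (a - 1) * cexp (-(r * t)) = (1 / r) ^ a * Complex.Gamma a := by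
  have hopen : IsOpen {r : ℂ | 0 < r.re} := isOpen_lt continuous_const Complex.continuous_re
  have hmeas : ∀ (b r : ℂ), AEStronglyMeasurable (fun t : ℝ => (t:ℂ) ^ b * cexp (-(r * t))) (volume.restrict (Ioi 0)) := by
    intro b r
    apply ContinuousOn.aestronglyMeasurable _ measurableSet_Ioi
    intro t ht
    apply ContinuousAt.continuousWithinAt
    apply ContinuousAt.mul
    · exact Complex.continuousAt_ofReal_cpow_const _ _ (Or.inr (ne_of_gt ht))
    · fun_prop
  have hint : ∀ (s δ : ℝ), -1 < s → 0 < δ → IntegrableOn (fun t : ℝ => t ^ s * Real.exp (-(δ * t))) (Ioi 0) := by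
    intro s δ hs hδ
    have := integrableOn_rpow_mul_exp_neg_mul_rpow (p := 1) hs one_pos hδ
    simpa [Real.rpow_one, neg_mul] using this
  have hnorm : ∀ (b r : ℂ) (t : ℝ), t ∈ Ioi (0:ℝ) → ‖(t:ℂ) ^ b * cexp (-(r * t))‖ = t ^ b.re * Real.exp (-(r.re * t)) := by
    intro b r t ht
    rw [norm_mul, Complex.norm_cpow_eq_rpow_re_of_pos ht, Complex.norm_exp, Complex.neg_re, Complex.re_mul_ofReal]
  have hd : DifferentiableOn ℂ (fun r : ℂ => ∫ (t : ℝ) in Ioi 0, (t:ℂ) ^ (a - 1) * cexp (-(r * t))) {r : ℂ | 0 < r.re} := by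
    intro r₀ hr₀
    have hr₀' : 0 < r₀.re := hr₀
    apply DifferentiableAt.differentiableWithinAt
    have key := hasDerivAt_integral_of_dominated_loc_of_deriv_le (μ := volume.restrict (Ioi (0:ℝ)))
      (F := fun (r : ℂ) (t : ℝ) => (t:ℂ) ^ (a - 1) * cexp (-(r * t)))
      (F' := fun (r : ℂ) (t : ℝ) => -((t:ℂ) ^ (a - 1) * t * cexp (-(r * t))))
      (x₀ := r₀) (s := {r : ℂ | r₀.re/2 < r.re}) (bound := fun t => t ^ a.re * Real.exp (-(r₀.re/2 * t))) ?_ ?_ ?_ ?_ ?_ ?_ ?_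
    · exact key.2.differentiableAt
    · exact (isOpen_lt continuous_const Complex.continuous_re).mem_nhds (by show r₀.re/2 < r₀.re; linarith)
    · exact Eventually.of_forall fun r => hmeas _ _
    · refine ((hint (a.re-1) r₀.re (by linarith) hr₀').mono' (hmeas _ _) ?_)
      refine (ae_restrict_iff' measurableSet_Ioi).2 (Eventually.of_forall fun t ht => ?_)
      rw [hnorm _ _ t ht]
      simp
    · have h1 := hmeas a r₀
      refine (h1.neg).congr ?_
      refine (ae_restrict_iff' measurableSet_Ioi).2 (Eventually.of_forall fun t ht => ?_)
      have ht' : (t:ℂ) ≠ 0 := by exact_mod_cast (ne_of_gt ht)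
      simp only [Pi.neg_apply]
      rw [Complex.cpow_sub _ _ ht', Complex.cpow_one]
      field_simp
    · refine (ae_restrict_iff' measurableSet_Ioi).2 (Eventually.of_forall fun t ht r hr => ?_)
      have ht' : (t:ℂ) ≠ 0 := by exact_mod_cast (ne_of_gt ht)
      have : -((t:ℂ) ^ (a - 1) * t * cexp (-(r * t))) = -((t:ℂ) ^ a * cexp (-(r * t))) := by
        rw [Complex.cpow_sub _ _ ht', Complex.cpow_one]
        field_simp
      rw [this, norm_neg, hnorm _ _ t ht]
      have h0 : (0:ℝ) < t := ht
      have hr1 : r₀.re/2 < r.re := hr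
      gcongr
    · exact hint _ _ (by linarith) (by linarith)
    · refine Eventually.of_forall fun t r _ => ?_
      have h1 : HasDerivAt (fun r : ℂ => -(r * (t:ℂ))) (-(t:ℂ)) r := by
        exact (((hasDerivAt_id r).mul_const (t:ℂ)).neg).congr_deriv (by simp)
      refine (h1.cexp.const_mul ((t:ℂ)^(a-1))).congr_deriv ?_
      ring
  have hd2 : DifferentiableOn ℂ (fun r : ℂ => (1 / r) ^ a * Complex.Gamma a) {r : ℂ | 0 < r.re} := by
    intro r hr
    have hr' : 0 < r.re := hr
    have hr0 : r ≠ 0 := by rintro rfl; simp at hr'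
    apply DifferentiableAt.differentiableWithinAt
    apply DifferentiableAt.mul_const
    apply DifferentiableAt.cpow
    · exact (differentiableAt_const _).div differentiableAt_id hr0
    · exact differentiableAt_const _
    · left
      rw [one_div, Complex.inv_re]
      exact div_pos hr' (Complex.normSq_pos.2 hr0)
  have hconn : IsPreconnected {r : ℂ | 0 < r.re} := (convex_halfSpace_re_gt 0).isPreconnected
  have h1 : (1:ℂ) ∈ {r : ℂ | 0 < r.re} := by simp
  refine (hd.analyticOnNhd hopen).eqOn_of_preconnected_of_frequently_eq (hd2.analyticOnNhd hopen) hconn h1 ?_ hr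
  have ht : Tendsto (fun n : ℕ => ((1 + 1/((n:ℝ)+1) : ℝ):ℂ)) atTop (𝓝[≠] 1) := by
    apply tendsto_nhdsWithin_iff.2 ⟨?_, Eventually.of_forall fun n => ?_⟩
    · have : Tendsto (fun n : ℕ => (1 + 1/((n:ℝ)+1) : ℝ)) atTop (𝓝 (1+0)) := tendsto_const_nhds.add tendsto_one_div_add_atTop_nhds_zero_nat
      rw [add_zero] at this
      have := (Complex.continuous_ofReal.tendsto 1).comp this
      exact this
    · have : (1 + 1/((n:ℝ)+1) : ℝ) ≠ 1 := by
        have : (0:ℝ) < 1/((n:ℝ)+1) := by positivity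
        linarith
      simp only [mem_compl_iff, mem_singleton_iff]
      exact_mod_cast this
  refine ht.frequently (Frequently.of_forall fun n => ?_)
  exact Complex.integral_cpow_mul_exp_neg_mul_Ioi ha (by positivity)

lemma Gamma_bd (θ x y : ℝ) (hθ : 0 ≤ θ) (hθ' : θ < Real.pi/2) (hx : 0 < x) :
    ‖Complex.Gamma (x + y * I)‖ ≤ Real.exp (-(θ*|y|)) * (Real.Gamma x / Real.cos θ ^ x) := by
  have hcos : 0 < Real.cos θ := Real.cos_pos_of_mem_Ioo ⟨by linarith, hθ'⟩
  obtain ⟨φ, h1, h2, h3, h4⟩ : ∃ φ : ℝ, φ * y = θ * |y| ∧ Real.cos φ = Real.cos θ ∧ -(Real.pi) < φ ∧ φ < Real.pi := by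
    have := Real.pi_pos
    rcases le_total 0 y with h | h
    · exact ⟨θ, by rw [abs_of_nonneg h], rfl, by linarith, by linarith⟩
    · exact ⟨-θ, by rw [abs_of_nonpos h]; ring, Real.cos_neg θ, by linarith, by linarith⟩
  have hre : (cexp (φ * I)).re = Real.cos θ := by rw [Complex.exp_ofReal_mul_I_re, h2]
  have key := Gamma_cpx (a := x + y * I) (r := cexp (φ * I)) (by simpa using hx) (by rw [hre]; exact hcos)
  have e1 : ‖(1 / cexp (φ * I)) ^ ((x:ℂ) + y * I)‖ = Real.exp (θ * |y|) := by
    rw [one_div, ← Complex.exp_neg, Complex.cpow_def_of_ne_zero (Complex.exp_ne_zero _), Complex.log_exp, Complex.norm_exp, ← h1]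
    · congr 1
      simp
    · simp; linarith
    · simp; linarith
  have e2 : ‖∫ t : ℝ in Ioi 0, (t:ℂ) ^ ((x:ℂ) + y * I - 1) * cexp (-(cexp (φ * I) * t))‖ ≤ ∫ t : ℝ in Ioi 0, t ^ (x-1) * Real.exp (-(Real.cos θ * t)) := by
    refine (norm_integral_le_integral_norm _).trans (le_of_eq ?_)
    apply setIntegral_congr_fun measurableSet_Ioi
    intro t ht
    simp only
    rw [norm_mul, Complex.norm_cpow_eq_rpow_re_of_pos ht, Complex.norm_exp, Complex.neg_re, Complex.re_mul_ofReal, hre]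
    congr 2
    simp
  rw [key, norm_mul, e1, Real.integral_rpow_mul_exp_neg_mul_Ioi hx hcos] at e2
  rw [Real.exp_neg, ← div_eq_inv_mul, le_div_iff₀ (Real.exp_pos _)]
  calc _ = _ := mul_comm _ _
    _ ≤ _ := e2
    _ = _ := by rw [Real.div_rpow zero_le_one hcos.le, Real.one_rpow]; ring

lemma sin_half (m : ℕ) (t : ℝ) : ‖Complex.sin (Real.pi * (((m+1/2:ℝ):ℂ) + t * I))‖ = Real.cosh (Real.pi*t) := by
  have : (Real.pi:ℂ) * (((m+1/2:ℝ):ℂ) + t * I) = ((Real.pi*t : ℝ):ℂ) * I + m * Real.pi + Real.pi/2 := by push_cast; ring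
  rw [this, Complex.sin_add_pi_div_two, Complex.cos_antiperiodic.add_nat_mul_eq, Complex.cos_mul_I, norm_mul, ← Complex.ofReal_cosh, Complex.norm_real,
    Real.norm_of_nonneg (Real.cosh_pos _).le]
  simp

lemma PP_Gamma (s : ℂ) (hs : ∀ n : ℤ, s ≠ n) (B : ℕ) : Complex.Gamma (B+1+s) * Complex.Gamma (B+1-s) * Complex.sin (Real.pi * s) =
    (-1)^B * Real.pi * Polynomial.aeval s (PP B) := by
  induction B with
  | zero =>
    have h0 : s ≠ 0 := by simpa using hs 0
    have hsin : Complex.sin (Real.pi * s) ≠ 0 := by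
      rw [Complex.sin_ne_zero_iff]
      intro k hk
      apply hs k
      have : (Real.pi:ℂ) ≠ 0 := by exact_mod_cast Real.pi_pos.ne'
      field_simp at hk
      exact hk
    rw [PP_zero, Polynomial.aeval_X, Nat.cast_zero, zero_add, add_comm 1 s, Complex.Gamma_add_one s h0, mul_assoc s, Complex.Gamma_mul_Gamma_one_sub, mul_assoc, div_mul_cancel₀ _ hsin]
    ring
  | succ B ih =>
    have h1 : (B:ℂ)+1+s ≠ 0 := by
      intro h; apply hs (-(B+1)); push_cast; linear_combination h
    have h2 : (B:ℂ)+1-s ≠ 0 := by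
      intro h; apply hs (B+1); push_cast; linear_combination -h
    have e1 : ((B+1:ℕ):ℂ)+1+s = ((B:ℂ)+1+s)+1 := by push_cast; ring
    have e2 : ((B+1:ℕ):ℂ)+1-s = ((B:ℂ)+1-s)+1 := by push_cast; ring
    rw [e1, e2, Complex.Gamma_add_one _ h1, Complex.Gamma_add_one _ h2, PP_succ, map_mul, map_mul]
    simp only [map_add, map_sub, Polynomial.aeval_X, Polynomial.aeval_C]
    simp only [Complex.coe_algebraMap]
    push_cast
    rw [pow_succ]
    linear_combination ((B:ℂ)+1+s)*((B:ℂ)+1-s)*ih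

lemma PP_norm (m B : ℕ) (t : ℝ) (hB : m + 2 ≤ B) (θ₁ θ₂ : ℝ) (h1 : 0 ≤ θ₁) (h1' : θ₁ < Real.pi/2) (h2 : 0 ≤ θ₂) (h2' : θ₂ < Real.pi/2) :
    ‖Polynomial.aeval (((m+1/2:ℝ):ℂ) + t * I) (PP B)‖ ≤ Real.exp (-((θ₁+θ₂)*|t|)) *
      (((B+m+1).factorial / Real.cos θ₁ ^ (B+m+2)) * ((B-m).factorial / Real.cos θ₂ ^ (B-m+2))) * Real.cosh (Real.pi*t) := by
  have hcos1 : 0 < Real.cos θ₁ := Real.cos_pos_of_mem_Ioo ⟨by linarith [Real.pi_pos], h1'⟩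
  have hcos2 : 0 < Real.cos θ₂ := Real.cos_pos_of_mem_Ioo ⟨by linarith [Real.pi_pos], h2'⟩
  set s := (((m+1/2:ℝ):ℂ) + t * I) with hs
  have hs' : ∀ n : ℤ, s ≠ n := by
    intro n hn
    have : (m+1/2:ℝ) = n := by
      have := congrArg Complex.re hn
      rw [hs] at this
      simpa using this
    have h3 : ((2*m+1:ℤ):ℝ) = ((2*n:ℤ):ℝ) := by push_cast; linarith
    have : (2*m+1:ℤ) = 2*n := by exact_mod_cast h3
    omega
  have h := congrArg norm (PP_Gamma s hs' B)
  rw [norm_mul, norm_mul, norm_mul, norm_mul, hs, sin_half, ← hs, norm_pow, norm_neg, norm_one, one_pow, one_mul, Complex.norm_real, Real.norm_of_nonneg Real.pi_pos.le] at h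
  have hmB : m ≤ B := by omega
  have g1 := Gamma_bd θ₁ (B+m+3/2) t h1 h1' (by positivity)
  have g2 := Gamma_bd θ₂ ((B-m:ℕ)+1/2) (-t) h2 h2' (by positivity)
  have e1 : (B:ℂ)+1+s = ((B+m+3/2:ℝ):ℂ) + t * I := by rw [hs]; push_cast; ring
  have e2 : (B:ℂ)+1-s = (((B-m:ℕ)+1/2:ℝ):ℂ) + (-t:ℝ) * I := by rw [hs]; push_cast [Nat.cast_sub hmB]; ring
  rw [← e1] at g1
  rw [← e2, abs_neg] at g2
  have m1 : Real.Gamma (B+m+3/2) / Real.cos θ₁ ^ (B+m+3/2:ℝ) ≤ (B+m+1).factorial / Real.cos θ₁ ^ (B+m+2) := by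
    apply div_le_div₀ (by positivity) _ (by positivity) _
    · rw [← Real.Gamma_nat_eq_factorial]
      apply Real.Gamma_strictMonoOn_Ici.monotoneOn
      · have : (2:ℝ) ≤ B := by exact_mod_cast (by omega : 2 ≤ B)
        simp only [mem_Ici]; have : (0:ℝ) ≤ m := by positivity
        linarith
      · have : (2:ℝ) ≤ B := by exact_mod_cast (by omega : 2 ≤ B)
        simp only [mem_Ici]; have : (0:ℝ) ≤ m := by positivity
        push_cast; linarith
      · push_cast; linarith
    · rw [← Real.rpow_natCast]
      apply Real.rpow_le_rpow_of_exponent_ge hcos1 (Real.cos_le_one _)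
      push_cast; linarith
  have m2 : Real.Gamma ((B-m:ℕ)+1/2) / Real.cos θ₂ ^ ((B-m:ℕ)+1/2:ℝ) ≤ (B-m).factorial / Real.cos θ₂ ^ (B-m+2) := by
    have h2 : (2:ℝ) ≤ (B-m:ℕ) := by exact_mod_cast (by omega : 2 ≤ B-m)
    apply div_le_div₀ (by positivity) _ (by positivity) _
    · rw [← Real.Gamma_nat_eq_factorial]
      apply Real.Gamma_strictMonoOn_Ici.monotoneOn
      · simp only [mem_Ici]
        linarith
      · simp only [mem_Ici]
        linarith
      · linarith
    · rw [← Real.rpow_natCast]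
      apply Real.rpow_le_rpow_of_exponent_ge hcos2 (Real.cos_le_one _)
      push_cast; linarith
  have hcosh := Real.cosh_pos (Real.pi*t)
  calc ‖Polynomial.aeval s (PP B)‖ ≤ Real.pi * ‖Polynomial.aeval s (PP B)‖ := by
        have := Real.pi_gt_three
        nlinarith [norm_nonneg (Polynomial.aeval s (PP B))]
    _ = _ := h.symm
    _ ≤ (Real.exp (-(θ₁*|t|)) * ((B+m+1).factorial / Real.cos θ₁ ^ (B+m+2))) * (Real.exp (-(θ₂*|t|)) * ((B-m).factorial / Real.cos θ₂ ^ (B-m+2))) * Real.cosh (Real.pi*t) := by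
        apply mul_le_mul_of_nonneg_right _ hcosh.le
        apply mul_le_mul _ _ (norm_nonneg _) (by positivity)
        · exact g1.trans (mul_le_mul_of_nonneg_left m1 (Real.exp_pos _).le)
        · exact g2.trans (mul_le_mul_of_nonneg_left m2 (Real.exp_pos _).le)
    _ = _ := by
        have : Real.exp (-((θ₁+θ₂)*|t|)) = Real.exp (-(θ₁*|t|)) * Real.exp (-(θ₂*|t|)) := by rw [← Real.exp_add]; ring_nf
        rw [this]; ring
end

section
open MeasureTheory Set Complex Filter Topology

noncomputable def tau : ℝ := 216923/2500
noncomputable def tht (a : ℝ) : ℝ := Real.arctan (tau / a)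

lemma tht_nonneg {a : ℝ} (ha : 0 < a) : 0 ≤ tht a := by
  unfold tht; rw [Real.arctan_nonneg]; unfold tau; positivity
lemma tht_lt (a : ℝ) : tht a < Real.pi/2 := Real.arctan_lt_pi_div_two _
lemma tht_cos_pos (a : ℝ) : 0 < Real.cos (tht a) := Real.cos_arctan_pos _

lemma tht_sum : Real.pi < (tht 197 + tht 167) + (tht 169 + tht 139) + (tht 141 + tht 111) := by
  unfold tht tau
  rw [Real.arctan_add (x := 216923 / 2500 / 197) (by norm_num), Real.arctan_add (x := 216923 / 2500 / 169) (by norm_num), Real.arctan_add (x := 216923 / 2500 / 141) (by norm_num)]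
  have h : ∀ x y : ℝ, 0 < x → 0 < y → 1 < x * y → ∀ w, (x+y)/(x*y-1) < w → Real.pi < Real.arctan x + Real.arctan y + Real.arctan w := by
    intro x y hx hy hxy w hw
    rw [Real.arctan_add_eq_add_pi hxy hx]
    have : Real.arctan (-((x+y)/(1-x*y))) < Real.arctan w := by
      apply Real.arctan_strictMono
      rwa [← div_neg, neg_sub]
    rw [Real.arctan_neg] at this
    linarith
  apply h <;> norm_num

noncomputable def Rk (k : ℕ) : Polynomial ℝ := PP (182*k) * PP (154*k) * PP (126*k)

noncomputable def fc (a k : ℕ) : ℝ := ((a*k).factorial : ℝ) / Real.cos (tht a) ^ (a*k)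

lemma PP_norm' (b a₁ a₂ k : ℕ) (hk : 1 ≤ k) (h1 : a₁ = b + 15) (h2 : a₂ + 15 = b) (h3 : 17 ≤ b) (t : ℝ) :
    ‖Polynomial.aeval (((((15*k:ℕ):ℝ)+1/2:ℝ):ℂ) + t * I) (PP (b*k))‖ ≤ Real.exp (-((tht a₁+tht a₂)*|t|)) *
      ((((a₁*k:ℕ):ℝ)+1) * (fc a₁ k / Real.cos (tht a₁) ^ 2) * (fc a₂ k / Real.cos (tht a₂) ^ 2)) * Real.cosh (Real.pi*t) := by
  have p1 : (0:ℝ) < a₁ := by exact_mod_cast (by omega : 0 < a₁)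
  have p2 : (0:ℝ) < a₂ := by exact_mod_cast (by omega : 0 < a₂)
  have hb : 15*k + 2 ≤ b*k := by nlinarith
  have key := PP_norm (15*k) (b*k) t hb (tht a₁) (tht a₂) (tht_nonneg p1) (tht_lt _) (tht_nonneg p2) (tht_lt _)
  have e1 : b*k + 15*k = a₁*k := by rw [h1]; ring
  have e2 : b*k - 15*k = a₂*k := by rw [← h2]; rw [Nat.sub_eq_iff_eq_add (by nlinarith)]; ring
  rw [e1, e2] at key
  refine key.trans (le_of_eq ?_)
  unfold fc
  rw [Nat.factorial_succ]
  have c1 := (tht_cos_pos a₁).ne'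
  have c2 := (tht_cos_pos a₂).ne'
  push_cast
  rw [pow_add, pow_add]
  field_simp

noncomputable def Mk (k : ℕ) : ℝ :=
  ((((197*k:ℕ):ℝ)+1) * (fc 197 k / Real.cos (tht (197:ℕ)) ^ 2) * (fc 167 k / Real.cos (tht (167:ℕ)) ^ 2)) *
  ((((169*k:ℕ):ℝ)+1) * (fc 169 k / Real.cos (tht (169:ℕ)) ^ 2) * (fc 139 k / Real.cos (tht (139:ℕ)) ^ 2)) *
  ((((141*k:ℕ):ℝ)+1) * (fc 141 k / Real.cos (tht (141:ℕ)) ^ 2) * (fc 111 k / Real.cos (tht (111:ℕ)) ^ 2))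

lemma fc_pos (a k : ℕ) : 0 < fc a k := by
  unfold fc
  have := tht_cos_pos a
  positivity

lemma Mk_pos (k : ℕ) : 0 < Mk k := by
  unfold Mk
  have := fc_pos
  have := fun a => tht_cos_pos a
  have h : ∀ a a' : ℕ, 0 < ((((a*k:ℕ):ℝ)+1) * (fc a k / Real.cos (tht a) ^ 2) * (fc a' k / Real.cos (tht a') ^ 2)) := by
    intro a a'
    have := fc_pos a k
    have := fc_pos a' k
    have := tht_cos_pos a
    have := tht_cos_pos a'
    positivity
  exact mul_pos (mul_pos (h _ _) (h _ _)) (h _ _)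

noncomputable def dlt : ℝ := (tht 197 + tht 167) + (tht 169 + tht 139) + (tht 141 + tht 111) - Real.pi
lemma dlt_pos : 0 < dlt := by unfold dlt; linarith [tht_sum]

noncomputable def KK : ℝ := ∫ t : ℝ, (1+|t|)^2 * Real.exp (-(dlt*|t|))

lemma UU_alg (E1 E2 E3 M1 M2 M3 c Z P T : ℝ) (hc : c ≠ 0) : (E1*M1*c)*(E2*M2*c)*(E3*M3*c)*(P*T)*Z*(1/c^2) = (M1*M2*M3*Z*P)*(T*(E1*E2*E3*c)) := by
  field_simp

lemma UU_alg2 (M Z P T E c c' : ℝ) (hM : 0 ≤ M) (hZ : 0 ≤ Z) (hP : 0 ≤ P) (hT : 0 ≤ T) (hE : 0 ≤ E) (h : c ≤ c') : (M*Z*P)*(T*(E*c)) ≤ (M*Z*P)*(T*(E*c')) := by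
  gcongr

lemma UU_alg3 (x1 x2 x3 x4 x5 y1 y2 y3 y4 y5 : ℝ) (a1 : 0 ≤ x1) (a2 : 0 ≤ x2) (a3 : 0 ≤ x3) (a4 : 0 ≤ x4) (a5 : 0 ≤ x5) (c1 : x1 ≤ y1) (c2 : x2 ≤ y2) (c3 : x3 ≤ y3) (c4 : x4 ≤ y4) (c5 : x5 ≤ y5) :
    x1*x2*x3*x4*x5 ≤ y1*y2*y3*y4*y5 := by
  have := a1.trans c1
  have := a2.trans c2
  have := a3.trans c3
  have := a4.trans c4
  gcongr

lemma UU_bound (k j : ℕ) (hk : 1 ≤ k) (hj : j ≤ 2) (t : ℝ) :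
    ‖UU (Rk k * Polynomial.X^j) (((15*k:ℕ):ℝ)+1/2) lam t‖ * sch t ≤
      (Mk k * zz^(15*k) * ((15*k:ℕ)+1)^2) * ((1+|t|)^2 * Real.exp (-(dlt*|t|))) := by
  have b1 := PP_norm' 182 197 167 k hk (by norm_num) (by norm_num) (by norm_num) t
  have b2 := PP_norm' 154 169 139 k hk (by norm_num) (by norm_num) (by norm_num) t
  have b3 := PP_norm' 126 141 111 k hk (by norm_num) (by norm_num) (by norm_num) t
  unfold UU Rk
  rw [map_mul, map_mul, map_mul, map_pow, Polynomial.aeval_X, norm_mul, norm_mul, norm_mul, norm_mul, norm_pow]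
  have hn := norm_line (((15*k:ℕ):ℝ)+1/2) t (by positivity)
  set s := (((((15*k:ℕ):ℝ)+1/2:ℝ):ℂ) + t * I) with hs
  have hx : ‖s‖^j ≤ (((15*k:ℕ):ℝ)+1)^2 * (1+|t|)^2 := by
    have h1 : ‖s‖ ≤ (((15*k:ℕ):ℝ)+1) * (1+|t|) := by
      have : (0:ℝ) ≤ ((15*k:ℕ):ℝ) * |t| := by positivity
      nlinarith
    have h2 : 1 ≤ (((15*k:ℕ):ℝ)+1) * (1+|t|) := by
      have : (0:ℝ) ≤ ((15*k:ℕ):ℝ) * |t| := by positivity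
      have : (0:ℝ) ≤ ((15*k:ℕ):ℝ) := by positivity
      nlinarith [abs_nonneg t]
    calc ‖s‖^j ≤ ((((15*k:ℕ):ℝ)+1) * (1+|t|))^j := by gcongr
      _ ≤ ((((15*k:ℕ):ℝ)+1) * (1+|t|))^2 := pow_le_pow_right₀ h2 hj
      _ = _ := by ring
  have he : ‖cexp ((lam:ℂ) * s)‖ ≤ zz^(15*k) := by
    rw [Complex.norm_exp, hs]
    have : ((lam:ℂ) * ((((15*k:ℕ):ℝ)+1/2:ℝ) + t * I)).re = lam * (15*k:ℕ) + lam*(1/2) := by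
      simp; ring
    rw [this, Real.exp_add]
    have h1 : Real.exp (lam * (15*k:ℕ)) = zz^(15*k) := by
      rw [mul_comm, Real.exp_nat_mul]; unfold lam; rw [Real.exp_log zz_pos]
    have h2 : Real.exp (lam*(1/2)) ≤ 1 := by rw [Real.exp_le_one_iff]; linarith [lam_neg]
    rw [h1]
    have := pow_pos zz_pos (15*k)
    nlinarith
  have hc := Real.cosh_pos (Real.pi*t)
  have hce : Real.cosh (Real.pi*t) ≤ Real.exp (Real.pi*|t|) := by
    rw [← Real.cosh_abs, abs_mul, abs_of_pos Real.pi_pos, Real.cosh_eq]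
    have : Real.exp (-(Real.pi*|t|)) ≤ Real.exp (Real.pi*|t|) := by
      apply Real.exp_le_exp.2
      have := Real.pi_pos
      have : 0 ≤ Real.pi*|t| := by positivity
      linarith
    linarith
  have hee : Real.exp (-((tht (197:ℕ)+tht (167:ℕ))*|t|)) * Real.exp (-((tht (169:ℕ)+tht (139:ℕ))*|t|)) * Real.exp (-((tht (141:ℕ)+tht (111:ℕ))*|t|)) * Real.exp (Real.pi*|t|) = Real.exp (-(dlt*|t|)) := by
    rw [← Real.exp_add, ← Real.exp_add, ← Real.exp_add]
    congr 1
    unfold dlt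
    push_cast
    ring
  have hz := pow_pos zz_pos (15*k)
  have hbig := UU_alg3 _ _ _ _ _ _ _ _ _ _ (norm_nonneg _) (norm_nonneg _) (norm_nonneg _) (by positivity) (norm_nonneg _) b1 b2 b3 hx he
  calc _ ≤ _ := mul_le_mul_of_nonneg_right hbig (sch_nonneg t)
    _ = (Mk k * zz^(15*k) * ((15*k:ℕ)+1)^2) * ((1+|t|)^2 * (Real.exp (-((tht (197:ℕ)+tht (167:ℕ))*|t|)) * Real.exp (-((tht (169:ℕ)+tht (139:ℕ))*|t|)) * Real.exp (-((tht (141:ℕ)+tht (111:ℕ))*|t|)) * Real.cosh (Real.pi*t))) := by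
        unfold Mk sch
        exact UU_alg _ _ _ _ _ _ _ _ _ _ hc.ne'
    _ ≤ _ := by
        rw [← hee]
        exact UU_alg2 _ _ _ _ _ _ _ (Mk_pos k).le hz.le (by positivity) (by positivity) (by positivity) hce

lemma intUU_bound (k j : ℕ) (hk : 1 ≤ k) (hj : j ≤ 2) :
    ∫ t, ‖UU (Rk k * Polynomial.X^j) (((15*k:ℕ):ℝ)+1/2) lam t‖ * sch t ≤
      (Mk k * zz^(15*k) * ((15*k:ℕ)+1)^2) * KK := by
  unfold KK
  rw [← integral_const_mul]
  apply integral_mono_of_nonneg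
  · exact Eventually.of_forall fun t => mul_nonneg (norm_nonneg _) (sch_nonneg t)
  · exact (poly_exp_int 1 dlt (by norm_num) dlt_pos 2).const_mul _
  · exact Eventually.of_forall fun t => UU_bound k j hk hj t

lemma log_div (a : ℕ) : Tendsto (fun k : ℕ => Real.log ((a*k:ℕ)+1) / k) atTop (𝓝 0) := by
  have h1 : Tendsto (fun k : ℕ => Real.log ((k:ℝ)) / k) atTop (𝓝 0) := by
    have := Real.isLittleO_log_id_atTop.tendsto_div_nhds_zero
    exact this.comp tendsto_natCast_atTop_atTop
  have h2 : Tendsto (fun k : ℕ => Real.log ((a:ℝ)+1) / k + Real.log (k:ℝ)/k) atTop (𝓝 (0+0)) :=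
    (tendsto_const_div_atTop_nhds_zero_nat _).add h1
  rw [add_zero] at h2
  refine tendsto_of_tendsto_of_tendsto_of_le_of_le' tendsto_const_nhds h2 ?_ ?_
  · refine Eventually.of_forall fun k => ?_
    apply div_nonneg (Real.log_nonneg _) (by positivity)
    have : (0:ℝ) ≤ (a*k:ℕ) := by positivity
    linarith
  · filter_upwards [eventually_ge_atTop 1] with k hk
    have hk' : (1:ℝ) ≤ k := by exact_mod_cast hk
    rw [← add_div, ← Real.log_mul (by positivity) (by positivity)]
    apply div_le_div_of_nonneg_right _ (by positivity)
    apply Real.log_le_log (by positivity)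
    push_cast
    linarith

lemma fact_lim (a : ℕ) (ha : 0 < a) : Tendsto (fun k : ℕ => (Real.log ((a*k).factorial) - a*k*Real.log k)/k) atTop (𝓝 (a*Real.log a - a)) := by
  have h1 : Tendsto (fun n : ℕ => Real.log (Stirling.stirlingSeq n)) atTop (𝓝 (Real.log (√Real.pi))) :=
    (Real.continuousAt_log (by have := Real.pi_pos; positivity)).tendsto.comp Stirling.tendsto_stirlingSeq_sqrt_pi
  have hak : Tendsto (fun k : ℕ => a*k) atTop atTop := tendsto_id.const_mul_atTop' ha
  have h2 := (h1.comp hak).div_atTop (tendsto_natCast_atTop_atTop (R := ℝ))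
  have h3 : Tendsto (fun k : ℕ => Real.log ((k:ℝ)) / k) atTop (𝓝 0) := by
    have := Real.isLittleO_log_id_atTop.tendsto_div_nhds_zero
    exact this.comp tendsto_natCast_atTop_atTop
  have h4 : Tendsto (fun k : ℕ => (1/2)*Real.log (2*a) / k) atTop (𝓝 0) := tendsto_const_div_atTop_nhds_zero_nat _
  have h5 := ((h2.add h4).add (h3.const_mul (1/2))).add (tendsto_const_nhds (x := a*Real.log a - a))
  simp only [zero_add, add_zero, mul_zero] at h5
  refine h5.congr' ?_
  filter_upwards [eventually_ge_atTop 1] with k hk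
  have hk' : (0:ℝ) < k := by exact_mod_cast hk
  have ha' : (0:ℝ) < a := by exact_mod_cast ha
  simp only [Function.comp]
  rw [Stirling.log_stirlingSeq_formula]
  push_cast
  rw [Real.log_div (by positivity) (by positivity), Real.log_exp, ← mul_assoc, Real.log_mul (x := 2*a) (by positivity) (by positivity), Real.log_mul (x := a) (y := k) (by positivity) (by positivity)]
  field_simp
  ring

lemma fc_lim (a : ℕ) (ha : 0 < a) : Tendsto (fun k : ℕ => (Real.log (fc a k) - a*k*Real.log k)/k) atTop (𝓝 (a*Real.log a - a - a*Real.log (Real.cos (tht a)))) := by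
  have h := (fact_lim a ha).sub (tendsto_const_nhds (x := a*Real.log (Real.cos (tht a))))
  refine h.congr' ?_
  filter_upwards [eventually_ge_atTop 1] with k hk
  have hk' : (0:ℝ) < k := by exact_mod_cast hk
  unfold fc
  have := tht_cos_pos a
  rw [Real.log_div (by positivity) (by positivity), Real.log_pow]
  push_cast
  field_simp
  ring
end

section
open MeasureTheory Set Complex Filter Topology

lemma triple_zero (a b c u : Polynomial ℝ) (x : ℝ) (ha : a.eval x = 0) (hb : b.eval x = 0) (hc : c.eval x = 0) :
    (a*b*c*u).eval x = 0 ∧ (a*b*c*u).derivative.eval x = 0 ∧ (a*b*c*u).derivative.derivative.eval x = 0 := by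
  simp [Polynomial.derivative_mul, ha, hb, hc]

lemma r_bound (k j : ℕ) (hk : 1 ≤ k) (hj : j ≤ 2) :
    |SS (Rk k * Polynomial.X^j).derivative + lam * SS (Rk k * Polynomial.X^j)| ≤ 20 * ((Mk k * zz^(15*k) * ((15*k:ℕ)+1)^2) * (|KK|+1)) ∧
    |SS (Rk k * Polynomial.X^j).derivative.derivative + 2*lam*SS (Rk k * Polynomial.X^j).derivative + lam^2*SS (Rk k * Polynomial.X^j)| ≤ 20 * ((Mk k * zz^(15*k) * ((15*k:ℕ)+1)^2) * (|KK|+1)) := by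
  have hz : ∀ v ≤ 15*k, (Rk k * Polynomial.X^j).eval (v:ℝ) = 0 ∧ (Rk k * Polynomial.X^j).derivative.eval (v:ℝ) = 0 ∧ (Rk k * Polynomial.X^j).derivative.derivative.eval (v:ℝ) = 0 := by
    intro v hv
    apply triple_zero <;> apply PP_eval_eq_zero <;> omega
  have hM := Mk_pos k
  have hzz := pow_pos zz_pos (15*k)
  have h0 : 0 ≤ Mk k * zz^(15*k) * ((15*k:ℕ)+1)^2 := by positivity
  have hb : (Mk k * zz^(15*k) * ((15*k:ℕ)+1)^2) * KK ≤ (Mk k * zz^(15*k) * ((15*k:ℕ)+1)^2) * (|KK|+1) :=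
    mul_le_mul_of_nonneg_left (by linarith [le_abs_self KK]) h0
  have hi := intUU_bound k j hk hj
  have hnn : 0 ≤ (Mk k * zz^(15*k) * ((15*k:ℕ)+1)^2) * (|KK|+1) := mul_nonneg h0 (by positivity)
  constructor
  · have := r1_bound (Rk k * Polynomial.X^j) (15*k) (fun v hv => (hz v hv).1) (fun v hv => (hz v hv).2.1)
    refine this.trans ?_
    linarith
  · have := r2_bound (Rk k * Polynomial.X^j) (15*k) (fun v hv => (hz v hv).1) (fun v hv => (hz v hv).2.1) (fun v hv => (hz v hv).2.2)
    refine this.trans ?_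
    linarith

noncomputable def fl (a : ℕ) : ℝ := a*Real.log a - a - a*Real.log (Real.cos (tht a))
noncomputable def wl (a : ℕ) : ℝ := a*Real.log a - a

noncomputable def rhoC : ℝ := fl 197 + fl 167 + fl 169 + fl 139 + fl 141 + fl 111 - (wl 364 + wl 308 + wl 252) + 15 * lam

lemma WW_lim : Tendsto (fun k : ℕ => (Real.log (WW (14*k)) - 924*k*Real.log k)/k) atTop (𝓝 (wl 364 + wl 308 + wl 252)) := by
  have h := ((fact_lim 364 (by norm_num)).add (fact_lim 308 (by norm_num))).add (fact_lim 252 (by norm_num))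
  refine h.congr ?_
  intro k
  unfold WW
  rw [← mul_assoc 26, ← mul_assoc 22, ← mul_assoc 18]
  norm_num only
  push_cast
  rw [Real.log_mul (by positivity) (by positivity), Real.log_mul (by positivity) (by positivity)]
  ring

lemma r_lim : Tendsto (fun k : ℕ => (Real.log (20 * ((Mk k * zz^(15*k) * ((15*k:ℕ)+1)^2) * (|KK|+1))) - Real.log (WW (14*k)))/k) atTop (𝓝 rhoC) := by
  have f1 := fc_lim 197 (by norm_num)
  have f2 := fc_lim 167 (by norm_num)
  have f3 := fc_lim 169 (by norm_num)
  have f4 := fc_lim 139 (by norm_num)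
  have f5 := fc_lim 141 (by norm_num)
  have f6 := fc_lim 111 (by norm_num)
  have c1 := tht_cos_pos (197:ℕ)
  have c2 := tht_cos_pos (167:ℕ)
  have c3 := tht_cos_pos (169:ℕ)
  have c4 := tht_cos_pos (139:ℕ)
  have c5 := tht_cos_pos (141:ℕ)
  have c6 := tht_cos_pos (111:ℕ)
  have hcst := tendsto_const_div_atTop_nhds_zero_nat (Real.log 20 + Real.log (|KK|+1) - 2*(Real.log (Real.cos (tht (197:ℕ))) + Real.log (Real.cos (tht (167:ℕ))) + Real.log (Real.cos (tht (169:ℕ))) + Real.log (Real.cos (tht (139:ℕ))) + Real.log (Real.cos (tht (141:ℕ))) + Real.log (Real.cos (tht (111:ℕ)))))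
  have hl := (((log_div 197).add (log_div 169)).add (log_div 141)).add ((log_div 15).const_mul 2)
  have hz : Tendsto (fun k : ℕ => 15*lam) atTop (𝓝 (15*lam)) := tendsto_const_nhds
  have := ((((((((f1.add f2).add f3).add f4).add f5).add f6).sub WW_lim).add hz).add hcst).add hl
  simp only [add_zero, mul_zero] at this
  refine this.congr' ?_
  filter_upwards [eventually_ge_atTop 1] with k hk
  have hk' : (0:ℝ) < k := by exact_mod_cast hk
  have g1 := fc_pos 197 k
  have g2 := fc_pos 167 k
  have g3 := fc_pos 169 k
  have g4 := fc_pos 139 k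
  have g5 := fc_pos 141 k
  have g6 := fc_pos 111 k
  have hM := Mk_pos k
  have hzz := pow_pos zz_pos (15*k)
  have hML : Real.log (Mk k) = Real.log (((197*k:ℕ):ℝ)+1) + Real.log (((169*k:ℕ):ℝ)+1) + Real.log (((141*k:ℕ):ℝ)+1)
     + (Real.log (fc 197 k) + Real.log (fc 167 k) + Real.log (fc 169 k) + Real.log (fc 139 k) + Real.log (fc 141 k) + Real.log (fc 111 k))
     - 2*(Real.log (Real.cos (tht (197:ℕ))) + Real.log (Real.cos (tht (167:ℕ))) + Real.log (Real.cos (tht (169:ℕ))) + Real.log (Real.cos (tht (139:ℕ))) + Real.log (Real.cos (tht (141:ℕ))) + Real.log (Real.cos (tht (111:ℕ)))) := by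
    have hp : ∀ a a' : ℕ, 0 < fc a k → 0 < fc a' k → 0 < Real.cos (tht a) → 0 < Real.cos (tht a') → 0 < ((((a*k:ℕ):ℝ)+1) * (fc a k / Real.cos (tht a) ^ 2) * (fc a' k / Real.cos (tht a') ^ 2)) ∧ Real.log ((((a*k:ℕ):ℝ)+1) * (fc a k / Real.cos (tht a) ^ 2) * (fc a' k / Real.cos (tht a') ^ 2)) =
       Real.log (((a*k:ℕ):ℝ)+1) + (Real.log (fc a k) + Real.log (fc a' k)) - 2*(Real.log (Real.cos (tht a)) + Real.log (Real.cos (tht a'))) := by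
      intro a a' h1 h2 h3 h4
      refine ⟨by positivity, ?_⟩
      rw [Real.log_mul (by positivity) (by positivity), Real.log_mul (by positivity) (by positivity), Real.log_div (by positivity) (by positivity), Real.log_div (by positivity) (by positivity), Real.log_pow, Real.log_pow]
      push_cast
      ring
    have p1 := hp 197 167 g1 g2 c1 c2
    have p2 := hp 169 139 g3 g4 c3 c4
    have p3 := hp 141 111 g5 g6 c5 c6
    unfold Mk
    rw [Real.log_mul (mul_pos p1.1 p2.1).ne' p3.1.ne', Real.log_mul p1.1.ne' p2.1.ne', p1.2, p2.2, p3.2]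
    ring
  have hKK : 0 < |KK|+1 := by positivity
  have e : Real.log (20 * ((Mk k * zz^(15*k) * ((15*k:ℕ)+1)^2) * (|KK|+1))) = Real.log 20 + Real.log (|KK|+1) + Real.log (Mk k) + 15*k*lam + 2*Real.log (((15*k:ℕ):ℝ)+1) := by
    rw [Real.log_mul (by positivity) (by positivity), Real.log_mul (by positivity) (by positivity), Real.log_mul (by positivity) (by positivity), Real.log_mul (by positivity) (by positivity), Real.log_pow, Real.log_pow]
    unfold lam
    push_cast
    ring
  rw [e, hML]
  field_simp
  push_cast
  ring

theorem r_final (ρ : ℝ) (hρ : rhoC < ρ) : ∀ᶠ k : ℕ in atTop, ∀ j ≤ 2,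
    |SS (Rk k * Polynomial.X^j).derivative + lam * SS (Rk k * Polynomial.X^j)| ≤ Real.exp (ρ*k) * WW (14*k) ∧
    |SS (Rk k * Polynomial.X^j).derivative.derivative + 2*lam*SS (Rk k * Polynomial.X^j).derivative + lam^2*SS (Rk k * Polynomial.X^j)| ≤ Real.exp (ρ*k) * WW (14*k) := by
  filter_upwards [r_lim.eventually_lt_const hρ, eventually_ge_atTop 1] with k hk hk1 j hj
  have hk' : (0:ℝ) < k := by exact_mod_cast hk1
  have hM := Mk_pos k
  have hzz := pow_pos zz_pos (15*k)
  have hpos : 0 < 20 * ((Mk k * zz^(15*k) * ((15*k:ℕ)+1)^2) * (|KK|+1)) := by positivity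
  have hW : (0:ℝ) < WW (14*k) := by unfold WW; positivity
  rw [div_lt_iff₀ hk'] at hk
  have hb : 20 * ((Mk k * zz^(15*k) * ((15*k:ℕ)+1)^2) * (|KK|+1)) ≤ Real.exp (ρ*k) * WW (14*k) := by
    rw [← Real.log_le_log_iff hpos (by positivity), Real.log_mul (x := Real.exp (ρ*k)) (by positivity) (by positivity), Real.log_exp]
    linarith
  have := r_bound k j hk1 hj
  exact ⟨this.1.trans hb, this.2.trans hb⟩
end

section
open Filter Topology

lemma choose_le (N M : ℕ) (t : ℝ) (h0 : 0 < t) (h1 : t < 1) : ((N+M).choose M : ℝ) ≤ (1/t)^N * (1/(1-t)^(M+1)) := by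
  have h := hasSum_choose_mul_geometric_of_norm_lt_one M (r := t) (by rw [Real.norm_of_nonneg h0.le]; exact h1)
  have := le_hasSum h N (fun i _ => by positivity)
  rw [one_div t, inv_pow, ← div_eq_inv_mul, le_div_iff₀ (by positivity)]
  exact this

lemma PP_le (B v : ℕ) (t : ℝ) (h0 : 0 < t) (h1 : t < 1) : 0 ≤ (PP B).eval (v:ℝ) ∧ (PP B).eval (v:ℝ) ≤
    ((2*B+1:ℕ):ℝ) * ((2*B).factorial:ℝ) * (t^(B+1) / (1-t)^(2*B+2)) * (1/t)^v := by
  have h2 : 0 < 1 - t := by linarith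
  rw [PP_eval]
  refine ⟨by positivity, ?_⟩
  rcases Nat.lt_or_ge B v with h | h
  · obtain ⟨i, rfl⟩ : ∃ i, v = i + (B+1) := ⟨v-(B+1), by omega⟩
    rw [Nat.descFactorial_eq_factorial_mul_choose]
    have e : i + (B+1) + B = i + (2*B+1) := by ring
    rw [e]
    have := choose_le i (2*B+1) t h0 h1
    calc (((2*B+1).factorial * (i+(2*B+1)).choose (2*B+1) : ℕ):ℝ) = ((2*B+1).factorial:ℝ) * ((i+(2*B+1)).choose (2*B+1):ℝ) := by push_cast; ring
      _ ≤ ((2*B+1).factorial:ℝ) * ((1/t)^i * (1/(1-t)^(2*B+1+1))) := by gcongr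
      _ = _ := by
        rw [Nat.factorial_succ, pow_add (1/t) i (B+1)]
        push_cast
        field_simp
        rw [← mul_pow, mul_one_div_cancel h0.ne', one_pow]
  · rw [Nat.descFactorial_of_lt (by omega)]
    simp only [Nat.cast_zero]
    positivity

noncomputable def t1 : ℝ := (149083-13000)/(149083+13000)
noncomputable def t2 : ℝ := (149083-11000)/(149083+11000)
noncomputable def t3 : ℝ := (149083-9000)/(149083+9000)

lemma ttt : zz < t1*t2*t3 := by
  have h : (45825756949:ℝ)/10^10 < √21 := by
    apply Real.lt_sqrt_of_sq_lt; norm_num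
  rw [zz_eq]
  have : (11 - (45825756949:ℝ)/10^10)/10 < t1*t2*t3 := by
    unfold t1 t2 t3; norm_num
  linarith

noncomputable def gD (b : ℕ) (t : ℝ) : ℝ := b*Real.log t - 2*b*Real.log (1-t)
noncomputable def rhoD : ℝ := gD 182 t1 + gD 154 t2 + gD 126 t3

noncomputable def KD : ℝ := ∑' v : ℕ, ((v:ℝ)^2+1) * (zz/(t1*t2*t3))^v

lemma t_facts : (0 < t1 ∧ t1 < 1) ∧ (0 < t2 ∧ t2 < 1) ∧ (0 < t3 ∧ t3 < 1) := by
  unfold t1 t2 t3; norm_num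

lemma KD_summ : Summable fun v : ℕ => ((v:ℝ)^2+1) * (zz/(t1*t2*t3))^v := by
  obtain ⟨⟨a1,b1⟩,⟨a2,b2⟩,⟨a3,b3⟩⟩ := t_facts
  have hp : 0 < t1*t2*t3 := by positivity
  have hn : ‖zz/(t1*t2*t3)‖ < 1 := by
    rw [Real.norm_of_nonneg (div_nonneg zz_pos.le hp.le), div_lt_one hp]; exact ttt
  have h1 := summable_pow_mul_geometric_of_norm_lt_one 2 hn
  have h2 := summable_geometric_of_norm_lt_one hn
  refine (h1.add h2).congr fun v => ?_
  ring

noncomputable def cD (b k : ℕ) (t : ℝ) : ℝ := ((2*(b*k)+1:ℕ):ℝ) * ((2*(b*k)).factorial:ℝ) * (t^(b*k+1) / (1-t)^(2*(b*k)+2))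

lemma cD_nonneg (b k : ℕ) (t : ℝ) (h0 : 0 < t) (h1 : t < 1) : 0 < cD b k t := by
  have h2 : 0 < 1 - t := by linarith
  unfold cD; positivity

lemma G0_bound (k j : ℕ) (hj : j ≤ 2) : |SS (Rk k * Polynomial.X^j)| ≤ (cD 182 k t1 * cD 154 k t2 * cD 126 k t3) * KD := by
  obtain ⟨⟨a1,b1⟩,⟨a2,b2⟩,⟨a3,b3⟩⟩ := t_facts
  have hz := zz_pos
  have p1 := cD_nonneg 182 k t1 a1 b1
  have p2 := cD_nonneg 154 k t2 a2 b2
  have p3 := cD_nonneg 126 k t3 a3 b3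
  have hterm : ∀ v : ℕ, ‖(Rk k * Polynomial.X^j).eval (v:ℝ) * zz^v‖ ≤ (cD 182 k t1 * cD 154 k t2 * cD 126 k t3) * (((v:ℝ)^2+1) * (zz/(t1*t2*t3))^v) := by
    intro v
    obtain ⟨q1, r1⟩ := PP_le (182*k) v t1 a1 b1
    obtain ⟨q2, r2⟩ := PP_le (154*k) v t2 a2 b2
    obtain ⟨q3, r3⟩ := PP_le (126*k) v t3 a3 b3
    unfold Rk
    rw [Polynomial.eval_mul, Polynomial.eval_mul, Polynomial.eval_mul, Polynomial.eval_pow, Polynomial.eval_X, Real.norm_of_nonneg (by positivity)]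
    have hv : (v:ℝ)^j ≤ (v:ℝ)^2+1 := by
      rcases Nat.eq_zero_or_pos v with h | h
      · subst h
        interval_cases j <;> norm_num
      · have : (1:ℝ) ≤ v := by exact_mod_cast h
        have := pow_le_pow_right₀ this hj
        linarith
    change _ ≤ cD 182 k t1 * (1/t1)^v at r1
    change _ ≤ cD 154 k t2 * (1/t2)^v at r2
    change _ ≤ cD 126 k t3 * (1/t3)^v at r3
    calc _ ≤ (cD 182 k t1 * (1/t1)^v) * (cD 154 k t2 * (1/t2)^v) * (cD 126 k t3 * (1/t3)^v) * ((v:ℝ)^2+1) * zz^v := by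
          gcongr
      _ = _ := by
          have : zz/(t1*t2*t3) = (1/t1)*(1/t2)*(1/t3)*zz := by field_simp
          rw [this, mul_pow, mul_pow, mul_pow]
          ring
  unfold SS
  rw [← Real.norm_eq_abs]
  unfold KD
  rw [← tsum_mul_left]
  exact tsum_of_norm_bounded (KD_summ.mul_left _).hasSum hterm

theorem G0_final (ρ : ℝ) (hρ : rhoD < ρ) : ∀ᶠ k : ℕ in atTop, ∀ j ≤ 2, |SS (Rk k * Polynomial.X^j)| ≤ Real.exp (ρ*k) * WW (14*k) := by
  obtain ⟨⟨a1,b1⟩,⟨a2,b2⟩,⟨a3,b3⟩⟩ := t_facts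
  have hc : ∀ (b k : ℕ) (t : ℝ), 0 < t → t < 1 → cD b k t = ((2*b*k:ℕ)+1) * (t/(1-t)^2) * ((2*(b*k)).factorial:ℝ) * Real.exp (gD b t * k) := by
    intro b k t h0 h1
    have h2 : 0 < 1 - t := by linarith
    have e : Real.exp (gD b t * k) = t^(b*k) / (1-t)^(2*(b*k)) := by
      unfold gD
      have : (b*Real.log t - 2*b*Real.log (1-t))*k = (b*k:ℕ) * Real.log t - (2*(b*k):ℕ) * Real.log (1-t) := by push_cast; ring
      rw [this, Real.exp_sub, Real.exp_nat_mul, Real.exp_nat_mul, Real.exp_log h0, Real.exp_log h2]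
    rw [e]
    unfold cD
    rw [pow_succ, pow_add]
    push_cast
    field_simp
  set C := (t1/(1-t1)^2) * (t2/(1-t2)^2) * (t3/(1-t3)^2) * (|KD|+1) with hC
  have h1 : 0 < 1 - t1 := by linarith
  have h2 : 0 < 1 - t2 := by linarith
  have h3 : 0 < 1 - t3 := by linarith
  have hCpos : 0 < C := by rw [hC]; positivity
  have hl := ((((log_div 364).add (log_div 308)).add (log_div 252)).add (tendsto_const_div_atTop_nhds_zero_nat (Real.log C))).add (tendsto_const_nhds (x := rhoD))
  simp only [zero_add] at hl
  filter_upwards [hl.eventually_lt_const hρ, eventually_ge_atTop 1] with k hk hk1 j hj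
  have hk' : (0:ℝ) < k := by exact_mod_cast hk1
  refine (G0_bound k j hj).trans ?_
  have p1 := cD_nonneg 182 k t1 a1 b1
  have p2 := cD_nonneg 154 k t2 a2 b2
  have p3 := cD_nonneg 126 k t3 a3 b3
  have hW : (WW (14*k):ℝ) = ((2*(182*k)).factorial:ℝ) * ((2*(154*k)).factorial:ℝ) * ((2*(126*k)).factorial:ℝ) := by
    unfold WW
    rw [← mul_assoc 26, ← mul_assoc 22, ← mul_assoc 18, ← mul_assoc 2, ← mul_assoc 2, ← mul_assoc 2]
    push_cast
    rfl
  have e364 : 2*182*k = 364*k := by norm_num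
  have e308 : 2*154*k = 308*k := by norm_num
  have e252 : 2*126*k = 252*k := by norm_num
  calc _ ≤ (cD 182 k t1 * cD 154 k t2 * cD 126 k t3) * (|KD|+1) := by
        apply mul_le_mul_of_nonneg_left _ (by positivity)
        linarith [le_abs_self KD]
    _ = (((364*k:ℕ):ℝ)+1) * (((308*k:ℕ):ℝ)+1) * (((252*k:ℕ):ℝ)+1) * C * Real.exp (rhoD*k) * WW (14*k) := by
        rw [hc _ _ _ a1 b1, hc _ _ _ a2 b2, hc _ _ _ a3 b3, hW, e364, e308, e252, hC]
        have : Real.exp (rhoD*k) = Real.exp (gD 182 t1 * k) * Real.exp (gD 154 t2 * k) * Real.exp (gD 126 t3 * k) := by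
          rw [← Real.exp_add, ← Real.exp_add]; unfold rhoD; ring_nf
        rw [this]
        ring
    _ ≤ _ := by
        apply mul_le_mul_of_nonneg_right _ (by positivity)
        rw [← Real.log_le_log_iff (by positivity) (by positivity), Real.log_exp, Real.log_mul (by positivity) (by positivity), Real.log_mul (by positivity) (by positivity), Real.log_mul (by positivity) (by positivity), Real.log_mul (by positivity) (by positivity), Real.log_exp]
        rw [← add_div, ← add_div, ← add_div, div_add' _ _ _ hk'.ne', div_lt_iff₀ hk'] at hk
        exact hk.le
end

section
open Filter Topology

lemma log_ub (y u : ℝ) (a b c : ℤ) (hy : 0 < y) (hu : 0 < u) (h : y ≤ 2^a*3^b*5^c*u) :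
    Real.log y ≤ a*Real.log 2 + b*Real.log 3 + c*Real.log 5 + (u-1) := by
  have h1 := Real.log_le_log hy h
  rw [Real.log_mul (by positivity) (by positivity), Real.log_mul (by positivity) (by positivity), Real.log_mul (by positivity) (by positivity),
    Real.log_zpow, Real.log_zpow, Real.log_zpow] at h1
  linarith [Real.log_le_sub_one_of_pos hu]

lemma log_lb (y v : ℝ) (a b c : ℤ) (hy : 0 < y) (hv : 0 < v) (h : 2^a*3^b*5^c ≤ y*v) :
    a*Real.log 2 + b*Real.log 3 + c*Real.log 5 + (1-v) ≤ Real.log y := by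
  have h1 := Real.log_le_log (by positivity) h
  rw [Real.log_mul (by positivity) (by positivity), Real.log_mul (by positivity) (by positivity), Real.log_mul (x := y) (by positivity) (by positivity),
    Real.log_zpow, Real.log_zpow, Real.log_zpow] at h1
  linarith [Real.log_le_sub_one_of_pos hv]

lemma lgy197 : Real.log ((197:ℝ)^2+(216923/2500)^2) ≤ -11*Real.log 2 + (5)*Real.log 3 + (8)*Real.log 5 + (-2303783/10000000000) :=
  (log_ub _ (9997696217/10000000000) (-11) (5) (8) (by norm_num) (by norm_num) (by norm_num)).trans (by norm_num)
lemma lgy167 : Real.log ((167:ℝ)^2+(216923/2500)^2) ≤ 0*Real.log 2 + (11)*Real.log 3 + (-1)*Real.log 5 + (-649513/2000000000) :=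
  (log_ub _ (1999350487/2000000000) (0) (11) (-1) (by norm_num) (by norm_num) (by norm_num)).trans (by norm_num)
lemma lgy169 : Real.log ((169:ℝ)^2+(216923/2500)^2) ≤ 28*Real.log 2 + (8)*Real.log 3 + (-11)*Real.log 5 + (5659943/10000000000) :=
  (log_ub _ (10005659943/10000000000) (28) (8) (-11) (by norm_num) (by norm_num) (by norm_num)).trans (by norm_num)
lemma lgy139 : Real.log ((139:ℝ)^2+(216923/2500)^2) ≤ -29*Real.log 2 + (10)*Real.log 3 + (12)*Real.log 5 + (-924407/10000000000) :=
  (log_ub _ (9999075593/10000000000) (-29) (10) (12) (by norm_num) (by norm_num) (by norm_num)).trans (by norm_num)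
lemma lgy141 : Real.log ((141:ℝ)^2+(216923/2500)^2) ≤ 23*Real.log 2 + (-14)*Real.log 3 + (6)*Real.log 5 + (273453/1250000000) :=
  (log_ub _ (1250273453/1250000000) (23) (-14) (6) (by norm_num) (by norm_num) (by norm_num)).trans (by norm_num)
lemma lgy111 : Real.log ((111:ℝ)^2+(216923/2500)^2) ≤ 3*Real.log 2 + (-9)*Real.log 3 + (11)*Real.log 5 + (2059903/10000000000) :=
  (log_ub _ (10002059903/10000000000) (3) (-9) (11) (by norm_num) (by norm_num) (by norm_num)).trans (by norm_num)
lemma lgz : Real.log ((64174243051/10^11:ℝ)) ≤ 13*Real.log 2 + (-13)*Real.log 3 + (3)*Real.log 5 + (-2088093/2500000000) :=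
  (log_ub _ (2497911907/2500000000) (13) (-13) (3) (by norm_num) (by norm_num) (by norm_num)).trans (by norm_num)
lemma lgw364 : 14*Real.log 2 + (-2)*Real.log 3 + (-1)*Real.log 5 + (-2442003/10000000000) ≤ Real.log (364:ℝ) :=
  le_trans (by norm_num) (log_lb _ (10002442003/10000000000) (14) (-2) (-1) (by norm_num) (by norm_num) (by norm_num))
lemma lgw308 : 18*Real.log 2 + (-12)*Real.log 3 + (4)*Real.log 5 + (-9541077/10000000000) ≤ Real.log (308:ℝ) :=
  le_trans (by norm_num) (log_lb _ (10009541077/10000000000) (18) (-12) (4) (by norm_num) (by norm_num) (by norm_num))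
lemma lgw252 : 3*Real.log 2 + (9)*Real.log 3 + (-4)*Real.log 5 + (1142857/5000000000) ≤ Real.log (252:ℝ) :=
  le_trans (by norm_num) (log_lb _ (4998857143/5000000000) (3) (9) (-4) (by norm_num) (by norm_num) (by norm_num))
lemma lgt1 : Real.log ((149083-13000)/(149083+13000):ℝ) ≤ 1*Real.log 2 + (8)*Real.log 3 + (-6)*Real.log 5 + (-2615371/10000000000) :=
  (log_ub _ (9997384629/10000000000) (1) (8) (-6) (by norm_num) (by norm_num) (by norm_num)).trans (by norm_num)
lemma lgs1 : 11*Real.log 2 + (-13)*Real.log 3 + (3)*Real.log 5 + (-4927339/5000000000) ≤ Real.log (1-(149083-13000)/(149083+13000):ℝ) :=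
  le_trans (by norm_num) (log_lb _ (5004927339/5000000000) (11) (-13) (3) (by norm_num) (by norm_num) (by norm_num))
lemma lgt2 : Real.log ((149083-11000)/(149083+11000):ℝ) ≤ -21*Real.log 2 + (-3)*Real.log 3 + (11)*Real.log 5 + (2731813/10000000000) :=
  (log_ub _ (10002731813/10000000000) (-21) (-3) (11) (by norm_num) (by norm_num) (by norm_num)).trans (by norm_num)
lemma lgs2 : 25*Real.log 2 + (0)*Real.log 3 + (-12)*Real.log 5 + (-14909/200000000) ≤ Real.log (1-(149083-11000)/(149083+11000):ℝ) :=
  le_trans (by norm_num) (log_lb _ (200014909/200000000) (25) (0) (-12) (by norm_num) (by norm_num) (by norm_num))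
lemma lgt3 : Real.log ((149083-9000)/(149083+9000):ℝ) ≤ -6*Real.log 2 + (11)*Real.log 3 + (-5)*Real.log 5 + (4524651/10000000000) :=
  (log_ub _ (10004524651/10000000000) (-6) (11) (-5) (by norm_num) (by norm_num) (by norm_num)).trans (by norm_num)
lemma lgs3 : -8*Real.log 2 + (6)*Real.log 3 + (-2)*Real.log 5 + (-922461/2500000000) ≤ Real.log (1-(149083-9000)/(149083+9000):ℝ) :=
  le_trans (by norm_num) (log_lb _ (2500922461/2500000000) (-8) (6) (-2) (by norm_num) (by norm_num) (by norm_num))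

lemma log_cos_tht (a : ℕ) (ha : 0 < a) : fl a = a/2*Real.log ((a:ℝ)^2+(216923/2500)^2) - a := by
  have ha' : (0:ℝ) < a := by exact_mod_cast ha
  unfold fl tht tau
  rw [Real.cos_arctan, one_div, Real.log_inv, Real.log_sqrt (by positivity)]
  have : 1 + (216923/2500/(a:ℝ))^2 = ((a:ℝ)^2+(216923/2500)^2)/(a:ℝ)^2 := by field_simp
  rw [this, Real.log_div (by positivity) (by positivity), Real.log_pow]
  push_cast
  ring

lemma lam_ub : lam ≤ Real.log (64174243051/10^11:ℝ) := by
  unfold lam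
  apply Real.log_le_log zz_pos
  rw [zz_eq]
  have h : (45825756949:ℝ)/10^10 < √21 := by
    apply Real.lt_sqrt_of_sq_lt; norm_num
  linarith

lemma log5_facts : 1.6094379122 < Real.log 5 ∧ Real.log 5 < 1.6094379126 := by
  have := abs_le.1 Real.log_five_near_10
  constructor <;> norm_num <;> linarith [this.1, this.2]

lemma rhoC_lt : rhoC < -513.4613 := by
  unfold rhoC
  rw [log_cos_tht 197 (by norm_num), log_cos_tht 167 (by norm_num), log_cos_tht 169 (by norm_num), log_cos_tht 139 (by norm_num), log_cos_tht 141 (by norm_num), log_cos_tht 111 (by norm_num)]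
  unfold wl
  push_cast
  have h5 := log5_facts
  linarith [lgy197, lgy167, lgy169, lgy139, lgy141, lgy111, lgw364, lgw308, lgw252, lgz, lam_ub, Real.log_two_gt_d9, Real.log_two_lt_d9, Real.log_three_gt_d9, Real.log_three_lt_d9, h5.1, h5.2]

lemma rhoD_lt : rhoD < 1755.1110 := by
  unfold rhoD gD t1 t2 t3
  push_cast
  have h5 := log5_facts
  linarith [lgt1, lgt2, lgt3, lgs1, lgs2, lgs3, Real.log_two_gt_d9, Real.log_two_lt_d9, Real.log_three_gt_d9, Real.log_three_lt_d9, h5.1, h5.2]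
end

section
open Polynomial

noncomputable def phi (c0 c1 c2 : ℝ) : ℝ[X] →ₗ[ℝ] ℝ[X] where
  toFun f := C c0 * f + C c1 * derivative f + C c2 * derivative (derivative f)
  map_add' f g := by simp only [derivative_add]; ring
  map_smul' a f := by simp only [smul_eq_C_mul, RingHom.id_apply, derivative_C_mul]; ring

noncomputable def TT (c0 c1 c2 : ℝ) : ℝ[X] →ₗ[ℝ] ℝ where
  toFun f := SS (phi c0 c1 c2 f)
  map_add' f g := by rw [map_add, SS_add]
  map_smul' a f := by rw [map_smul, smul_eq_C_mul, SS_C_mul]; rfl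

lemma phi_apply (c0 c1 c2 : ℝ) (f : ℝ[X]) : phi c0 c1 c2 f = C c0 * f + C c1 * derivative f + C c2 * derivative (derivative f) := rfl

lemma phi_comp (c0 c1 c2 a : ℝ) (f : ℝ[X]) : phi c0 c1 c2 (f.comp (X + C a)) = (phi c0 c1 c2 f).comp (X + C a) := by
  simp only [phi_apply, derivative_comp, derivative_add, derivative_X, derivative_C, add_zero, one_mul, add_comp, mul_comp, C_comp]

lemma SS_shift (q : ℝ[X]) : SS q = q.eval 0 + zz * SS (q.comp (X + C 1)) := by
  unfold SS
  rw [(summ_poly q).tsum_eq_zero_add, ← tsum_mul_left]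
  simp only [Nat.cast_zero, pow_zero, mul_one]
  congr 1
  apply tsum_congr
  intro v
  simp only [eval_comp, eval_add, eval_X, eval_C]
  push_cast
  ring

lemma SS_shift_k (q : ℝ[X]) (k : ℕ) : SS q = ∑ v ∈ Finset.range k, q.eval (v:ℝ) * zz^v + zz^k * SS (q.comp (X + C (k:ℝ))) := by
  induction k with
  | zero => simp
  | succ k ih =>
    rw [ih, Finset.sum_range_succ, SS_shift (q.comp (X + C (k:ℝ)))]
    have : (q.comp (X + C (k:ℝ))).comp (X + C 1) = q.comp (X + C ((k+1:ℕ):ℝ)) := by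
      rw [comp_assoc]
      congr 1
      simp only [add_comp, X_comp, C_comp]
      rw [add_assoc, ← C_add]; push_cast; rw [add_comm (1:ℝ)]
    rw [this]
    simp only [eval_comp, eval_add, eval_X, eval_C, zero_add]
    ring

lemma PP_shift (B : ℕ) : (PP B).comp (X + C 1) * (X - C (B:ℝ)) = PP B * (X + C ((B:ℝ)+1)) := by
  induction B with
  | zero => simp [PP_zero]; ring
  | succ B ih =>
    rw [PP_succ]
    simp only [mul_comp, add_comp, sub_comp, X_comp, C_comp]
    have hC : C (((B+1:ℕ):ℝ)) = C (B:ℝ) + 1 := by push_cast; simp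
    have hC2 : C ((B:ℝ)+1) = C (B:ℝ) + 1 := by simp
    have hC3 : C (((B+1:ℕ):ℝ)+1) = C (B:ℝ) + 2 := by push_cast; rw [add_assoc]; simp; norm_num
    rw [hC, hC2, hC3]
    rw [hC2] at ih
    simp only [map_one] at ih ⊢
    linear_combination (X - C (B:ℝ) - 1) * (X + C (B:ℝ) + 2) * ih

section
variable (B1 B2 B3 : ℕ) (c0 c1 c2 : ℝ)

noncomputable def RR : ℝ[X] := PP B1 * PP B2 * PP B3
noncomputable def Am : ℝ[X] := (X - C ((B1:ℝ)+1)) * (X - C ((B2:ℝ)+1)) * (X - C ((B3:ℝ)+1))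
noncomputable def Ap : ℝ[X] := (X + C ((B1:ℝ)+1)) * (X + C ((B2:ℝ)+1)) * (X + C ((B3:ℝ)+1))

lemma phi_triple (a b c u : ℝ[X]) (x : ℝ) (ha : a.eval x = 0) (hb : b.eval x = 0) (hc : c.eval x = 0) :
    (phi c0 c1 c2 (a*b*c*u)).eval x = 0 := by
  simp [phi_apply, derivative_mul, ha, hb, hc]

lemma TT_theta (g : ℝ[X]) : TT c0 c1 c2 (RR B1 B2 B3 * (Am B1 B2 B3 * g - C zz * (Ap B1 B2 B3 * g.comp (X + C 1)))) = 0 := by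
  have h1 : TT c0 c1 c2 (RR B1 B2 B3 * (Am B1 B2 B3 * g)) = zz * TT c0 c1 c2 (RR B1 B2 B3 * (Ap B1 B2 B3 * g.comp (X + C 1))) := by
    change SS _ = zz * SS _
    rw [SS_shift, ← phi_comp]
    have h0 : (phi c0 c1 c2 (RR B1 B2 B3 * (Am B1 B2 B3 * g))).eval 0 = 0 := by
      unfold RR
      apply phi_triple
      all_goals
        have := PP_eval_eq_zero (c := B1) (Nat.zero_le _)
        have := PP_eval_eq_zero (c := B2) (Nat.zero_le _)
        have := PP_eval_eq_zero (c := B3) (Nat.zero_le _)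
        simp_all
    rw [h0, zero_add]
    congr 3
    unfold RR Am Ap
    have e1 := PP_shift B1
    have e2 := PP_shift B2
    have e3 := PP_shift B3
    simp only [mul_comp, sub_comp, X_comp, C_comp]
    have hs : ∀ B : ℕ, (X + C 1 - C ((B:ℝ)+1) : ℝ[X]) = X - C (B:ℝ) := by
      intro B; simp
    rw [hs, hs, hs]
    calc _ = ((PP B1).comp (X + C 1) * (X - C (B1:ℝ))) * ((PP B2).comp (X + C 1) * (X - C (B2:ℝ))) * ((PP B3).comp (X + C 1) * (X - C (B3:ℝ))) * g.comp (X + C 1) := by ring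
      _ = _ := by rw [e1, e2, e3]; ring
  have h2 : RR B1 B2 B3 * (Am B1 B2 B3 * g - C zz * (Ap B1 B2 B3 * g.comp (X + C 1))) = RR B1 B2 B3 * (Am B1 B2 B3 * g) - zz • (RR B1 B2 B3 * (Ap B1 B2 B3 * g.comp (X + C 1))) := by
    rw [smul_eq_C_mul]; ring
  rw [h2, map_sub, map_smul, h1, smul_eq_mul, sub_self]

lemma Am_monic : (Am B1 B2 B3).Monic := ((monic_X_sub_C _).mul (monic_X_sub_C _)).mul (monic_X_sub_C _)
lemma Ap_monic : (Ap B1 B2 B3).Monic := ((monic_X_add_C _).mul (monic_X_add_C _)).mul (monic_X_add_C _)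
lemma Am_deg : (Am B1 B2 B3).natDegree = 3 := by
  unfold Am
  rw [((monic_X_sub_C _).mul (monic_X_sub_C _)).natDegree_mul (monic_X_sub_C _), (monic_X_sub_C _).natDegree_mul (monic_X_sub_C _)]
  simp only [natDegree_X_sub_C]
lemma Ap_deg : (Ap B1 B2 B3).natDegree = 3 := by
  unfold Ap
  rw [((monic_X_add_C _).mul (monic_X_add_C _)).natDegree_mul (monic_X_add_C _), (monic_X_add_C _).natDegree_mul (monic_X_add_C _)]
  simp only [natDegree_X_add_C]

lemma monic_sub_lt (p : ℝ[X]) (hp : p.Monic) (d : ℕ) (hd : p.natDegree = d) : (p - X^d).degree < (d:WithBot ℕ) := by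
  have h := degree_sub_lt_left (p := p) (q := X^d) (by rw [degree_X_pow, degree_eq_natDegree hp.ne_zero, hd]) hp.ne_zero (by rw [hp.leadingCoeff, (monic_X_pow d).leadingCoeff])
  rwa [degree_eq_natDegree hp.ne_zero, hd] at h

lemma TT_all (h : ∀ j ≤ 2, TT c0 c1 c2 (RR B1 B2 B3 * X^j) = 0) (g : ℝ[X]) : TT c0 c1 c2 (RR B1 B2 B3 * g) = 0 := by
  have hlow : ∀ d : ℕ, (∀ j < d, TT c0 c1 c2 (RR B1 B2 B3 * X^j) = 0) → ∀ q : ℝ[X], q.degree < (d:WithBot ℕ) → TT c0 c1 c2 (RR B1 B2 B3 * q) = 0 := by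
    intro d hd q hq
    rcases Nat.eq_zero_or_pos d with h0 | h0
    · subst h0
      have : q = 0 := by
        rw [← degree_eq_bot]
        exact Nat.WithBot.lt_zero_iff.1 hq
      simp [this]
    · have hq' : q.natDegree < d := by
        by_cases hq0 : q = 0
        · simp [hq0, h0]
        · exact (natDegree_lt_iff_degree_lt hq0).2 hq
      rw [q.as_sum_range_C_mul_X_pow' hq', Finset.mul_sum, map_sum]
      apply Finset.sum_eq_zero
      intro i hi
      have : RR B1 B2 B3 * (C (q.coeff i) * X^i) = q.coeff i • (RR B1 B2 B3 * X^i) := by rw [smul_eq_C_mul]; ring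
      rw [this, map_smul, hd i (Finset.mem_range.1 hi), smul_zero]
  have hpow : ∀ d : ℕ, TT c0 c1 c2 (RR B1 B2 B3 * X^d) = 0 := by
    intro d
    induction d using Nat.strong_induction_on with
    | _ d ih =>
      rcases Nat.lt_or_ge d 3 with hd | hd
      · exact h d (by omega)
      · obtain ⟨e, rfl⟩ : ∃ e, d = e + 3 := ⟨d-3, by omega⟩
        have hth := TT_theta B1 B2 B3 c0 c1 c2 (X^e)
        have hm : ((X + C 1 : ℝ[X])^e).Monic := (monic_X_add_C 1).pow e
        have d1 : (Am B1 B2 B3 * X^e - X^(e+3)).degree < ((e+3:ℕ):WithBot ℕ) := by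
          apply monic_sub_lt _ ((Am_monic B1 B2 B3).mul (monic_X_pow e))
          rw [(Am_monic B1 B2 B3).natDegree_mul (monic_X_pow e), Am_deg, natDegree_X_pow]; ring
        have d2 : (Ap B1 B2 B3 * (X + C 1)^e - X^(e+3)).degree < ((e+3:ℕ):WithBot ℕ) := by
          apply monic_sub_lt _ ((Ap_monic B1 B2 B3).mul hm)
          rw [(Ap_monic B1 B2 B3).natDegree_mul hm, Ap_deg, (monic_X_add_C 1).natDegree_pow, natDegree_X_add_C]; ring
        have z1 := hlow _ ih _ d1
        have z2 := hlow _ ih _ d2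
        have e0 : RR B1 B2 B3 * (Am B1 B2 B3 * X^e - C zz * (Ap B1 B2 B3 * (X^e : ℝ[X]).comp (X + C 1))) =
            RR B1 B2 B3 * (Am B1 B2 B3 * X^e - X^(e+3)) - zz • (RR B1 B2 B3 * (Ap B1 B2 B3 * (X + C 1)^e - X^(e+3))) + (1-zz) • (RR B1 B2 B3 * X^(e+3)) := by
          rw [smul_eq_C_mul, smul_eq_C_mul, X_pow_comp, C_sub, C_1]; ring
        rw [e0, map_add, map_sub, map_smul, map_smul, z1, z2, smul_zero, sub_zero, zero_add, smul_eq_mul] at hth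
        exact (mul_eq_zero.1 hth).resolve_left one_sub_zz_pos.ne'
  rcases eq_or_ne g 0 with rfl | hg
  · simp
  · apply hlow (g.natDegree+1) (fun j _ => hpow j)
    rw [degree_eq_natDegree hg]
    exact_mod_cast Nat.lt_succ_self _

lemma PP_ne (B v : ℕ) (h : B < v) : (PP B).eval (v:ℝ) ≠ 0 := by
  rw [PP_eval]
  have : (v+B).descFactorial (2*B+1) ≠ 0 := by
    rw [Ne, Nat.descFactorial_eq_zero_iff_lt]; omega
  exact_mod_cast this

lemma PP_ne_neg (B v : ℕ) (h : B < v) : (PP B).eval (-(v:ℝ)) ≠ 0 := by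
  have := congrArg (eval (v:ℝ)) (PP_comp B)
  simp only [eval_comp, eval_neg, eval_X] at this
  rw [this, neg_ne_zero]
  exact PP_ne B v h

lemma phi_p2 (V : ℝ[X]) (x : ℝ) : (phi c0 c1 c2 (V*(X - C x)^2)).eval x = 2*c2*V.eval x := by
  simp [phi_apply, derivative_mul, derivative_pow]; ring
lemma phi_p1 (V : ℝ[X]) (x : ℝ) : (phi c0 c1 c2 (V*(X - C x)^1)).eval x = c1*V.eval x + 2*c2*V.derivative.eval x := by
  simp [phi_apply, derivative_mul]; ring
lemma phi_p0 (V : ℝ[X]) (x : ℝ) : (phi c0 c1 c2 (V*(X - C x)^0)).eval x = c0*V.eval x + c1*V.derivative.eval x + c2*V.derivative.derivative.eval x := by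
  simp [phi_apply]

theorem nonvanish (hc : c0 ≠ 0 ∨ c1 ≠ 0 ∨ c2 ≠ 0) : ∃ j ≤ 2, TT c0 c1 c2 (RR B1 B2 B3 * X^j) ≠ 0 := by
  by_contra hcon
  push Not at hcon
  have hall := TT_all B1 B2 B3 c0 c1 c2 hcon
  set ν := B1 + B2 + B3 + 1 with hν
  set w : ℝ[X] := ∏ v ∈ (Finset.range (2*ν)).erase ν, (X - C (v:ℝ)) with hw
  have hwν : w.eval (ν:ℝ) ≠ 0 := by
    rw [hw, eval_prod, Finset.prod_ne_zero_iff]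
    intro v hv
    rw [eval_sub, eval_X, eval_C, sub_ne_zero]
    have := Finset.ne_of_mem_erase hv
    exact_mod_cast this.symm
  have hwv : ∀ v ∈ (Finset.range (2*ν)).erase ν, w.eval (v:ℝ) = 0 := by
    intro v hv
    rw [hw, eval_prod]
    apply Finset.prod_eq_zero hv
    simp
  have hR1 : (RR B1 B2 B3).eval (ν:ℝ) ≠ 0 := by
    unfold RR
    rw [eval_mul, eval_mul]
    exact mul_ne_zero (mul_ne_zero (PP_ne _ _ (by omega)) (PP_ne _ _ (by omega))) (PP_ne _ _ (by omega))
  have hR2 : (RR B1 B2 B3).eval (-(ν:ℝ)) ≠ 0 := by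
    unfold RR
    rw [eval_mul, eval_mul]
    exact mul_ne_zero (mul_ne_zero (PP_ne_neg _ _ (by omega)) (PP_ne_neg _ _ (by omega))) (PP_ne_neg _ _ (by omega))
  set R := RR B1 B2 B3 with hR
  have key : ∀ e : ℕ, (phi c0 c1 c2 ((R * R.comp (X - C ((2*ν:ℕ):ℝ)) * w^3) * (X - C (ν:ℝ))^e)).eval (ν:ℝ) = 0 := by
    intro e
    set f := (R * R.comp (X - C ((2*ν:ℕ):ℝ)) * w^3) * (X - C (ν:ℝ))^e with hf
    have t1 : TT c0 c1 c2 f = 0 := by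
      have : f = R * (R.comp (X - C ((2*ν:ℕ):ℝ)) * w^3 * (X - C (ν:ℝ))^e) := by rw [hf]; ring
      rw [this]; exact hall _
    have t2 : TT c0 c1 c2 (f.comp (X + C ((2*ν:ℕ):ℝ))) = 0 := by
      have : f.comp (X + C ((2*ν:ℕ):ℝ)) = R * (R.comp (X + C ((2*ν:ℕ):ℝ)) * (w^3).comp (X + C ((2*ν:ℕ):ℝ)) * ((X - C (ν:ℝ))^e).comp (X + C ((2*ν:ℕ):ℝ))) := by
        rw [hf, mul_comp, mul_comp, mul_comp, comp_assoc]
        have : (X - C ((2*ν:ℕ):ℝ) : ℝ[X]).comp (X + C ((2*ν:ℕ):ℝ)) = X := by simp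
        rw [this, comp_X]; ring
      rw [this]; exact hall _
    change SS _ = 0 at t1
    change SS _ = 0 at t2
    rw [phi_comp] at t2
    rw [SS_shift_k _ (2*ν), t2, mul_zero, add_zero, ← Finset.sum_erase_add _ _ (Finset.mem_range.2 (by omega : ν < 2*ν)), Finset.sum_eq_zero, zero_add] at t1
    · exact (mul_eq_zero.1 t1).resolve_right (pow_pos zz_pos _).ne'
    · intro v hv
      have : f = w * w * w * (R * R.comp (X - C ((2*ν:ℕ):ℝ)) * (X - C (ν:ℝ))^e) := by rw [hf]; ring
      rw [this, phi_triple _ _ _ _ _ _ _ _ (hwv v hv) (hwv v hv) (hwv v hv), zero_mul]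
  set V := R * R.comp (X - C ((2*ν:ℕ):ℝ)) * w^3 with hV
  have hVν : V.eval (ν:ℝ) ≠ 0 := by
    rw [hV, eval_mul, eval_mul, eval_comp, eval_pow]
    have : (X - C ((2*ν:ℕ):ℝ) : ℝ[X]).eval (ν:ℝ) = -(ν:ℝ) := by simp; ring
    rw [this]
    exact mul_ne_zero (mul_ne_zero hR1 hR2) (pow_ne_zero _ hwν)
  have k0 := key 0
  have k1 := key 1
  have k2 := key 2
  rw [phi_p2] at k2
  rw [phi_p1] at k1
  rw [phi_p0] at k0
  have h2 : c2 = 0 := by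
    rcases mul_eq_zero.1 k2 with h | h
    · linarith
    · exact absurd h hVν
  rw [h2, mul_zero, zero_mul, add_zero] at k1
  have h1 : c1 = 0 := (mul_eq_zero.1 k1).resolve_right hVν
  rw [h1, h2, zero_mul, zero_mul, add_zero, add_zero] at k0
  have h0 : c0 = 0 := (mul_eq_zero.1 k0).resolve_right hVν
  tauto
end
end

section
open Polynomial

lemma Rk_RR (k : ℕ) : Rk k = RR (182*k) (154*k) (126*k) := rfl

lemma Rk_map (k j : ℕ) : Rk k * X^j = (RZ (14*k) * X^j).map (Int.castRingHom ℝ) := by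
  rw [Polynomial.map_mul, RZ_map, Polynomial.map_pow, map_X, ← mul_assoc 13, ← mul_assoc 11, ← mul_assoc 9]
  rfl

lemma eval_map_int (p : ℤ[X]) (v : ℕ) : (p.map (Int.castRingHom ℝ)).eval (v:ℝ) = ((p.eval (v:ℤ) : ℤ):ℝ) := by
  have := Polynomial.eval_intCast_map (Int.castRingHom ℝ) p (v:ℤ)
  simpa using this

lemma comp_neg_deriv (f : ℝ[X]) (e : ℝ) (h : f.comp (-X) = C e * f) : f.derivative.comp (-X) = C (-e) * f.derivative := by
  have := congrArg derivative h
  rw [derivative_comp, derivative_C_mul] at this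
  simp only [derivative_neg, derivative_X] at this
  rw [C_neg]
  linear_combination -this

lemma T_int (k j : ℕ) (hj : j ≤ 2) (h0 h1 h2 : ℤ) : ∃ N : ℤ, |TT h0 (-√21*h1) (21*h2) (Rk k * X^j)| = (gg (14*k):ℝ) * 5^(126*k+1) * |(N:ℝ)| ∨
    |TT h0 (-√21*h1) (21*h2) (Rk k * X^j)| = (gg (14*k):ℝ) * 5^(126*k+1) * |(N:ℝ)| * √21 := by
  set f := Rk k * X^j with hf
  have hz : ∀ v : ℕ, v ≤ 126*k → f.eval (v:ℝ) = 0 ∧ f.derivative.eval (v:ℝ) = 0 ∧ f.derivative.derivative.eval (v:ℝ) = 0 := by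
    intro v hv
    apply triple_zero <;> apply PP_eval_eq_zero <;> omega
  have hd : ∀ v : ℕ, (∃ m : ℤ, f.eval (v:ℝ) = ((gg (14*k):ℤ):ℝ) * m) ∧ (∃ m : ℤ, f.derivative.eval (v:ℝ) = ((gg (14*k):ℤ):ℝ) * m) ∧ (∃ m : ℤ, f.derivative.derivative.eval (v:ℝ) = ((gg (14*k):ℤ):ℝ) * m) := by
    intro v
    obtain ⟨⟨m0, e0⟩, ⟨m1, e1⟩, ⟨m2, e2⟩⟩ := gg_dvd_f (14*k) v (X^j)
    rw [hf, Rk_map]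
    refine ⟨⟨m0, ?_⟩, ⟨m1, ?_⟩, ⟨m2, ?_⟩⟩
    · rw [eval_map_int, e0]; push_cast; ring
    · rw [Polynomial.derivative_map, eval_map_int, e1]; push_cast; ring
    · rw [Polynomial.derivative_map, Polynomial.derivative_map, eval_map_int, e2]; push_cast; ring
  have hpar : f.comp (-X) = C ((-1)^(j+1)) * f := by
    rw [hf]
    unfold Rk
    simp only [mul_comp, PP_comp, X_pow_comp]
    rw [neg_pow (X : ℝ[X]) j, C_pow, C_neg, C_1]
    ring
  have hT : TT h0 (-√21*h1) (21*h2) f = h0 * SS f + (-√21*h1) * SS f.derivative + 21*h2 * SS f.derivative.derivative := by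
    change SS _ = _
    rw [phi_apply, SS_add, SS_add, SS_C_mul, SS_C_mul, SS_C_mul]
  have hs : √21*√21 = (21:ℝ) := Real.mul_self_sqrt (by norm_num)
  have hg : (0:ℝ) ≤ gg (14*k) * 5^(126*k+1) := by positivity
  have hpar1 := comp_neg_deriv _ _ hpar
  have hpar2 := comp_neg_deriv _ _ hpar1
  rcases Nat.even_or_odd j with he | ho
  · rw [(Even.add_one he).neg_one_pow] at hpar hpar1 hpar2
    simp only [neg_neg, C_neg, C_1, neg_mul, one_mul] at hpar hpar1 hpar2
    obtain ⟨N0, E0⟩ := int_odd (gg (14*k)) f.natDegree (126*k) f (by omega) hpar (fun v hv => (hz v hv).1) (fun v => (hd v).1)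
    obtain ⟨N1, E1⟩ := int_even (gg (14*k)) f.derivative.natDegree (126*k) f.derivative (by omega) hpar1 (fun v hv => (hz v hv).2.1) (fun v => (hd v).2.1)
    obtain ⟨N2, E2⟩ := int_odd (gg (14*k)) f.derivative.derivative.natDegree (126*k) f.derivative.derivative (by omega) hpar2 (fun v hv => (hz v hv).2.2) (fun v => (hd v).2.2)
    refine ⟨h0*N0 - 21*h1*N1 + 21*h2*N2, Or.inl ?_⟩
    rw [← abs_of_nonneg hg, ← abs_mul, hT, E0, E1, E2]
    congr 1
    push_cast
    linear_combination (-(gg (14*k):ℝ) * 5^(126*k+1) * h1 * N1) * hs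
  · rw [(Odd.add_one ho).neg_one_pow] at hpar hpar1 hpar2
    simp only [neg_neg, C_neg, C_1, neg_mul, one_mul] at hpar hpar1 hpar2
    obtain ⟨N0, E0⟩ := int_even (gg (14*k)) f.natDegree (126*k) f (by omega) hpar (fun v hv => (hz v hv).1) (fun v => (hd v).1)
    obtain ⟨N1, E1⟩ := int_odd (gg (14*k)) f.derivative.natDegree (126*k) f.derivative (by omega) hpar1 (fun v hv => (hz v hv).2.1) (fun v => (hd v).2.1)
    obtain ⟨N2, E2⟩ := int_even (gg (14*k)) f.derivative.derivative.natDegree (126*k) f.derivative.derivative (by omega) hpar2 (fun v hv => (hz v hv).2.2) (fun v => (hd v).2.2)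
    refine ⟨h0*N0 - h1*N1 + 21*h2*N2, Or.inr ?_⟩
    have e : TT h0 (-√21*h1) (21*h2) f = ((gg (14*k) * 5^(126*k+1)) * ((h0*N0 - h1*N1 + 21*h2*N2 : ℤ):ℝ)) * √21 := by
      rw [hT, E0, E1, E2]; push_cast; ring
    rw [e, abs_mul, abs_mul, abs_of_nonneg hg, abs_of_nonneg (Real.sqrt_nonneg 21)]

lemma T_ge (k j : ℕ) (hj : j ≤ 2) (h0 h1 h2 : ℤ) (hne : TT h0 (-√21*h1) (21*h2) (Rk k * X^j) ≠ 0) :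
    (gg (14*k):ℝ) * 5^(126*k) ≤ |TT h0 (-√21*h1) (21*h2) (Rk k * X^j)| := by
  obtain ⟨N, h⟩ := T_int k j hj h0 h1 h2
  generalize TT h0 (-√21*h1) (21*h2) (Rk k * X^j) = t at *
  have hN : 1 ≤ |(N:ℝ)| := by
    have : N ≠ 0 := by
      rintro rfl
      rw [Int.cast_zero, abs_zero, mul_zero, zero_mul, or_self, abs_eq_zero] at h
      exact hne h
    exact_mod_cast Int.one_le_abs this
  have hg : (0:ℝ) ≤ gg (14*k) * 5^(126*k) := by positivity
  rw [pow_succ, ← mul_assoc] at h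
  have hs : 1 ≤ √21 := by linarith [s21_lo]
  generalize (gg (14*k):ℝ) * 5^(126*k) = G at *
  have h3 : G ≤ G*5*|(N:ℝ)| := by nlinarith
  rcases h with h | h <;> rw [h]
  · exact h3
  · nlinarith

lemma lam_gt : -1 < lam := by
  unfold lam
  rw [Real.lt_log_iff_exp_lt zz_pos, zz_eq]
  have : Real.exp (-1) < 0.3679 := by
    rw [Real.exp_neg]
    have := Real.exp_one_gt_d9
    rw [inv_lt_comm₀ (Real.exp_pos _) (by norm_num)]
    norm_num; norm_num at this; linarith
  linarith [s21_hi]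

lemma T_le (f : ℝ[X]) (h0 h1 h2 : ℤ) (H A ε : ℝ) (H1 : |(h1:ℝ)| ≤ H) (H2 : |(h2:ℝ)| ≤ H)
    (hA : |SS f| ≤ A) (hr1 : |SS f.derivative + lam * SS f| ≤ ε)
    (hr2 : |SS f.derivative.derivative + 2*lam*SS f.derivative + lam^2*SS f| ≤ ε) :
    |TT h0 (-√21*h1) (21*h2) f| ≤ A * |h0 + h1*(√21*lam) + h2*(√21*lam)^2| + 70 * H * ε := by
  have hT : TT h0 (-√21*h1) (21*h2) f = h0 * SS f + (-√21*h1) * SS f.derivative + 21*h2 * SS f.derivative.derivative := by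
    change SS _ = _
    rw [phi_apply, SS_add, SS_add, SS_C_mul, SS_C_mul, SS_C_mul]
  have hs : √21^2 = (21:ℝ) := Real.sq_sqrt (by norm_num)
  have e : TT h0 (-√21*h1) (21*h2) f = SS f * (h0 + h1*(√21*lam) + h2*(√21*lam)^2) + (-(√21*h1*(SS f.derivative + lam * SS f)) + 21*h2*((SS f.derivative.derivative + 2*lam*SS f.derivative + lam^2*SS f) - 2*lam*(SS f.derivative + lam * SS f))) := by
    rw [hT]
    linear_combination (-(lam^2)*h2*SS f) * hs
  have hε : 0 ≤ ε := (abs_nonneg _).trans hr1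
  have hH : 0 ≤ H := (abs_nonneg _).trans H1
  set r1 := SS f.derivative + lam * SS f
  set r2 := SS f.derivative.derivative + 2*lam*SS f.derivative + lam^2*SS f
  have hl : |lam| ≤ 1 := by rw [abs_le]; constructor <;> linarith [lam_gt, lam_neg]
  rw [e]
  refine (abs_add_le _ _).trans (add_le_add ?_ ?_)
  · rw [abs_mul]; gcongr
  · have b1 : |-(√21*h1*r1)| ≤ 5*H*ε := by
      rw [abs_neg, abs_mul, abs_mul, abs_of_nonneg (Real.sqrt_nonneg 21)]
      have : √21 ≤ 5 := by linarith [s21_hi]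
      gcongr
    have b2 : |r2 - 2*lam*r1| ≤ 3*ε := by
      refine (abs_sub _ _).trans ?_
      rw [abs_mul, abs_mul, abs_two]
      have : |lam| * |r1| ≤ 1*ε := by gcongr
      nlinarith
    have b3 : |21*h2*(r2 - 2*lam*r1)| ≤ 21*H*(3*ε) := by
      rw [abs_mul, abs_mul]
      have : |(21:ℝ)| = 21 := by norm_num
      rw [this]; gcongr
    refine (abs_add_le _ _).trans ?_
    have : 0 ≤ H*ε := by positivity
    linarith
end

section
open Filter Topology

lemma keyineq : ∀ᶠ k : ℕ in atTop, ∀ h0 h1 h2 : ℤ, ∀ H : ℝ, (h0 ≠ 0 ∨ h1 ≠ 0 ∨ h2 ≠ 0) → |(h1:ℝ)| ≤ H → |(h2:ℝ)| ≤ H →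
    1 ≤ Real.exp (2042.4832*k) * |h0 + h1*(√21*lam) + h2*(√21*lam)^2| + 70*H*Real.exp (-226.089*k) := by
  have h14 : Tendsto (fun k : ℕ => 14*k) atTop atTop := tendsto_id.const_mul_atTop' (by norm_num)
  filter_upwards [r_final _ rhoC_lt, G0_final _ rhoD_lt, h14.eventually logWg, h14.eventually (eventually_ge_atTop 0)] with k hr hG hW _ h0 h1 h2 H hne H1 H2
  have hs : (0:ℝ) < √21 := by linarith [s21_lo]
  have hc : ((h0:ℝ) ≠ 0 ∨ (-√21*h1) ≠ 0 ∨ (21*(h2:ℝ)) ≠ 0) := by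
    rcases hne with h | h | h
    · exact Or.inl (by exact_mod_cast h)
    · right; left
      have : (h1:ℝ) ≠ 0 := by exact_mod_cast h
      exact mul_ne_zero (neg_ne_zero.2 hs.ne') this
    · right; right
      have : (h2:ℝ) ≠ 0 := by exact_mod_cast h
      exact mul_ne_zero (by norm_num) this
  obtain ⟨j, hj, hT⟩ := nonvanish (182*k) (154*k) (126*k) h0 (-√21*h1) (21*h2) hc
  rw [← Rk_RR] at hT
  have hge := T_ge k j hj h0 h1 h2 hT
  have hle := T_le _ h0 h1 h2 H _ _ H1 H2 (hG j hj) (hr j hj).1 (hr j hj).2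
  have hmain := hge.trans hle
  clear hge hle hT hr hG
  have hg : (0:ℝ) < gg (14*k) := by exact_mod_cast gg_pos _
  have hW0 : (0:ℝ) ≤ WW (14*k) := Nat.cast_nonneg _
  have hWg : (WW (14*k):ℝ) ≤ gg (14*k) * Real.exp (490.16128*k) := by
    rcases hW0.eq_or_lt with h | h
    · rw [← h]; positivity
    · rw [← Real.log_le_log_iff h (by positivity), Real.log_mul hg.ne' (Real.exp_pos _).ne', Real.log_exp]
      push_cast at hW
      linarith
  have h5 : (5:ℝ)^(126*k) = Real.exp (126*Real.log 5*k) := by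
    rw [← Real.exp_log (show (0:ℝ) < 5 by norm_num), ← Real.exp_nat_mul, Real.log_exp]
    congr 1; push_cast; ring
  rw [h5] at hmain
  have hL : 0 ≤ |h0 + h1*(√21*lam) + h2*(√21*lam)^2| := abs_nonneg _
  have hH : 0 ≤ H := (abs_nonneg _).trans H1
  generalize |h0 + h1*(√21*lam) + h2*(√21*lam)^2| = L at *
  generalize (gg (14*k):ℝ) = g at *
  generalize (WW (14*k):ℝ) = W at *
  have hk : (0:ℝ) ≤ k := Nat.cast_nonneg _
  obtain ⟨l1, l2⟩ := log5_facts
  have e1 : Real.exp (1755.1110*k) * W ≤ (g * Real.exp (126*Real.log 5*k)) * Real.exp (2042.4832*k) := by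
    calc Real.exp (1755.1110*k) * W ≤ Real.exp (1755.1110*k) * (g * Real.exp (490.16128*k)) := by gcongr
      _ = g * Real.exp (1755.1110*k + 490.16128*k) := by rw [Real.exp_add]; ring
      _ ≤ g * Real.exp (126*Real.log 5*k + 2042.4832*k) := by
        gcongr ?_ * Real.exp ?_
        rw [← add_mul, ← add_mul]
        gcongr ?_ * _
        linarith
      _ = _ := by rw [Real.exp_add]; ring
  have e2 : Real.exp (-513.4613*k) * W ≤ (g * Real.exp (126*Real.log 5*k)) * Real.exp (-226.089*k) := by
    calc Real.exp (-513.4613*k) * W ≤ Real.exp (-513.4613*k) * (g * Real.exp (490.16128*k)) := by gcongr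
      _ = g * Real.exp (-513.4613*k + 490.16128*k) := by rw [Real.exp_add]; ring
      _ ≤ g * Real.exp (126*Real.log 5*k + (-226.089)*k) := by
        gcongr ?_ * Real.exp ?_
        rw [← add_mul, ← add_mul]
        gcongr ?_ * _
        linarith
      _ = _ := by rw [Real.exp_add]; ring
  have hK : 0 < g * Real.exp (126*Real.log 5*k) := by positivity
  generalize g * Real.exp (126*Real.log 5*k) = K at *
  have f1 := mul_le_mul_of_nonneg_right e1 hL
  have f2 := mul_le_mul_of_nonneg_left e2 (show 0 ≤ 70*H by positivity)
  refine le_of_mul_le_mul_left ?_ hK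
  linarith

lemma measure_lb : ∃ c : ℝ, 0 < c ∧ ∀ h0 h1 h2 : ℤ, ∀ H : ℝ, 1 ≤ H → (h0 ≠ 0 ∨ h1 ≠ 0 ∨ h2 ≠ 0) → |(h1:ℝ)| ≤ H → |(h2:ℝ)| ≤ H →
    1 ≤ c * H^(9.034:ℝ) * |h0 + h1*(√21*lam) + h2*(√21*lam)^2| := by
  obtain ⟨k0, hk0⟩ := eventually_atTop.1 keyineq
  refine ⟨2 * (Real.exp (2042.4832*(k0+1)) * 140^(9.034:ℝ)), by positivity, fun h0 h1 h2 H hH hne H1 H2 => ?_⟩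
  have hl : 0 ≤ Real.log (140*H) := Real.log_nonneg (by linarith)
  set m := ⌈Real.log (140*H) / 226.089⌉₊ with hm
  have hm1 : Real.log (140*H) / 226.089 ≤ m := Nat.le_ceil _
  have hm2 : (m:ℝ) < Real.log (140*H) / 226.089 + 1 := Nat.ceil_lt_add_one (by positivity)
  have key := hk0 (k0 + m) (by omega) h0 h1 h2 H hne H1 H2
  push_cast at key
  have hk : (0:ℝ) ≤ k0 := Nat.cast_nonneg _
  have b1 : 70*H*Real.exp (-226.089*(k0+m)) ≤ 1/2 := by
    have : Real.exp (-226.089*(k0+m)) ≤ (140*H)⁻¹ := by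
      rw [← Real.exp_log (show 0 < (140*H)⁻¹ by positivity), Real.log_inv]
      apply Real.exp_le_exp.2
      rw [div_le_iff₀ (by norm_num)] at hm1
      linarith
    calc 70*H*Real.exp (-226.089*(k0+m)) ≤ 70*H*(140*H)⁻¹ := by gcongr
      _ = 1/2 := by field_simp; norm_num
  have b2 : Real.exp (2042.4832*(k0+m)) ≤ Real.exp (2042.4832*(k0+1)) * 140^(9.034:ℝ) * H^(9.034:ℝ) := by
    rw [mul_assoc, ← Real.mul_rpow (by norm_num) (by linarith), Real.rpow_def_of_pos (by positivity), ← Real.exp_add]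
    apply Real.exp_le_exp.2
    have hx : 2042.4832*(Real.log (140*H) / 226.089) ≤ Real.log (140*H) * 9.034 := by
      rw [← mul_div_assoc, div_le_iff₀ (by norm_num), mul_assoc, mul_comm]
      gcongr
      norm_num
    linarith
  have hL : 0 ≤ |h0 + h1*(√21*lam) + h2*(√21*lam)^2| := abs_nonneg _
  have := mul_le_mul_of_nonneg_right b2 hL
  nlinarith

lemma coeff_le_height (P : Polynomial ℤ) (i : ℕ) : |((P.coeff i : ℤ):ℝ)| ≤ (polyHeight P : ℝ) := by
  have : (P.coeff i).natAbs ≤ polyHeight P := by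
    by_cases h : P.coeff i = 0
    · simp [h]
    · exact Finset.le_sup (f := fun i => (P.coeff i).natAbs) (Polynomial.mem_support_iff.2 h)
  rw [← Int.cast_abs, Int.abs_eq_natAbs]
  exact_mod_cast this

lemma deg2_form (P : Polynomial ℤ) (h : P.natDegree ≤ 2) : P = Polynomial.C (P.coeff 2) * Polynomial.X^2 + Polynomial.C (P.coeff 1) * Polynomial.X + Polynomial.C (P.coeff 0) := by
  exact Polynomial.eq_quadratic_of_degree_le_two (Polynomial.natDegree_le_iff_degree_le.1 h)

lemma aeval_form (P : Polynomial ℤ) (h : P.natDegree ≤ 2) (x : ℝ) : Polynomial.aeval x P = P.coeff 0 + P.coeff 1 * x + P.coeff 2 * x^2 := by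
  conv_lhs => rw [deg2_form P h]
  simp
  ring

lemma finite_bdd (M : ℕ) : {P : Polynomial ℤ | P.natDegree ≤ 2 ∧ polyHeight P ≤ M}.Finite := by
  let F : ℤ × ℤ × ℤ → Polynomial ℤ := fun t => Polynomial.C t.1 * Polynomial.X^2 + Polynomial.C t.2.1 * Polynomial.X + Polynomial.C t.2.2
  refine (((Set.finite_Icc (-(M:ℤ)) M).prod ((Set.finite_Icc (-(M:ℤ)) M).prod (Set.finite_Icc (-(M:ℤ)) M))).image F).subset ?_
  rintro P ⟨hd, hM⟩
  have hb : ∀ i, P.coeff i ∈ Set.Icc (-(M:ℤ)) M := by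
    intro i
    have h1 := coeff_le_height P i
    have h2 : |P.coeff i| ≤ (polyHeight P : ℤ) := by exact_mod_cast h1
    rw [Set.mem_Icc, ← abs_le]
    exact h2.trans (by exact_mod_cast hM)
  exact ⟨(P.coeff 2, P.coeff 1, P.coeff 0), ⟨hb 2, hb 1, hb 0⟩, (deg2_form P hd).symm⟩

lemma height_bdd (κ : ℝ) (hκ : κ > 10.034) : ∃ M : ℕ, ∀ β : ℝ, ∀ P : Polynomial ℤ, Irreducible P → P.natDegree ≤ 2 → Polynomial.aeval β P = 0 →
    |Real.sqrt 21 * Real.log ((Real.sqrt 21 - 1) / (Real.sqrt 21 + 1)) - β| < ((polyHeight P : ℕ) : ℝ) ^ (-κ) → polyHeight P ≤ M := by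
  obtain ⟨c, hc, hlb⟩ := measure_lb
  change ∃ M : ℕ, ∀ β : ℝ, ∀ P : Polynomial ℤ, Irreducible P → P.natDegree ≤ 2 → Polynomial.aeval β P = 0 →
    |√21 * lam - β| < ((polyHeight P : ℕ) : ℝ) ^ (-κ) → polyHeight P ≤ M
  set α := √21*lam with hα
  set D := 2 + 2*|α| with hD
  have hδ : 0 < κ - 10.034 := by linarith
  refine ⟨⌈(c*D)^(1/(κ-10.034))⌉₊, fun β P hP hd hr hlt => ?_⟩
  have hne : P.coeff 0 ≠ 0 ∨ P.coeff 1 ≠ 0 ∨ P.coeff 2 ≠ 0 := by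
    by_contra! h
    apply hP.ne_zero
    rw [deg2_form P hd, h.1, h.2.1, h.2.2]; simp
  have hH1 : (1:ℝ) ≤ polyHeight P := by
    have : ∃ i, P.coeff i ≠ 0 := by rcases hne with h | h | h <;> exact ⟨_, h⟩
    obtain ⟨i, hi⟩ := this
    refine le_trans ?_ (coeff_le_height P i)
    exact_mod_cast Int.one_le_abs hi
  have c1 := coeff_le_height P 1
  have c2 := coeff_le_height P 2
  rw [aeval_form P hd] at hr
  have key := hlb _ _ _ _ hH1 hne c1 c2
  suffices hh : (polyHeight P : ℝ) ≤ (c*D)^(1/(κ-10.034)) by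
    exact_mod_cast hh.trans (Nat.le_ceil _)
  generalize (polyHeight P : ℝ) = H at *
  have hH0 : 0 < H := by linarith
  have hlt1 : |α - β| ≤ 1 := hlt.le.trans (Real.rpow_le_one_of_one_le_of_nonpos hH1 (by linarith))
  have hD0 : 0 ≤ |α| := abs_nonneg _
  have hfac : |P.coeff 0 + P.coeff 1 * α + P.coeff 2 * α^2| ≤ H^(-κ) * (H*D) := by
    have e : (P.coeff 0 + P.coeff 1 * α + P.coeff 2 * α^2 : ℝ) = (α - β) * (P.coeff 1 + P.coeff 2 * (2*α - (α - β))) := by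
      linear_combination hr
    rw [e, abs_mul]
    have b : |(P.coeff 1 + P.coeff 2 * (2*α - (α - β)) : ℝ)| ≤ H*D := by
      refine (abs_add_le _ _).trans ?_
      rw [abs_mul]
      have : |2*α - (α - β)| ≤ 2*|α| + 1 := by
        refine (abs_sub _ _).trans ?_
        rw [abs_mul, abs_two]; linarith
      calc _ ≤ H + H*(2*|α| + 1) := by gcongr
        _ = H*D := by rw [hD]; ring
    gcongr
  have h2 : 1 ≤ (c*D) * H^(10.034 - κ) := by
    calc 1 ≤ c * H^(9.034:ℝ) * (H^(-κ) * (H*D)) := key.trans (by gcongr)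
      _ = (c*D) * (H^(9.034:ℝ) * H^(-κ) * H^(1:ℝ)) := by rw [Real.rpow_one]; ring
      _ = (c*D) * H^(10.034 - κ) := by
        rw [← Real.rpow_add hH0, ← Real.rpow_add hH0]; congr 2; ring
  have h3 : H^(κ - 10.034) ≤ c*D := by
    have e : H^(10.034 - κ) = (H^(κ - 10.034))⁻¹ := by rw [← Real.rpow_neg hH0.le]; congr 1; ring
    have hp : 0 < H^(κ - 10.034) := Real.rpow_pos_of_pos hH0 _
    rw [e, ← div_eq_mul_inv, le_div_iff₀ hp] at h2
    linarith
  calc H = (H^(κ-10.034))^(1/(κ-10.034)) := by rw [← Real.rpow_mul hH0.le, mul_one_div_cancel hδ.ne', Real.rpow_one]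
    _ ≤ _ := by
      apply Real.rpow_le_rpow (by positivity) h3 (by positivity)
end

theorem non_quadraticity_measure_alpha_11 :
    ∀ κ : ℝ, κ > 10.034 →
      {β : ℝ | ∃ P : Polynomial ℤ, Irreducible P ∧ P.natDegree ≤ 2 ∧
          Polynomial.aeval β P = 0 ∧
          |Real.sqrt 21 * Real.log ((Real.sqrt 21 - 1) / (Real.sqrt 21 + 1)) - β| <
            ((polyHeight P : ℕ) : ℝ) ^ (-κ)}.Finite := by
  intro κ hκ
  obtain ⟨M, hM⟩ := height_bdd κ hκ
  have hfin : (⋃ P ∈ {P : Polynomial ℤ | P.natDegree ≤ 2 ∧ polyHeight P ≤ M}, (P.rootSet ℝ : Set ℝ)).Finite :=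
    (finite_bdd M).biUnion fun P _ => P.rootSet_finite ℝ
  refine hfin.subset ?_
  rintro β ⟨P, hP, hd, hr, hlt⟩
  rw [Set.mem_iUnion₂]
  exact ⟨P, ⟨hd, hM β P hP hd hr hlt⟩, (Polynomial.mem_rootSet').2 ⟨by
    rw [Ne, Polynomial.map_eq_zero_iff (RingHom.injective_int _)]; exact hP.ne_zero, hr⟩⟩
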